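/- arXiv:2012.04816 — 2 statements merged into one kernel-verified Lean document; each statement's English description precedes it below -/
import Mathlib

section
/- For every positive integer m and every tree T of order m, every 2-connected finite simple graph G with minimum degree δ(G) ≥ m + 2 contains a subgraph T′ isomorphic to T such that G − V(T′) is still 2-connected. -/
/-- A graph `G` is `k`-connected if it has at least `k+1` vertices and
deleting any set of fewer than `k` vertices leaves a connected graph. -/
def KConnected {V : Type*} (G : SimpleGraph V) (k : ℕ) : Prop :=
  k + 1 ≤ Nat.card V ∧
    ∀ X : Finset V, X.card < k → (G.induce ((X : Set V)ᶜ)).Connected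

/-!
Rooting the tree `T` makes it the Hasse diagram of an order with a predecessor function, in which
partial copies of `T` live on lower sets and are extended greedily.

Among the vertex sets inducing an edge or a 2-connected graph whose complement contains a copy of
`T`, let `B` be maximal. Suppose the complement has more than `m` vertices. A vertex outside `B`
that is avoided by some copy has at most one neighbour in `B`, as otherwise it could be added to
`B`; hence it has more than `m` neighbours outside `B`. Re-embedding the upper part of a suitable
copy then shows that every vertex outside `B` is avoided by some copy, so that all of them have at
most one neighbour in `B`. Now add a shortest ear `P` to `B`: by minimality every vertex outside
`B ∪ P` has at most three neighbours in `B ∪ P`, so what remains has minimum degree at least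
`m - 1` and contains `T`, contradicting maximality. Thus the copy is exactly the complement of `B`.
-/

section TreeOrder

open SimpleGraph

theorem iterate_eq_self_or_lt {α : Type*} {f : α → α} {d : α → ℕ}
    (hf : ∀ a, f a = a ∨ d (f a) < d a) (n : ℕ) (a : α) : f^[n] a = a ∨ d (f^[n] a) < d a := by
  induction n generalizing a with
  | zero => exact .inl rfl
  | succ n ih => grind [Function.iterate_succ_apply]

theorem exists_predOrder_pred_eq {W : Type*} {r : W} {parent : W → W} {depth : W → ℕ}
    (hroot : parent r = r) (hdepth : ∀ w ≠ r, depth (parent w) < depth w) :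
    ∃ (_ : PartialOrder W) (_ : OrderBot W) (_ : PredOrder W),
      ⊥ = r ∧ ∀ w, Order.pred w = parent w := by
  have hiter : ∀ n w, parent^[n] w = w ∨ depth (parent^[n] w) < depth w :=
    iterate_eq_self_or_lt fun w => or_iff_not_imp_left.2 fun h =>
      hdepth w (by rintro rfl; exact h hroot)
  let _ : PartialOrder W :=
    { le := fun a b => ∃ n, parent^[n] b = a
      le_refl := fun _ => ⟨0, rfl⟩
      le_trans := by
        rintro _ _ c ⟨n, rfl⟩ ⟨k, rfl⟩
        exact ⟨n + k, Function.iterate_add_apply _ n k c⟩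
      le_antisymm := by
        rintro _ b ⟨n, rfl⟩ ⟨k, hk⟩
        exact (hiter n b).resolve_right fun h => by
          rcases hiter k (parent^[n] b) with h' | h' <;> grind }
  let _ : OrderBot W :=
    { bot := r
      bot_le := fun w => by
        induction w using (measure depth).wf.induction with
        | _ w ih =>
          rcases eq_or_ne w r with rfl | hw
          · exact le_rfl
          · exact (ih _ (hdepth w hw)).trans ⟨1, rfl⟩ }
  refine ⟨inferInstance, inferInstance,
    { pred := parent
      pred_le := fun w => ⟨1, rfl⟩
      min_of_le_pred := fun {w} ⟨n, hn⟩ => ?_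
      le_pred_of_lt := ?_ }, rfl, fun _ => rfl⟩
  · rcases eq_or_ne w r with rfl | hw
    · exact isMin_bot
    · have := hdepth w hw
      rcases hiter n (parent w) with h | h <;> grind
  · rintro _ b ⟨⟨_ | n, rfl⟩, hlt⟩
    · exact absurd ⟨0, rfl⟩ hlt
    · exact ⟨n, rfl⟩

theorem snd_eq_or_snd_eq_of_isTree {W : Type*} {T : SimpleGraph W} (hT : T.IsTree) {a b r : W}
    {p : T.Walk a r} {q : T.Walk b r} (hp : p.IsPath) (hq : q.IsPath) (hab : T.Adj a b) :
    (a ≠ r ∧ p.snd = b) ∨ (b ≠ r ∧ q.snd = a) := by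
  by_cases hb : b ∈ p.support
  · refine .inl ⟨?_, (hT.isAcyclic.eq_snd_of_adj_start hp hab hb).symm⟩
    rintro rfl
    rw [(Walk.isPath_iff_nil.1 hp).eq_nil, Walk.support_nil, List.mem_singleton] at hb
    exact hab.ne hb.symm
  · refine .inr ⟨fun h => hb (h ▸ p.end_mem_support), ?_⟩
    rw [(hT.existsUnique_path b r).unique hq (hp.cons (h := hab.symm) hb), Walk.snd_cons]

theorem exists_predOrder_hasse_eq {W : Type*} {T : SimpleGraph W} (hT : T.IsTree) :
    ∃ (_ : PartialOrder W) (_ : OrderBot W) (_ : PredOrder W), hasse W = T := by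
  obtain ⟨r⟩ := hT.connected.nonempty
  choose path isPath eq_path using (hT.existsUnique_path · r)
  have snd_root : (path r).snd = r := by rw [← eq_path r _ .nil, Walk.snd, Walk.getVert_nil]
  have length_snd (w : W) (hw : w ≠ r) : (path (path w).snd).length < (path w).length := by
    rw [← eq_path _ _ (isPath w).tail, Nat.lt_iff_add_one_le,
      Walk.length_tail_add_one (Walk.not_nil_of_ne hw)]
  obtain ⟨_, _, _, rfl, hpred⟩ :=
    exists_predOrder_pred_eq (depth := fun w => (path w).length) snd_root length_snd
  refine ⟨inferInstance, inferInstance, inferInstance, ?_⟩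
  have adj_of_covBy {a b : W} (h : a ⋖ b) : T.Adj a b := by
    rw [← h.pred_eq, hpred]
    exact ((path b).adj_snd (Walk.not_nil_of_ne (bot_le.trans_lt h.lt).ne')).symm
  have snd_covBy {w : W} (hw : w ≠ ⊥) : (path w).snd ⋖ w :=
    hpred w ▸ Order.pred_covBy_of_not_isMin fun hmin => hw hmin.eq_bot
  ext a b
  rw [hasse_adj]
  refine ⟨Or.rec adj_of_covBy fun h => (adj_of_covBy h).symm, fun h => ?_⟩
  rcases snd_eq_or_snd_eq_of_isTree hT (isPath a) (isPath b) h with ⟨ha, rfl⟩ | ⟨hb, rfl⟩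
  · exact .inr (snd_covBy ha)
  · exact .inl (snd_covBy hb)

end TreeOrder

section DegreeIn

variable {V W : Type*} {G : SimpleGraph V}

/-- The number of neighbours of `u` in `C`; on a finite vertex type no junk value arises. -/
noncomputable def degreeIn (G : SimpleGraph V) (C : Set V) (u : V) : ℕ :=
  (G.neighborSet u ∩ C).ncard

theorem degreeIn_add_degreeIn_compl [Finite V] (G : SimpleGraph V) (C : Set V) (u : V) :
    degreeIn G C u + degreeIn G Cᶜ u = (G.neighborSet u).ncard := by
  rw [degreeIn, degreeIn, ← Set.sdiff_eq, Set.ncard_inter_add_ncard_sdiff_eq_ncard]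

theorem degreeIn_union_le (G : SimpleGraph V) (C D : Set V) (u : V) :
    degreeIn G (C ∪ D) u ≤ degreeIn G C u + degreeIn G D u := by
  rw [degreeIn, Set.inter_union_distrib_left]
  exact Set.ncard_union_le _ _

theorem degreeIn_le_degreeIn_sdiff_singleton_add_one (G : SimpleGraph V) (C : Set V) (b u : V) :
    degreeIn G C u ≤ degreeIn G (C \ {b}) u + 1 := by
  have h := Set.pred_ncard_le_ncard_sdiff_singleton (G.neighborSet u ∩ C) b
  rw [Set.inter_sdiff_assoc] at h
  exact Nat.le_add_of_sub_le h

theorem exists_adj_notMem_image [Finite W] {C : Set V} {S : Set W} {f : W → V}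
    {p : W} (hp : p ∈ S) (hpC : f p ∈ C) (hdeg : (S ∩ f ⁻¹' C).ncard ≤ degreeIn G C (f p)) :
    ∃ v ∈ C, G.Adj (f p) v ∧ v ∉ f '' S := by
  have hlt : (f '' ((S ∩ f ⁻¹' C) \ {p})).ncard < (G.neighborSet (f p) ∩ C).ncard :=
    calc (f '' ((S ∩ f ⁻¹' C) \ {p})).ncard
      _ ≤ ((S ∩ f ⁻¹' C) \ {p}).ncard := Set.ncard_image_le
      _ < (S ∩ f ⁻¹' C).ncard := Set.ncard_sdiff_singleton_lt_of_mem ⟨hp, hpC⟩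
      _ ≤ (G.neighborSet (f p) ∩ C).ncard := hdeg
  obtain ⟨v, ⟨hadj, hvC⟩, hv⟩ := Set.exists_mem_notMem_of_ncard_lt_ncard hlt
  refine ⟨v, hvC, hadj, ?_⟩
  rintro ⟨w, hw, rfl⟩
  exact hv ⟨w, ⟨⟨hw, hvC⟩, fun h => hadj.ne (congrArg f h).symm⟩, rfl⟩

end DegreeIn

section PartialCopies

open Order

variable {V W : Type*} [PartialOrder W]

/-- `f` embeds the part `S` of the Hasse diagram of `W` into the subgraph of `G` induced by `H`.
It is meant for lower sets `S`, which contain every `a` covered by a member `b` of `S`. -/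
structure IsPartialCopy (G : SimpleGraph V) (H : Set V) (S : Set W) (f : W → V) : Prop where
  injOn : S.InjOn f
  mapsTo : S.MapsTo f H
  adj : ∀ ⦃a b⦄, b ∈ S → a ⋖ b → G.Adj (f a) (f b)

/-- The subgraph of `G` induced by `H` contains a copy of the Hasse diagram of `W`. -/
def HasCopy (G : SimpleGraph V) (W : Type*) [PartialOrder W] (H : Set V) : Prop :=
  ∃ f : W → V, IsPartialCopy G H Set.univ f

variable {G : SimpleGraph V} {H C : Set V} {S S₀ S₁ : Set W} {f f₀ : W → V}

namespace IsPartialCopy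

theorem mono {H' : Set V} {S' : Set W} (hf : IsPartialCopy G H S f) (hS : S' ⊆ S)
    (hH : S'.MapsTo f H') : IsPartialCopy G H' S' f :=
  ⟨hf.injOn.mono hS, hH, fun _ _ hb => hf.adj (hS hb)⟩

open Classical in
theorem insert_update (hf : IsPartialCopy G H S f) (hS : IsLowerSet S) {z : W} {v : V}
    (hz : z ∉ S) (hvH : v ∈ H) (hv : v ∉ f '' S) (hadj : ∀ a, a ⋖ z → a ∈ S ∧ G.Adj (f a) v) :
    IsPartialCopy G H (insert z S) (Function.update f z v) := by
  have hEq : S.EqOn (Function.update f z v) f :=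
    fun w hw => Function.update_of_ne (ne_of_mem_of_not_mem hw hz) _ _
  refine ⟨?_, ?_, ?_⟩
  · rw [Set.injOn_insert hz, hEq.image_eq, Function.update_self]
    exact ⟨hEq.injOn_iff.2 hf.injOn, hv⟩
  · rintro w (rfl | hw)
    · rwa [Function.update_self]
    · rw [hEq hw]
      exact hf.mapsTo hw
  · rintro a b (rfl | hb) hab
    · rw [Function.update_self, hEq (hadj a hab).1]
      exact (hadj a hab).2
    · rw [hEq hb, hEq (hS hab.le hb)]
      exact hf.adj hb hab

variable [PredOrder W] [Finite W]

theorem exists_extension_insert (hf : IsPartialCopy G H S f) (hS : IsLowerSet S) (hCH : C ⊆ H)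
    (hff₀ : S₀.EqOn f f₀) (hfC : (S \ S₀).MapsTo f C) (h₀S : S₀ ⊆ S) {z : W} (hz : z ∉ S)
    (hpz : pred z ∈ S) (hmem : pred z ∈ S₀ → f₀ (pred z) ∈ C)
    (hdeg : ∀ u ∈ C, (pred z ∈ S₀ → f₀ (pred z) = u) →
      (S₀ ∩ f₀ ⁻¹' C).ncard + (S \ S₀).ncard ≤ degreeIn G C u) :
    ∃ f', IsPartialCopy G H (insert z S) f' ∧ S₀.EqOn f' f₀ ∧ (insert z S \ S₀).MapsTo f' C := by
  classical
  have hpzC : f (pred z) ∈ C := by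
    by_cases h : pred z ∈ S₀
    · exact hff₀ h ▸ hmem h
    · exact hfC ⟨hpz, h⟩
  have hcover : S ∩ f ⁻¹' C ⊆ (S₀ ∩ f₀ ⁻¹' C) ∪ (S \ S₀) := by
    rintro w ⟨hw, hwC⟩
    by_cases h : w ∈ S₀
    · exact .inl ⟨h, by rwa [Set.mem_preimage, ← hff₀ h]⟩
    · exact .inr ⟨hw, h⟩
  have hcard : (S ∩ f ⁻¹' C).ncard ≤ degreeIn G C (f (pred z)) :=
    calc (S ∩ f ⁻¹' C).ncard
      _ ≤ ((S₀ ∩ f₀ ⁻¹' C) ∪ (S \ S₀)).ncard := Set.ncard_le_ncard hcover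
      _ ≤ (S₀ ∩ f₀ ⁻¹' C).ncard + (S \ S₀).ncard := Set.ncard_union_le _ _
      _ ≤ degreeIn G C (f (pred z)) := hdeg _ hpzC fun h => (hff₀ h).symm
  obtain ⟨v, hvC, hadj, hv⟩ := exists_adj_notMem_image hpz hpzC hcard
  refine ⟨Function.update f z v,
    hf.insert_update hS hz (hCH hvC) hv fun a ha => ?_, fun w hw => ?_, ?_⟩
  · rw [← ha.pred_eq]
    exact ⟨hpz, hadj⟩
  · rw [Function.update_of_ne (ne_of_mem_of_not_mem (h₀S hw) hz), hff₀ hw]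
  · rintro w ⟨rfl | hwS, hw₀⟩
    · rwa [Function.update_self]
    · rw [Function.update_of_ne (ne_of_mem_of_not_mem hwS hz)]
      exact hfC ⟨hwS, hw₀⟩

variable [OrderBot W]

theorem exists_extension (hf₀ : IsPartialCopy G H S₀ f₀) (hbot : ⊥ ∈ S₀) (hS₀ : IsLowerSet S₀)
    (hS₁ : IsLowerSet S₁) (h₀₁ : S₀ ⊆ S₁) (hCH : C ⊆ H)
    (hmem : ∀ z ∈ S₁ \ S₀, pred z ∈ S₀ → f₀ (pred z) ∈ C)
    -- `u` ranges over the possible images of the predecessor of `z`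
    (hdeg : ∀ z ∈ S₁ \ S₀, ∀ u ∈ C, (pred z ∈ S₀ → f₀ (pred z) = u) →
      (S₀ ∩ f₀ ⁻¹' C).ncard + (S₁ \ S₀).ncard ≤ degreeIn G C u + 1) :
    ∃ f, IsPartialCopy G H S₁ f ∧ S₀.EqOn f f₀ ∧ (S₁ \ S₀).MapsTo f C := by
  induction hn : (S₁ \ S₀).ncard generalizing S₁ with
  | zero =>
    have h₁₀ : S₁ \ S₀ = ∅ := (Set.ncard_eq_zero).1 hn
    obtain rfl : S₁ = S₀ := (Set.sdiff_eq_empty.1 h₁₀).antisymm h₀₁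
    exact ⟨f₀, hf₀, Set.eqOn_refl _ _, h₁₀ ▸ Set.mapsTo_empty _ _⟩
  | succ n ih =>
    have hne : (S₁ \ S₀).Nonempty := Set.nonempty_of_ncard_ne_zero (by omega)
    obtain ⟨z, hz⟩ := (Set.toFinite (S₁ \ S₀)).exists_maximal hne
    obtain ⟨hz₁, hz₀⟩ := hz.prop
    have hS : IsLowerSet (S₁ \ {z}) := hS₁.erase fun b hb hzb =>
      (hz.eq_of_le ⟨hb, fun h => hz₀ (hS₀ hzb h)⟩ hzb).symm
    have h₀S : S₀ ⊆ S₁ \ {z} := Set.subset_sdiff_singleton h₀₁ hz₀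
    have hsdiff : (S₁ \ {z}) \ S₀ = (S₁ \ S₀) \ {z} := sdiff_right_comm ..
    have hsub : (S₁ \ {z}) \ S₀ ⊆ S₁ \ S₀ := hsdiff ▸ Set.sdiff_subset
    have hcard : ((S₁ \ {z}) \ S₀).ncard = n := by
      rw [hsdiff, Set.ncard_sdiff_singleton_of_mem hz.prop, hn, Nat.add_sub_cancel]
    obtain ⟨f, hf, hff₀, hfC⟩ := ih hS h₀S (fun w hw => hmem w (hsub hw))
      (fun w hw u hu h => by have := hdeg w (hsub hw) u hu h; omega) hcard
    have hpz : pred z < z := pred_lt_of_not_isMin fun hmin => hz₀ (hmin.eq_bot ▸ hbot)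
    have hstep := hf.exists_extension_insert hS hCH hff₀ hfC h₀S (fun h => h.2 rfl)
      ⟨hS₁ hpz.le hz₁, hpz.ne⟩ (hmem z hz.prop)
      (fun u hu h => by have := hdeg z hz.prop u hu h; omega)
    rwa [Set.insert_sdiff_self_of_mem hz₁] at hstep

end IsPartialCopy

theorem hasCopy_of_card_le_degreeIn_add_one [OrderBot W] [PredOrder W] [Finite W]
    (hH : H.Nonempty) (hdeg : ∀ u ∈ H, Nat.card W ≤ degreeIn G H u + 1) : HasCopy G W H := by
  obtain ⟨v, hv⟩ := hH
  have hf₀ : IsPartialCopy G H {(⊥ : W)} fun _ => v :=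
    ⟨Set.injOn_singleton _ _, fun _ _ => hv, fun a b hb hab => (not_lt_bot (hb ▸ hab.lt)).elim⟩
  have hlower : IsLowerSet {(⊥ : W)} := fun a b hba ha => le_bot_iff.1 (ha ▸ hba)
  obtain ⟨f, hf, -⟩ := hf₀.exists_extension (Set.mem_singleton ⊥) hlower isLowerSet_univ
    (Set.subset_univ _) subset_rfl (fun _ _ _ => hv) fun z _ u hu _ => by
      refine le_trans ?_ (hdeg u hu)
      rw [← Set.ncard_add_ncard_compl {(⊥ : W)}, Set.compl_eq_univ_sdiff]
      exact Nat.add_le_add_right (Set.ncard_le_ncard Set.inter_subset_left) _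
  exact ⟨f, hf⟩

theorem IsPartialCopy.hasCopy_of_isMax [OrderBot W] [PredOrder W] [Finite W]
    (hf : IsPartialCopy G H S f) (hbot : ⊥ ∈ S) (hS : IsLowerSet S) (hmax : ∀ z ∉ S, IsMax z)
    (hdeg : ∀ z ∉ S, Nat.card W ≤ degreeIn G H (f (pred z)) + 1) : HasCopy G W H := by
  have hpred {z : W} (hz : z ∉ S) : pred z ∈ S := by
    by_contra h
    have hlt : pred z < z := pred_lt_of_not_isMin fun hmin => hz (hmin.eq_bot ▸ hbot)
    exact (hmax _ h).not_lt hlt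
  obtain ⟨f', hf', -⟩ := hf.exists_extension hbot hS isLowerSet_univ (Set.subset_univ _) subset_rfl
    (fun _ _ h => hf.mapsTo h) fun z hz u _ hu => by
      rw [← hu (hpred hz.2)]
      refine le_trans ?_ (hdeg z hz.2)
      rw [← Set.ncard_add_ncard_compl S, Set.compl_eq_univ_sdiff]
      exact Nat.add_le_add_right (Set.ncard_le_ncard Set.inter_subset_left) _
  exact ⟨f', hf'⟩

end PartialCopies

section LocalLemma

open Order

variable {V W : Type*} {G : SimpleGraph V} {H U : Set V} {f : W → V}

-- The neighbours of `v` outside `U` lie on the copy, but over neither of the two sets on the left,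
-- which are disjoint; this leaves enough neighbours of `v` for `U`.
theorem ncard_add_ncard_preimage_le_degreeIn [Finite V] [Finite W] (hHU : H \ U ⊆ Set.range f)
    (hdeg : ∀ u ∈ U, Nat.card W ≤ degreeIn G H u) {v : V} (hvH : v ∈ H) (hvU : v ∈ U)
    (hv : v ∉ Set.range f) :
    {w | ∀ u ∈ H, G.Adj (f w) u → u ∈ Set.range f}.ncard + (f ⁻¹' U).ncard ≤ degreeIn G U v := by
  set Q : Set W := {w | ∀ u ∈ H, G.Adj (f w) u → u ∈ Set.range f}
  set A : Set W := {w | G.Adj (f w) v} \ f ⁻¹' U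
  have hQU : Disjoint Q (f ⁻¹' U) := by
    refine Set.disjoint_left.2 fun w hwQ hwU => (hdeg _ hwU).not_gt ?_
    calc degreeIn G H (f w)
      _ ≤ (f '' {w}ᶜ).ncard := Set.ncard_le_ncard ?_
      _ ≤ ({w}ᶜ : Set W).ncard := Set.ncard_image_le
      _ < Nat.card W := ?_
    · rintro u ⟨hadj, huH⟩
      obtain ⟨w', rfl⟩ := hwQ u huH hadj
      exact ⟨w', fun h => hadj.ne (congrArg f h).symm, rfl⟩
    · rw [← Set.ncard_add_ncard_compl {w}, Set.ncard_singleton]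
      omega
  have hQUA : Disjoint (Q ∪ f ⁻¹' U) A :=
    Set.disjoint_left.2 fun w hw hwA => hw.elim (fun hwQ => hv (hwQ v hvH hwA.1)) hwA.2
  have hcard : Q.ncard + (f ⁻¹' U).ncard + A.ncard ≤ Nat.card W := by
    rw [← Set.ncard_union_eq hQU, ← Set.ncard_union_eq hQUA]
    exact Set.ncard_le_card _
  have hcover : G.neighborSet v ∩ H ⊆ (G.neighborSet v ∩ U) ∪ f '' A := by
    rintro u ⟨hadj, huH⟩
    by_cases huU : u ∈ U
    · exact .inl ⟨hadj, huU⟩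
    · obtain ⟨w, rfl⟩ := hHU ⟨huH, huU⟩
      exact .inr ⟨w, ⟨hadj.symm, huU⟩, rfl⟩
  have hdegv : degreeIn G H v ≤ degreeIn G U v + A.ncard :=
    (Set.ncard_le_ncard hcover).trans <| (Set.ncard_union_le _ _).trans <|
      Nat.add_le_add_left Set.ncard_image_le _
  have := hdeg v hvU
  omega

variable [PartialOrder W]

theorem ncard_lt_not_isMax_le [PredOrder W] [Finite W] (x : W) (p : W → Prop) :
    {z | x < z ∧ ¬ IsMax z}.ncard ≤
      {z | x < z ∧ ∃ c > z, ¬ p c}.ncard + {w | x < w ∧ p w}.ncard := by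
  have hcover : {z | x < z ∧ ¬ IsMax z} ⊆
      {z | x < z ∧ ∃ c > z, ¬ p c} ∪ pred '' {w | x < w ∧ p w} := by
    rintro z ⟨hxz, hz⟩
    obtain ⟨c, hc⟩ := not_isMax_iff.1 hz
    obtain ⟨w, hzw, -⟩ := exists_covBy_le_of_lt hc
    by_cases hw : p w
    · exact .inr ⟨w, ⟨hxz.trans hzw.lt, hw⟩, hzw.pred_eq⟩
    · exact .inl ⟨hxz, w, hzw.lt, hw⟩
  exact (Set.ncard_le_ncard hcover).trans <| (Set.ncard_union_le _ _).trans <|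
    Nat.add_le_add_left Set.ncard_image_le _

theorem exists_forall_lt_notMem [OrderBot W] [PredOrder W] [Finite W] {p : W → Prop}
    (hp : ∃ b, p b) (Y : Set W) :
    ∃ x, (∃ b ≥ x, p b) ∧ (∀ a, a ⋖ x → a ∈ Y) ∧ ∀ z > x, (∃ c > z, p c) → z ∉ Y := by
  obtain ⟨b, hb⟩ := hp
  obtain ⟨x, hx⟩ := (Set.toFinite {x | (∃ b ≥ x, p b) ∧ ∀ a, a ⋖ x → a ∈ Y}).exists_maximal
    ⟨⊥, ⟨b, bot_le, hb⟩, fun a ha => (not_lt_bot ha.lt).elim⟩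
  refine ⟨x, hx.prop.1, hx.prop.2, fun z hxz ⟨c, hzc, hc⟩ hz => ?_⟩
  obtain ⟨w, hzw, hwc⟩ := exists_covBy_le_of_lt hzc
  have hw : x < w := hxz.trans hzw.lt
  refine hx.not_gt ⟨⟨c, hwc, hc⟩, fun a ha => ?_⟩ hw
  rwa [← ha.pred_eq, hzw.pred_eq]

open Classical in
theorem IsPartialCopy.update_sdiff_singleton (hf : IsPartialCopy G H Set.univ f) {x b : W}
    (hxb : x ≤ b) {v : V} (hvH : v ∈ H) (hv : v ∉ Set.range f)
    (hadj : ∀ a, a ⋖ x → G.Adj (f a) v) :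
    IsPartialCopy G (H \ {f b}) {w | ¬ x < w} (Function.update f x v) := by
  have hlower : IsLowerSet {w | ¬ x ≤ w} := fun _ _ h hc hd => hc (hd.trans h)
  have hinsert : {w | ¬ x < w} = insert x {w | ¬ x ≤ w} := by
    ext w
    simp only [Set.mem_insert_iff, Set.mem_ofPred_eq, lt_iff_le_and_ne]
    grind
  have hrestrict : IsPartialCopy G (H \ {f b}) {w | ¬ x ≤ w} f :=
    hf.mono (Set.subset_univ _) fun w hw =>
      ⟨hf.mapsTo trivial, fun h => hw (hf.injOn trivial trivial h ▸ hxb)⟩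
  rw [hinsert]
  exact hrestrict.insert_update hlower (not_not.2 le_rfl) ⟨hvH, fun h => hv ⟨b, h.symm⟩⟩
    (fun h => hv (Set.image_subset_range _ _ h)) fun a ha => ⟨ha.lt.not_ge, hadj a ha⟩

variable [OrderBot W] [PredOrder W] [Finite W]

theorem IsPartialCopy.exists_extension_not_isMax {x : W} (hf : IsPartialCopy G H {w | ¬ x < w} f)
    (hUH : U ⊆ H) (hx : f x ∈ U)
    (hdeg : ∀ u ∈ U, ({w | ¬ x < w} ∩ f ⁻¹' U).ncard + {z | x < z ∧ ¬ IsMax z}.ncard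
      ≤ degreeIn G U u + 1) :
    ∃ f', IsPartialCopy G H {w | x < w → ¬ IsMax w} f' ∧
      ∀ w, x ≤ w → (x < w → ¬ IsMax w) → f' w ∈ U := by
  have hlower : IsLowerSet {w | ¬ x < w} := fun _ _ h hc hd => hc (hd.trans_le h)
  have hlower' : IsLowerSet {w | x < w → ¬ IsMax w} :=
    fun c d hdc hc hxd hd => hc (hxd.trans_le hdc) (hd.mono hdc)
  have hsdiff : {w | x < w → ¬ IsMax w} \ {w | ¬ x < w} = {z | x < z ∧ ¬ IsMax z} := by
    ext w
    simp only [Set.mem_sdiff, Set.mem_ofPred_eq]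
    tauto
  have hpred {z : W} (hxz : x < z) (hz : ¬ x < pred z) : pred z = x :=
    ((le_pred_of_lt hxz).eq_of_not_lt hz).symm
  obtain ⟨f', hf', hEq, hU⟩ := hf.exists_extension not_lt_bot hlower hlower'
    (fun w hw hxw => (hw hxw).elim) hUH (fun z hz h => by rwa [hpred (not_not.1 hz.2) h])
    fun z _ u hu _ => hsdiff ▸ hdeg u hu
  refine ⟨f', hf', fun w hxw hw => ?_⟩
  rcases hxw.eq_or_lt with rfl | hlt
  · rwa [hEq (lt_irrefl x)]
  · exact hU ⟨hw, not_not.2 hlt⟩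

-- Keep `f` off the elements above `x`, move `x` to `v`, re-embed the non-maximal elements above
-- `x` greedily inside `U`, and finally the maximal ones anywhere in `H` but at `f b`.
theorem IsPartialCopy.hasCopy_sdiff_singleton (hf : IsPartialCopy G H Set.univ f) (hUH : U ⊆ H)
    {x b : W} (hxb : x ≤ b) (hb : f b ∉ U) {v : V} (hvU : v ∈ U) (hv : v ∉ Set.range f)
    (hadj : ∀ a, a ⋖ x → G.Adj (f a) v) (hdegH : ∀ u ∈ U, Nat.card W ≤ degreeIn G H u)
    (hdegU : ∀ u ∈ U, {w | ¬ x ≤ w ∧ f w ∈ U}.ncard + {z | x < z ∧ ¬ IsMax z}.ncard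
      ≤ degreeIn G U u) :
    HasCopy G W (H \ {f b}) := by
  classical
  have hcover : {w | ¬ x < w} ∩ Function.update f x v ⁻¹' U ⊆
      insert x {w | ¬ x ≤ w ∧ f w ∈ U} := by
    rintro w ⟨hxw, hwU⟩
    rcases eq_or_ne w x with rfl | hw
    · exact .inl rfl
    · rw [Set.mem_preimage, Function.update_of_ne hw] at hwU
      exact .inr ⟨fun h => hxw (h.lt_of_ne' hw), hwU⟩
  have hcard := (Set.ncard_le_ncard hcover).trans (Set.ncard_insert_le _ _)
  obtain ⟨f', hf', hf'U⟩ :=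
    (hf.update_sdiff_singleton hxb (hUH hvU) hv hadj).exists_extension_not_isMax
      (Set.subset_sdiff_singleton hUH hb) (by rwa [Function.update_self])
      fun u hu => by have := hdegU u hu; omega
  refine hf'.hasCopy_of_isMax (fun h => (not_lt_bot h).elim)
    (fun c d hdc hc hxd hd => hc (hxd.trans_le hdc) (hd.mono hdc)) (fun z hz => ?_) fun z hz => ?_
  · exact not_not.1 (Classical.not_imp.1 hz).2
  · have hxz : x < z := (Classical.not_imp.1 hz).1
    have hpz : pred z < z := pred_lt_of_not_isMin hxz.not_isMin
    exact (hdegH _ (hf'U _ (le_pred_of_lt hxz) fun _ => hpz.not_isMax)).trans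
      (degreeIn_le_degreeIn_sdiff_singleton_add_one ..)

theorem IsPartialCopy.exists_hasCopy_sdiff_singleton [Finite V]
    (hf : IsPartialCopy G H Set.univ f) (hUH : U ⊆ H) (hHU : H \ U ⊆ Set.range f)
    (hne : (H \ U).Nonempty) (hdegH : ∀ u ∈ U, Nat.card W ≤ degreeIn G H u) {v : V} (hvU : v ∈ U)
    (hv : v ∉ Set.range f) (hmin : ∀ u ∈ U, degreeIn G U v ≤ degreeIn G U u) :
    ∃ u ∈ H \ U, HasCopy G W (H \ {u}) := by
  set Q : Set W := {w | ∀ u ∈ H, G.Adj (f w) u → u ∈ Set.range f}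
  obtain ⟨_, hu⟩ := hne
  obtain ⟨b₀, rfl⟩ := hHU hu
  obtain ⟨x, ⟨b, hxb, hb⟩, hxQ, hQ⟩ := exists_forall_lt_notMem (p := (f · ∉ U)) ⟨b₀, hu.2⟩ Qᶜ
  obtain ⟨v', hv'U, hv', hadj⟩ : ∃ v' ∈ U, v' ∉ Set.range f ∧ ∀ a, a ⋖ x → G.Adj (f a) v' := by
    rcases eq_or_ne x ⊥ with rfl | hx
    · exact ⟨v, hvU, hv, fun a ha => (not_lt_bot ha.lt).elim⟩
    · have hpx := hxQ _ (pred_covBy_of_not_isMin fun h => hx h.eq_bot)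
      simp only [Q, Set.mem_compl_iff, Set.mem_ofPred_eq] at hpx
      push Not at hpx
      obtain ⟨v', hv'H, hadj, hv'⟩ := hpx
      refine ⟨v', by_contra fun h => hv' (hHU ⟨hv'H, h⟩), hv', fun a ha => ?_⟩
      rwa [← ha.pred_eq]
  have hcount : {w | ¬ x ≤ w ∧ f w ∈ U}.ncard + {z | x < z ∧ ¬ IsMax z}.ncard ≤
      Q.ncard + (f ⁻¹' U).ncard := by
    have hinner := ncard_lt_not_isMax_le x (f · ∈ U)
    have hsubQ : {z | x < z ∧ ∃ c > z, f c ∉ U}.ncard ≤ Q.ncard :=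
      Set.ncard_le_ncard fun z hz => not_not.1 (hQ z hz.1 hz.2)
    have hdisj : Disjoint {w | ¬ x ≤ w ∧ f w ∈ U} {w | x < w ∧ f w ∈ U} :=
      Set.disjoint_left.2 fun w hw hw' => hw.1 hw'.1.le
    have hsubU : ({w | ¬ x ≤ w ∧ f w ∈ U} ∪ {w | x < w ∧ f w ∈ U}).ncard ≤ (f ⁻¹' U).ncard :=
      Set.ncard_le_ncard fun w hw => hw.elim And.right And.right
    rw [Set.ncard_union_eq hdisj] at hsubU
    omega
  refine ⟨f b, ⟨hf.mapsTo trivial, hb⟩, hf.hasCopy_sdiff_singleton hUH hxb hb hv'U hv' hadj hdegH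
    fun u hu => hcount.trans ?_⟩
  exact (ncard_add_ncard_preimage_le_degreeIn hHU hdegH (hUH hvU) hvU hv).trans (hmin u hu)

theorem hasCopy_sdiff_singleton_of_card_lt [Finite V] (hcopy : HasCopy G W H)
    (hcard : Nat.card W < H.ncard)
    (hdeg : ∀ u ∈ H, HasCopy G W (H \ {u}) → Nat.card W ≤ degreeIn G H u) :
    ∀ u ∈ H, HasCopy G W (H \ {u}) := by
  by_contra! ⟨u, huH, hu⟩
  set U : Set V := {u | u ∈ H ∧ HasCopy G W (H \ {u})}
  have hdegH (u : V) (hu : u ∈ U) : Nat.card W ≤ degreeIn G H u := hdeg u hu.1 hu.2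
  have mem_U {g : W → V} (hg : IsPartialCopy G H Set.univ g) {v : V} (hvH : v ∈ H)
      (hv : v ∉ Set.range g) : v ∈ U :=
    And.intro hvH ⟨g, hg.mono subset_rfl fun w _ => ⟨hg.mapsTo trivial, fun h => hv ⟨w, h⟩⟩⟩
  have exists_notMem_range (g : W → V) : ∃ v ∈ H, v ∉ Set.range g := by
    refine Set.exists_mem_notMem_of_ncard_lt_ncard (lt_of_le_of_lt ?_ hcard)
    rw [← Set.image_univ, ← Set.ncard_univ]
    exact Set.ncard_image_le
  obtain ⟨g, hg⟩ := hcopy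
  obtain ⟨v₁, hv₁H, hv₁⟩ := exists_notMem_range g
  -- all vertices of `U` have at least as many neighbours in `U` as `v₀`, which `f` avoids
  obtain ⟨v₀, hv₀U, hv₀min⟩ := Set.exists_min_image U (degreeIn G U) (Set.toFinite U)
    ⟨v₁, mem_U hg hv₁H hv₁⟩
  obtain ⟨f, hf⟩ := hv₀U.2
  have hfH : IsPartialCopy G H Set.univ f :=
    hf.mono subset_rfl fun w _ => (hf.mapsTo trivial).1
  obtain ⟨u', hu', hcopy⟩ := hfH.exists_hasCopy_sdiff_singleton (fun _ h => h.1)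
    (fun v hv => by_contra fun h => hv.2 (mem_U hfH hv.1 h)) ⟨u, huH, fun h => hu h.2⟩ hdegH hv₀U
    (fun ⟨w, hw⟩ => (hf.mapsTo (Set.mem_univ w)).2 hw) hv₀min
  exact hu'.2 ⟨hu'.1, hcopy⟩

end LocalLemma

section Nonseparable

open SimpleGraph

variable {V : Type*} {G : SimpleGraph V} {B : Set V} {b b' c c' : V} {q : G.Walk c c'}

/-- `B` induces a single edge or a 2-connected graph. -/
structure IsNonseparable (G : SimpleGraph V) (B : Set V) : Prop where
  two_le_ncard : 2 ≤ B.ncard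
  connected : (G.induce B).Connected
  connected_sdiff : ∀ x ∈ B, (G.induce (B \ {x})).Connected

/-- The walk `q` avoids `B`, and edges from its ends to the distinct vertices `b` and `b'` of `B`
complete it to an ear of `B`. A single vertex (the walk `nil`) is allowed. -/
structure IsEar (G : SimpleGraph V) (B : Set V) (b b' : V) {c c' : V} (q : G.Walk c c') :
    Prop where
  notMem : ∀ v ∈ q.support, v ∉ B
  start_mem : b ∈ B
  end_mem : b' ∈ B
  ne : b ≠ b'
  adj_start : G.Adj b c
  adj_end : G.Adj b' c'

/-- The walk `q` is an ear of `B` with the fewest edges. -/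
structure IsShortestEar (G : SimpleGraph V) (B : Set V) (b b' : V) {c c' : V} (q : G.Walk c c') :
    Prop extends IsEar G B b b' q where
  length_le : ∀ {d d' e e' : V} {r : G.Walk e e'}, IsEar G B d d' r → q.length ≤ r.length

theorem isNonseparable_pair {a b : V} (hab : G.Adj a b) : IsNonseparable G {a, b} where
  two_le_ncard := (Set.ncard_pair hab.ne).ge
  connected := induce_pair_connected_of_adj hab
  connected_sdiff := by
    have hsingleton (y : V) : (G.induce {y}).Connected := .of_subsingleton
    rintro x (rfl | rfl)
    · rw [Set.pair_sdiff_left hab.ne]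
      exact hsingleton b
    · rw [Set.pair_sdiff_right hab.ne]
      exact hsingleton a

theorem IsNonseparable.connected_sdiff_singleton (hB : IsNonseparable G B) (x : V) :
    (G.induce (B \ {x})).Connected := by
  by_cases hx : x ∈ B
  · exact hB.connected_sdiff x hx
  · rw [Set.sdiff_singleton_eq_self hx]
    exact hB.connected

namespace IsEar

theorem reverse (h : IsEar G B b b' q) : IsEar G B b' b q.reverse where
  notMem v hv := h.notMem v (by simpa using hv)
  start_mem := h.end_mem
  end_mem := h.start_mem
  ne := h.ne.symm
  adj_start := h.adj_end
  adj_end := h.adj_start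

theorem exists_walk_notMem_support (h : IsEar G B b b' q) (hq : q.IsPath) {x v : V}
    (hv : v ∈ q.support) (hxv : x ≠ v) : ∃ (d : V) (r : G.Walk v d), x ∉ r.support ∧
      r.support ⊆ q.support ∧ ∃ a ∈ B, a ≠ x ∧ G.Adj a d := by
  classical
  have htake := q.support_takeUntil_subset_support hv
  have hdrop := q.support_dropUntil_subset_support hv
  by_cases hstart : x ∉ (q.takeUntil v hv).support ∧ b ≠ x
  · exact ⟨c, (q.takeUntil v hv).reverse, by simpa using hstart.1, by simpa using htake, b,
      h.start_mem, hstart.2, h.adj_start⟩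
  · refine ⟨c', q.dropUntil v hv, fun hx => hstart ⟨fun hx' => ?_, ?_⟩, hdrop, b', h.end_mem, ?_,
      h.adj_end⟩
    · have happend : ((q.takeUntil v hv).append (q.dropUntil v hv)).IsPath := by
        rwa [Walk.take_spec]
      exact happend.ne_of_mem_support_of_append hxv hx' hx rfl
    · rintro rfl
      exact h.notMem _ (hdrop hx) h.start_mem
    · rintro rfl
      exact hstart ⟨fun hx => h.notMem _ (htake hx) h.end_mem, h.ne⟩

end IsEar

theorem connected_induce_union_support {A : Set V} (hA : (G.induce A).Connected) (q : G.Walk c c')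
    {a : V} (ha : a ∈ A) (hadj : G.Adj a c) :
    (G.induce (A ∪ {v | v ∈ q.support})).Connected :=
  connected_induce_union hA.preconnected q.connected_induce_support.preconnected ha
    q.start_mem_support hadj

theorem IsNonseparable.union_support [Finite V] (hB : IsNonseparable G B)
    (h : IsEar G B b b' q) (hq : q.IsPath) : IsNonseparable G (B ∪ {v | v ∈ q.support}) where
  two_le_ncard := hB.two_le_ncard.trans (Set.ncard_le_ncard Set.subset_union_left)
  connected := connected_induce_union_support hB.connected q h.start_mem h.adj_start
  connected_sdiff x _ := by
    have hconn := hB.connected_sdiff_singleton x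
    obtain ⟨⟨a, ha⟩⟩ := hconn.nonempty
    have hsub : B \ {x} ⊆ (B ∪ {v | v ∈ q.support}) \ {x} :=
      Set.sdiff_subset_sdiff_left Set.subset_union_left
    refine induce_connected_of_patches a (hsub ha) ?_
    rintro v ⟨hvB | hvq, hvx⟩
    · exact ⟨_, hsub, ha, ⟨hvB, hvx⟩, hconn _ _⟩
    · obtain ⟨d, r, hxr, hrq, e, he, hex, hadj⟩ := h.exists_walk_notMem_support hq hvq (Ne.symm hvx)
      refine ⟨_, Set.union_subset hsub fun w hw => ?_, .inl ha, .inr (by simp),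
        connected_induce_union_support hconn r.reverse ⟨he, hex⟩ hadj _ _⟩
      rw [Set.mem_ofPred_eq, Walk.support_reverse, List.mem_reverse] at hw
      exact ⟨.inr (hrq hw), fun h => hxr (h ▸ hw)⟩

theorem IsNonseparable.insert [Finite V] (hB : IsNonseparable G B) {u : V} (hu : u ∉ B)
    (hdeg : 2 ≤ degreeIn G B u) : IsNonseparable G (insert u B) := by
  obtain ⟨b, ⟨hub, hb⟩, b', ⟨hub', hb'⟩, hne⟩ := (Set.one_lt_ncard (Set.toFinite _)).1 hdeg
  have hear : IsEar G B b b' (Walk.nil : G.Walk u u) :=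
    ⟨by simpa using hu, hb, hb', hne, hub.symm, hub'.symm⟩
  simpa [Set.union_comm] using hB.union_support hear .nil

theorem connected_induce_induce {A : Set B} (hA : (G.induce (Subtype.val '' A)).Connected) :
    ((G.induce B).induce A).Connected := by
  let φ : G.induce (Subtype.val '' A) →g (G.induce B).induce A :=
    { toFun := fun v => ⟨⟨v, by grind⟩, by grind⟩
      map_rel' := fun hadj => hadj }
  exact hA.map φ fun v => ⟨⟨v, v, v.2, rfl⟩, rfl⟩

theorem IsNonseparable.kConnected_two (hB : IsNonseparable G B) (hcard : 3 ≤ B.ncard) :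
    KConnected (G.induce B) 2 := by
  refine ⟨hcard, fun X hX => connected_induce_induce ?_⟩
  rw [Set.image_compl_eq_range_sdiff_image Subtype.val_injective, Subtype.range_coe]
  rcases X.eq_empty_or_nonempty with rfl | hne
  · rw [Finset.coe_empty, Set.image_empty, Set.sdiff_empty]
    exact hB.connected
  · obtain ⟨x, rfl⟩ := Finset.card_eq_one.1 ((Nat.le_of_lt_succ hX).antisymm hne.card_pos)
    rw [Finset.coe_singleton, Set.image_singleton]
    exact hB.connected_sdiff x x.2

end Nonseparable

section Ears

open SimpleGraph

variable {V : Type*} {G : SimpleGraph V} {B : Set V} {b b' c c' u : V} {q : G.Walk c c'}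

theorem exists_walk_notMem_support_of_connected {x v : V} (hx : (G.induce {x}ᶜ).Connected)
    (hu : u ≠ x) (hv : v ≠ x) : ∃ w : G.Walk u v, x ∉ w.support := by
  obtain ⟨w⟩ := hx ⟨u, hu⟩ ⟨v, hv⟩
  refine ⟨w.map (Embedding.induce _).toHom, fun h => ?_⟩
  obtain ⟨y, -, hy⟩ := List.mem_map.1 (w.support_map _ ▸ h)
  exact y.2 hy

theorem exists_walk_adj_of_walk {t : V} (w : G.Walk u t) (hu : u ∉ B) (ht : t ∈ B) :
    ∃ (c : V) (q : G.Walk u c), (∀ v ∈ q.support, v ∉ B) ∧ ∃ b ∈ B, b ∈ w.support ∧ G.Adj b c := by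
  induction w with
  | nil => exact absurd ht hu
  | @cons u v t huv w ih =>
    by_cases hv : v ∈ B
    · exact ⟨u, .nil, by simpa using hu, v, hv, by simp, huv.symm⟩
    · obtain ⟨c, q, hq, b, hb, hbw, hadj⟩ := ih hv ht
      exact ⟨c, .cons huv q, by simpa using ⟨hu, hq⟩, b, hb, by simp [hbw], hadj⟩

theorem exists_isEar (hG : ∀ x, (G.induce {x}ᶜ).Connected) (hB : B.Nontrivial) (hu : u ∉ B) :
    ∃ (b b' c c' : V) (q : G.Walk c c'), IsEar G B b b' q := by
  have hwalk {x : V} (hx : x ∈ B) : ∃ (c : V) (q : G.Walk u c), (∀ v ∈ q.support, v ∉ B) ∧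
      ∃ b ∈ B, b ≠ x ∧ G.Adj b c := by
    obtain ⟨t, ht, htx⟩ := hB.exists_ne x
    obtain ⟨w, hw⟩ := exists_walk_notMem_support_of_connected (hG x)
      (ne_of_mem_of_not_mem hx hu).symm htx
    obtain ⟨c, q, hq, b, hb, hbw, hadj⟩ := exists_walk_adj_of_walk w hu ht
    exact ⟨c, q, hq, b, hb, ne_of_mem_of_not_mem hbw hw, hadj⟩
  obtain ⟨x, hx⟩ := hB.nonempty
  obtain ⟨c, q, hq, b, hb, -, hadj⟩ := hwalk hx
  obtain ⟨c', q', hq', b', hb', hne, hadj'⟩ := hwalk hb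
  refine ⟨b, b', c, c', q.reverse.append q', fun v hv => ?_, hb, hb', hne.symm, hadj, hadj'⟩
  rw [Walk.mem_support_append_iff, Walk.support_reverse, List.mem_reverse] at hv
  exact hv.elim (hq v) (hq' v)

theorem IsEar.exists_isShortestEar (h : IsEar G B b b' q) :
    ∃ (b b' c c' : V) (q : G.Walk c c'), IsShortestEar G B b b' q := by
  classical
  have hex : ∃ n, ∃ (b b' c c' : V) (q : G.Walk c c'), IsEar G B b b' q ∧ q.length = n :=
    ⟨_, _, _, _, _, q, h, rfl⟩
  obtain ⟨b, b', c, c', q, hq, hlen⟩ := Nat.find_spec hex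
  exact ⟨b, b', c, c', q, hq, fun hr => hlen ▸ Nat.find_min' hex ⟨_, _, _, _, _, hr, rfl⟩⟩

namespace IsShortestEar

theorem reverse (h : IsShortestEar G B b b' q) : IsShortestEar G B b' b q.reverse :=
  ⟨h.toIsEar.reverse, fun hr => q.length_reverse ▸ h.length_le hr⟩

theorem isPath (h : IsShortestEar G B b b' q) : q.IsPath := by
  classical
  have hbypass : IsEar G B b b' q.bypass :=
    { h.toIsEar with notMem := fun v hv => h.notMem v (q.support_bypass_subset_support hv) }
  rw [← q.bypass_eq_self_of_length_le_length_bypass (h.length_le hbypass)]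
  exact q.bypass_isPath

theorem index_le_one (h : IsShortestEar G B b b' q) (hu : u ∉ B) {d : V} (hd : d ∈ B)
    (hdb : d ≠ b') (hdu : G.Adj d u) {j : ℕ} (hj : j ≤ q.length) (huj : G.Adj u (q.getVert j)) :
    j ≤ 1 := by
  have hear : IsEar G B d b' (.cons huj (q.drop j)) :=
    { h.toIsEar with
      notMem := by
        simp only [Walk.support_cons, List.mem_cons, forall_eq_or_imp]
        exact ⟨hu, fun v hv => h.notMem v ((q.isSubwalk_drop j).support_subset hv)⟩
      start_mem := hd
      ne := hdb
      adj_start := hdu }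
  have := h.length_le hear
  rw [Walk.length_cons, Walk.drop_length] at this
  omega

theorem length_le_index_add_one (h : IsShortestEar G B b b' q) (hu : u ∉ B) {d : V} (hd : d ∈ B)
    (hdb : d ≠ b) (hdu : G.Adj d u) {j : ℕ} (hj : j ≤ q.length) (huj : G.Adj u (q.getVert j)) :
    q.length ≤ j + 1 := by
  have := h.reverse.index_le_one hu hd hdb hdu (j := q.length - j) (by simp)
    (by rwa [Walk.getVert_reverse, Nat.sub_sub_self hj])
  omega

theorem index_le_index_add_two (h : IsShortestEar G B b b' q) (hu : u ∉ B) {i j : ℕ}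
    (hj : j ≤ q.length) (hui : G.Adj u (q.getVert i)) (huj : G.Adj u (q.getVert j)) :
    j ≤ i + 2 := by
  have hear : IsEar G B b b' ((q.take i).append (.cons hui.symm (.cons huj (q.drop j)))) :=
    { h.toIsEar with
      notMem := by
        intro v hv
        have htake := (q.isSubwalk_take i).support_subset
        have hdrop := (q.isSubwalk_drop j).support_subset
        simp only [Walk.mem_support_append_iff, Walk.support_cons, List.mem_cons] at hv
        rcases hv with hv | rfl | rfl | hv
        · exact h.notMem v (htake hv)
        · exact h.notMem _ (q.getVert_mem_support i)
        · exact hu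
        · exact h.notMem v (hdrop hv) }
  have := h.length_le hear
  simp only [Walk.length_append, Walk.length_cons, Walk.take_length, Walk.drop_length] at this
  omega

end IsShortestEar

theorem degreeIn_support_le_card (q : G.Walk c c') {I : Finset ℕ}
    (hI : ∀ j ≤ q.length, G.Adj u (q.getVert j) → j ∈ I) :
    degreeIn G {v | v ∈ q.support} u ≤ I.card := by
  classical
  have hcover : G.neighborSet u ∩ {v | v ∈ q.support} ⊆ I.image q.getVert := by
    rintro v ⟨hadj, hv⟩
    obtain ⟨j, rfl, hj⟩ := Walk.mem_support_iff_exists_getVert.1 hv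
    exact Finset.mem_coe.2 (Finset.mem_image_of_mem _ (hI j hj hadj))
  calc degreeIn G {v | v ∈ q.support} u
    _ ≤ (I.image q.getVert : Set V).ncard := Set.ncard_le_ncard hcover (Finset.finite_toSet _)
    _ = (I.image q.getVert).card := Set.ncard_coe_finset _
    _ ≤ I.card := Finset.card_image_le

namespace IsShortestEar

theorem degreeIn_support_start_le_one (h : IsShortestEar G B b b' q) :
    degreeIn G {v | v ∈ q.support} c ≤ 1 := by
  refine degreeIn_support_le_card q (I := {1}) fun j hj hadj => Finset.mem_singleton.2 ?_
  have hle := h.index_le_one (h.notMem c q.start_mem_support) h.start_mem h.ne h.adj_start hj hadj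
  have hne : j ≠ 0 := by
    rintro rfl
    exact hadj.ne q.getVert_zero.symm
  omega

theorem degreeIn_support_le_three (h : IsShortestEar G B b b' q) (hu : u ∉ B) :
    degreeIn G {v | v ∈ q.support} u ≤ 3 := by
  classical
  by_cases hex : ∃ i, i ≤ q.length ∧ G.Adj u (q.getVert i)
  · obtain ⟨-, hui⟩ := Nat.find_spec hex
    refine (degreeIn_support_le_card q (I := Finset.Icc (Nat.find hex) (Nat.find hex + 2))
      fun j hj huj => ?_).trans (by rw [Nat.card_Icc]; omega)
    exact Finset.mem_Icc.2 ⟨Nat.find_min' hex ⟨hj, huj⟩, h.index_le_index_add_two hu hj hui huj⟩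
  · push Not at hex
    exact (degreeIn_support_le_card q (I := ∅) fun j hj huj => absurd huj (hex j hj)).trans
      (Nat.zero_le 3)

theorem degreeIn_support_le_two (h : IsShortestEar G B b b' q) (hu : u ∉ B) {d : V} (hd : d ∈ B)
    (hdu : G.Adj d u) : degreeIn G {v | v ∈ q.support} u ≤ 2 := by
  rcases eq_or_ne d b' with rfl | hdb
  · refine (degreeIn_support_le_card q (I := Finset.Icc (q.length - 1) q.length)
      fun j hj huj => ?_).trans (by rw [Nat.card_Icc]; omega)
    have := h.length_le_index_add_one hu hd h.ne.symm hdu hj huj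
    exact Finset.mem_Icc.2 ⟨by omega, hj⟩
  · exact degreeIn_support_le_card q (I := Finset.Icc 0 1) fun j hj huj =>
      Finset.mem_Icc.2 ⟨j.zero_le, h.index_le_one hu hd hdb hdu hj huj⟩

theorem degreeIn_union_support_le_three (h : IsShortestEar G B b b' q) (hu : u ∉ B)
    (hdeg : degreeIn G B u ≤ 1) : degreeIn G (B ∪ {v | v ∈ q.support}) u ≤ 3 := by
  refine (degreeIn_union_le G B _ u).trans ?_
  rcases Nat.eq_zero_or_pos (degreeIn G B u) with hzero | hpos
  · have := h.degreeIn_support_le_three hu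
    omega
  · obtain ⟨d, hdu, hd⟩ := Set.nonempty_of_ncard_ne_zero hpos.ne'
    have := h.degreeIn_support_le_two hu hd hdu.symm
    omega

end IsShortestEar

end Ears

section Main

variable {V W : Type*} {G : SimpleGraph V} {B : Set V} [PartialOrder W]

/-- `B` is nonseparable and a copy of the Hasse diagram of `W` fits into its complement. A
maximal such set turns out to be the complement of a copy. -/
structure IsNonseparableOffCopy (G : SimpleGraph V) (W : Type*) [PartialOrder W] (B : Set V) :
    Prop where
  isNonseparable : IsNonseparable G B
  hasCopy_compl : HasCopy G W Bᶜ

variable [Finite V]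

theorem degreeIn_le_one_of_maximal (hB : Maximal (IsNonseparableOffCopy G W) B) {u : V}
    (hu : u ∉ B) (hcopy : HasCopy G W (Bᶜ \ {u})) : degreeIn G B u ≤ 1 := by
  by_contra! hdeg
  have hinsert : IsNonseparableOffCopy G W (insert u B) :=
    { isNonseparable := hB.prop.isNonseparable.insert hu hdeg
      hasCopy_compl := by rwa [← Set.union_singleton, Set.compl_union, ← Set.sdiff_eq] }
  exact hu (hB.le_of_ge hinsert (Set.subset_insert u B) (Set.mem_insert u B))

theorem HasCopy.card_le_ncard {H : Set V} (hcopy : HasCopy G W H) : Nat.card W ≤ H.ncard := by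
  obtain ⟨f, hf⟩ := hcopy
  rw [← Set.ncard_univ, ← hf.injOn.ncard_image]
  exact Set.ncard_le_ncard hf.mapsTo.image_subset

variable [Finite W] [OrderBot W] [PredOrder W]

theorem hasCopy_compl_of_degreeIn_le (hdeg : ∀ v, Nat.card W + 2 ≤ (G.neighborSet v).ncard)
    {A : Set V} (hA : ∀ u ∉ A, degreeIn G A u ≤ 3) {v : V} (hv : degreeIn G A v ≤ 2) :
    HasCopy G W Aᶜ := by
  refine hasCopy_of_card_le_degreeIn_add_one ?_ fun u hu => ?_
  · have hpos : degreeIn G Aᶜ v ≠ 0 := by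
      have := hdeg v
      have := degreeIn_add_degreeIn_compl G A v
      have : 0 < Nat.card W := Nat.card_pos
      omega
    exact (Set.nonempty_of_ncard_ne_zero hpos).mono Set.inter_subset_right
  · have := hdeg u
    have := degreeIn_add_degreeIn_compl G A u
    have := hA u hu
    omega

theorem exists_isNonseparableOffCopy [Nonempty V]
    (hdeg : ∀ v, Nat.card W + 2 ≤ (G.neighborSet v).ncard) :
    ∃ B, IsNonseparableOffCopy G W B := by
  obtain ⟨v⟩ := ‹Nonempty V›
  obtain ⟨w, hw⟩ : (G.neighborSet v).Nonempty :=
    Set.nonempty_of_ncard_ne_zero (by have := hdeg v; omega)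
  have hpair (u : V) : degreeIn G {v, w} u ≤ 2 :=
    (Set.ncard_le_ncard Set.inter_subset_right).trans <|
      (Set.ncard_insert_le v {w}).trans (by rw [Set.ncard_singleton])
  exact ⟨{v, w}, isNonseparable_pair hw, hasCopy_compl_of_degreeIn_le hdeg
    (fun u _ => (hpair u).trans (by norm_num)) (hpair v)⟩

theorem ncard_compl_eq_of_maximal (hG : ∀ x, (G.induce {x}ᶜ).Connected)
    (hdeg : ∀ v, Nat.card W + 2 ≤ (G.neighborSet v).ncard)
    (hB : Maximal (IsNonseparableOffCopy G W) B) : Bᶜ.ncard = Nat.card W := by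
  refine (le_of_not_gt fun hlt => ?_).antisymm hB.prop.hasCopy_compl.card_le_ncard
  have hcopy : ∀ u ∈ Bᶜ, HasCopy G W (Bᶜ \ {u}) :=
    hasCopy_sdiff_singleton_of_card_lt hB.prop.hasCopy_compl hlt fun u hu hcopy => by
      have := degreeIn_le_one_of_maximal hB hu hcopy
      have := degreeIn_add_degreeIn_compl G B u
      have := hdeg u
      omega
  have hdegB (u : V) (hu : u ∉ B) : degreeIn G B u ≤ 1 :=
    degreeIn_le_one_of_maximal hB hu (hcopy u hu)
  obtain ⟨u, hu⟩ : Bᶜ.Nonempty := Set.nonempty_of_ncard_ne_zero (by omega)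
  have hnontrivial : B.Nontrivial :=
    Set.one_lt_ncard_iff_nontrivial.1 hB.prop.isNonseparable.two_le_ncard
  obtain ⟨_, _, _, _, _, hear⟩ := exists_isEar hG hnontrivial hu
  obtain ⟨b, b', c, c', q, hq⟩ := hear.exists_isShortestEar
  have hcB : c ∉ B := hq.notMem c q.start_mem_support
  have hcdeg : degreeIn G (B ∪ {v | v ∈ q.support}) c ≤ 2 :=
    (degreeIn_union_le ..).trans (add_le_add (hdegB c hcB) hq.degreeIn_support_start_le_one)
  have hunion : IsNonseparableOffCopy G W (B ∪ {v | v ∈ q.support}) :=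
    { isNonseparable := hB.prop.isNonseparable.union_support hq.toIsEar hq.isPath
      hasCopy_compl := hasCopy_compl_of_degreeIn_le hdeg (fun u hu =>
        hq.degreeIn_union_support_le_three (fun h => hu (.inl h))
          (hdegB u fun h => hu (.inl h))) hcdeg }
  exact hcB (hB.le_of_ge hunion Set.subset_union_left (.inr q.start_mem_support))

theorem exists_isPartialCopy_isNonseparable_compl_range [Nonempty V]
    (hG : ∀ x, (G.induce {x}ᶜ).Connected)
    (hdeg : ∀ v, Nat.card W + 2 ≤ (G.neighborSet v).ncard) :
    ∃ f : W → V, IsPartialCopy G Set.univ Set.univ f ∧ IsNonseparable G (Set.range f)ᶜ := by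
  obtain ⟨B, hB⟩ := (Set.toFinite {B | IsNonseparableOffCopy G W B}).exists_maximal
    (exists_isNonseparableOffCopy hdeg)
  obtain ⟨f, hf⟩ := hB.prop.hasCopy_compl
  have hrange : Set.range f = Bᶜ := by
    rw [← Set.image_univ]
    refine Set.eq_of_subset_of_ncard_le hf.mapsTo.image_subset ?_
    rw [hf.injOn.ncard_image, Set.ncard_univ, ncard_compl_eq_of_maximal hG hdeg hB]
  refine ⟨f, hf.mono subset_rfl (Set.mapsTo_univ _ _), ?_⟩
  rw [hrange, compl_compl]
  exact hB.prop.isNonseparable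

end Main

/-- For every positive integer `m` and every tree `T` of order `m`, every
`2`-connected graph `G` with `δ(G) ≥ m + 2` contains a subgraph `T' ≅ T`
such that `G - V(T')` is still `2`-connected. -/
theorem stmt_12 {V W : Type*} [Fintype V] [DecidableEq V] [Fintype W]
    (G : SimpleGraph V) [DecidableRel G.Adj] (m : ℕ) (hm : 0 < m)
    (T : SimpleGraph W) (hT : T.IsTree) (hTcard : Fintype.card W = m)
    (hG : KConnected G 2)
    (hδ : ∀ v : V, m + 2 ≤ G.degree v) :
    ∃ f : W → V, Function.Injective f ∧
      (∀ a b : W, T.Adj a b → G.Adj (f a) (f b)) ∧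
      KConnected (G.induce ((Set.range f)ᶜ)) 2 := by
  subst hTcard
  obtain ⟨_, _, _, rfl⟩ := exists_predOrder_hasse_eq hT
  have hdeg (v : V) : Nat.card W + 2 ≤ (G.neighborSet v).ncard := by
    rw [Nat.card_eq_fintype_card, ← Nat.card_coe_set_eq, Nat.card_eq_fintype_card,
      G.card_neighborSet_eq_degree]
    exact hδ v
  have hconn (x : V) : (G.induce {x}ᶜ).Connected := by
    rw [← Finset.coe_singleton]
    exact hG.2 {x} (by simp)
  have : Nonempty V := (Nat.card_pos_iff.1 (by have := hG.1; omega)).1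
  obtain ⟨f, hf, hsep⟩ := exists_isPartialCopy_isNonseparable_compl_range hconn hdeg
  have hinj : Function.Injective f := Set.injOn_univ.1 hf.injOn
  refine ⟨f, hinj, fun a b hab => ?_, hsep.kConnected_two ?_⟩
  · rcases SimpleGraph.hasse_adj.1 hab with h | h
    · exact hf.adj trivial h
    · exact (hf.adj trivial h).symm
  · have := Set.ncard_add_ncard_compl (Set.range f)
    have := Set.ncard_range_of_injective hinj
    have := G.degree_lt_card_verts (Classical.arbitrary V)
    have := hδ (Classical.arbitrary V)
    rw [Nat.card_eq_fintype_card] at *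
    omega
end

section
/- For every positive integer m and every tree T of order m, every 3-connected finite simple graph G with minimum degree δ(G) ≥ m + 3 contains a subgraph T′ isomorphic to T such that G − V(T′) is still 3-connected. -/
/-!
Among the vertex sets `B` whose complement contains `T`, together with cores `C ⊆ B` that no two
vertices separate inside `G[B]`, choose a pair with `#C` maximal and then `#B` minimal. Minimality
forces `B \ C` to consist of paths joining two core vertices, so a vertex outside `B` has few
neighbours in `B`, and an exchange argument moves the copy of `T` in `G - B` off any prescribed
vertex. If `G - B` is larger than `T`, then `3`-connectivity yields a connected set outside `B`
attached to three core vertices. A smallest such set either is all of `G - B`, and then one of its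
vertices has too small a degree, or it sees each other vertex outside `B` so few times that `T`
embeds greedily next to it, and adding a branch vertex of it to the core contradicts the maximality
of `C`. Hence `T` fills `G - B`; the degree condition then gives `B = C`, and `G[B]` is
`3`-connected.
-/

open Finset

noncomputable section
open scoped Classical

/-! ### Neighbours inside a vertex set -/

section Neighbors

variable {V : Type*} {G : SimpleGraph V} {B R : Finset V} {v w : V}

/-- The neighbours of `v` that lie in `B`. -/
def nbrsIn (G : SimpleGraph V) (B : Finset V) (v : V) : Finset V :=
  {w ∈ B | G.Adj v w}

lemma mem_nbrsIn : w ∈ nbrsIn G B v ↔ w ∈ B ∧ G.Adj v w := mem_filter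

lemma nbrsIn_subset : nbrsIn G B v ⊆ B := filter_subset _ _

lemma card_nbrsIn_le_add {E : Finset V} (h : ∀ w ∈ B, G.Adj v w → w ∈ R ∨ w ∈ E) :
    #(nbrsIn G B v) ≤ #(nbrsIn G R v) + #E := by
  refine (card_le_card fun w hw => ?_).trans (card_union_le _ _)
  obtain ⟨hwB, hvw⟩ := mem_nbrsIn.1 hw
  exact mem_union.2 ((h w hwB hvw).imp_left fun hwR => mem_nbrsIn.2 ⟨hwR, hvw⟩)

lemma card_nbrsIn_le_sdiff (B X : Finset V) (v : V) :
    #(nbrsIn G B v) ≤ #(nbrsIn G (B \ X) v) + #X :=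
  card_nbrsIn_le_add fun w hw _ => by
    rw [mem_sdiff]
    tauto

lemma card_nbrsIn_le_erase (B : Finset V) (v w : V) :
    #(nbrsIn G B v) ≤ #(nbrsIn G (B.erase w) v) + 1 :=
  card_nbrsIn_le_add (E := {w}) fun u hu _ => by
    rw [mem_erase, mem_singleton]
    tauto

lemma nbrsIn_erase_self (B : Finset V) (v : V) : nbrsIn G (B.erase v) v = nbrsIn G B v := by
  ext w
  simp only [mem_nbrsIn, mem_erase]
  exact ⟨fun h => ⟨h.1.2, h.2⟩, fun h => ⟨⟨h.2.ne', h.1⟩, h.2⟩⟩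

lemma card_nbrsIn_union_le (B X : Finset V) (v : V) :
    #(nbrsIn G (B ∪ X) v) ≤ #(nbrsIn G B v) + #(nbrsIn G X v) := by
  rw [nbrsIn, filter_union]
  exact card_union_le _ _

lemma card_nbrsIn_lt (hv : v ∈ B) : #(nbrsIn G B v) < #B := by
  rw [← nbrsIn_erase_self, ← card_erase_add_one hv]
  exact Nat.lt_succ_of_le (card_le_card nbrsIn_subset)

end Neighbors

/-! ### Rooted trees and greedy embeddings -/

/-- A choice of a root in the tree `T`, recorded by the parent map (fixing the root) and a depth
function that decreases from a node to its parent. -/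
structure Rooting {W : Type*} (T : SimpleGraph W) where
  root : W
  parent : W → W
  depth : W → ℕ
  parent_root : parent root = root
  adj_parent : ∀ t, t ≠ root → T.Adj (parent t) t
  depth_parent_lt : ∀ t, t ≠ root → depth (parent t) < depth t
  parent_eq_of_adj : ∀ s t, T.Adj s t → (t ≠ root ∧ parent t = s) ∨ (s ≠ root ∧ parent s = t)

lemma exists_rooting {W : Type*} {T : SimpleGraph W} (hT : T.IsTree) (r : W) :
    ∃ ρ : Rooting T, ρ.root = r := by
  choose p hp hunique using fun t => hT.existsUnique_path t r
  have p_root : p r = SimpleGraph.Walk.nil := (hunique r _ (by simp)).symm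
  have not_nil (t : W) (ht : t ≠ r) : ¬ (p t).Nil := fun hn => ht hn.eq
  refine ⟨⟨r, fun t => (p t).snd, fun t => (p t).length, ?_, ?_, ?_, ?_⟩, rfl⟩
  · rw [p_root]; simp
  · exact fun t ht => ((p t).adj_snd (not_nil t ht)).symm
  · intro t ht
    rw [← hunique _ _ (hp t).tail, ← SimpleGraph.Walk.length_tail_add_one (not_nil t ht)]
    exact Nat.lt_succ_self _
  · intro s t hst
    by_cases hs : s ∈ (p t).support
    · left
      refine ⟨?_, ?_⟩
      · rintro rfl
        rw [p_root, SimpleGraph.Walk.support_nil, List.mem_singleton] at hs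
        exact hst.ne hs
      · have htake : (p t).takeUntil s hs = hst.symm.toWalk :=
          (hT.existsUnique_path t s).unique ((hp t).takeUntil hs)
            (SimpleGraph.Walk.IsPath.of_adj hst.symm)
        rw [← SimpleGraph.Walk.snd_takeUntil hst.ne (p t) hs, htake]
        simp [SimpleGraph.Adj.toWalk]
    · right
      have hcons := hunique s (.cons hst (p t)) ((p t).cons_isPath_iff hst |>.2 ⟨hp t, hs⟩)
      refine ⟨?_, ?_⟩
      · rintro rfl
        exact hs (p t).end_mem_support
      · rw [← hcons, SimpleGraph.Walk.snd_cons]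

namespace Rooting

variable {V W : Type*} {T : SimpleGraph W} {G : SimpleGraph V} {ρ : Rooting T}
  {P Q : Finset W} {g : W → V} {t : W}

/-- `g` embeds the subtree spanned by the parent-closed set `P` of nodes; its values off `P` are
irrelevant. -/
structure IsPartialCopy (ρ : Rooting T) (G : SimpleGraph V) (P : Finset W) (g : W → V) :
    Prop where
  root_mem : ρ.root ∈ P
  parent_mem : ∀ t ∈ P, ρ.parent t ∈ P
  injOn : Set.InjOn g P
  adj : ∀ t ∈ P, t ≠ ρ.root → G.Adj (g (ρ.parent t)) (g t)

lemma isPartialCopy_of_copy (f : T.Copy G) (hroot : ρ.root ∈ P)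
    (hparent : ∀ t ∈ P, ρ.parent t ∈ P) : ρ.IsPartialCopy G P f :=
  ⟨hroot, hparent, f.injective.injOn, fun t _ ht => f.toHom.map_adj (ρ.adj_parent t ht)⟩

lemma isPartialCopy_singleton (x : V) : ρ.IsPartialCopy G {ρ.root} fun _ => x where
  root_mem := mem_singleton_self _
  parent_mem := by simp [ρ.parent_root]
  injOn := by simp
  adj t ht hne := absurd (mem_singleton.1 ht) hne

lemma IsPartialCopy.exists_copy [Fintype W] (h : ρ.IsPartialCopy G univ g) :
    ∃ f : T.Copy G, ⇑f = g := by
  refine ⟨⟨⟨g, fun {a b} hab => ?_⟩, fun a b => h.injOn (mem_univ a) (mem_univ b)⟩, rfl⟩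
  rcases ρ.parent_eq_of_adj a b hab with ⟨hb, rfl⟩ | ⟨ha, rfl⟩
  · exact h.adj b (mem_univ b) hb
  · exact (h.adj a (mem_univ a) ha).symm

lemma IsPartialCopy.insert_update (h : ρ.IsPartialCopy G P g) (ht : t ∉ P)
    (hparent : ρ.parent t ∈ P) {y : V} (hadj : G.Adj (g (ρ.parent t)) y)
    (hy : ∀ s ∈ P, g s ≠ y) : ρ.IsPartialCopy G (insert t P) (Function.update g t y) := by
  have update_eq : ∀ s ∈ P, Function.update g t y s = g s := fun s hs =>
    Function.update_of_ne (ne_of_mem_of_not_mem hs ht) _ _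
  refine ⟨mem_insert_of_mem h.root_mem, ?_, ?_, ?_⟩
  · intro s hs
    rcases mem_insert.1 hs with rfl | hs
    exacts [mem_insert_of_mem hparent, mem_insert_of_mem (h.parent_mem s hs)]
  · rw [coe_insert, Set.injOn_insert (by simpa using ht)]
    refine ⟨fun a ha b hb hab => h.injOn ha hb ?_, ?_⟩
    · rwa [update_eq a ha, update_eq b hb] at hab
    · rintro ⟨s, hs, hst⟩
      rw [update_eq s hs, Function.update_self] at hst
      exact hy s hs hst
  · intro s hs hne
    rcases mem_insert.1 hs with rfl | hs
    · rwa [update_eq _ hparent, Function.update_self]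
    · rw [update_eq s hs, update_eq _ (h.parent_mem s hs)]
      exact h.adj s hs hne

/-- There is room in `R` to attach the nodes of `Q` to the partial copy `g` on `P` greedily. For a
parent placed in `R` one neighbour less suffices, as the parent itself uses up a vertex of `R` that
is not its own neighbour. -/
structure HasRoom (ρ : Rooting T) (G : SimpleGraph V) (P Q : Finset W) (R : Finset V) (g : W → V) :
    Prop where
  notMem : ∀ t ∈ Q, t ∉ P
  parent_mem : ∀ t ∈ Q, ρ.parent t ∈ P ∪ Q
  map_notMem : ∀ t ∈ P, g t ∉ R
  card_le : ∀ t ∈ Q, ρ.parent t ∈ P → #Q ≤ #(nbrsIn G R (g (ρ.parent t)))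
  card_le_add_one : (∃ t ∈ Q, ρ.parent t ∈ Q) → ∀ x ∈ R, #Q ≤ #(nbrsIn G R x) + 1

lemma insert_union_erase_of_mem (ht : t ∈ Q) : insert t P ∪ Q.erase t = P ∪ Q := by
  rw [insert_union, ← union_insert, insert_erase ht]

lemma HasRoom.insert_update {R : Finset V} {y : V} (h : ρ.HasRoom G P Q R g) (ht : t ∈ Q)
    (hy : y ∈ R) :
    ρ.HasRoom G (insert t P) (Q.erase t) (R.erase y) (Function.update g t y) := by
  have update_eq : ∀ s ∈ P, Function.update g t y s = g s := fun s hs =>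
    Function.update_of_ne (ne_of_mem_of_not_mem hs (h.notMem t ht)) _ _
  have hcard := card_erase_add_one ht
  refine ⟨fun s hs => ?_, fun s hs => ?_, fun s hs => ?_, fun s hs hsP => ?_, ?_⟩
  · simpa [ne_of_mem_erase hs] using h.notMem s (mem_of_mem_erase hs)
  · exact insert_union_erase_of_mem (P := P) ht ▸ h.parent_mem s (mem_of_mem_erase hs)
  · rcases mem_insert.1 hs with rfl | hs
    · simp
    · rw [update_eq s hs]
      exact fun hs' => h.map_notMem s hs (mem_of_mem_erase hs')
  · have hsQ := mem_of_mem_erase hs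
    rcases mem_insert.1 hsP with hst | hsP
    · rw [hst, Function.update_self, nbrsIn_erase_self]
      have := h.card_le_add_one ⟨s, hsQ, hst ▸ ht⟩ y hy
      lia
    · rw [update_eq _ hsP]
      have := h.card_le s hsQ hsP
      have := card_nbrsIn_le_erase (G := G) R (g (ρ.parent s)) y
      lia
  · rintro ⟨s, hs, hs'⟩ x hx
    have := h.card_le_add_one ⟨s, mem_of_mem_erase hs, mem_of_mem_erase hs'⟩ x
      (mem_of_mem_erase hx)
    have := card_nbrsIn_le_erase (G := G) R x y
    lia

lemma IsPartialCopy.exists_parent_mem (h : ρ.IsPartialCopy G P g) (hQ : Q.Nonempty)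
    (hdisj : ∀ t ∈ Q, t ∉ P) (hparent : ∀ t ∈ Q, ρ.parent t ∈ P ∪ Q) :
    ∃ t ∈ Q, ρ.parent t ∈ P := by
  obtain ⟨t, ht, hmin⟩ := exists_min_image Q ρ.depth hQ
  exact ⟨t, ht, (mem_union.1 (hparent t ht)).resolve_right fun hpQ =>
    (ρ.depth_parent_lt t fun hr => hdisj t ht (hr ▸ h.root_mem)).not_ge (hmin _ hpQ)⟩

lemma IsPartialCopy.exists_extension {R : Finset V} (h : ρ.IsPartialCopy G P g)
    (hroom : ρ.HasRoom G P Q R g) :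
    ∃ g' : W → V, ρ.IsPartialCopy G (P ∪ Q) g' ∧ (∀ t ∈ P, g' t = g t) ∧ ∀ t ∈ Q, g' t ∈ R := by
  induction hn : #Q generalizing P Q g R with
  | zero =>
    obtain rfl := card_eq_zero.1 hn
    exact ⟨g, by rwa [union_empty], fun _ _ => rfl, by simp⟩
  | succ n ih =>
    obtain ⟨t, htQ, htP⟩ := h.exists_parent_mem (card_pos.1 (by lia)) hroom.notMem hroom.parent_mem
    obtain ⟨y, hy⟩ : (nbrsIn G R (g (ρ.parent t))).Nonempty :=
      card_pos.1 (by have := hroom.card_le t htQ htP; lia)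
    obtain ⟨hyR, hty⟩ := mem_nbrsIn.1 hy
    have ht := hroom.notMem t htQ
    obtain ⟨g', hg', hold, hnew⟩ := ih
      (h.insert_update ht htP hty fun s hs hsy => hroom.map_notMem s hs (hsy ▸ hyR))
      (hroom.insert_update htQ hyR) (by rw [card_erase_of_mem htQ, hn, Nat.add_sub_cancel])
    refine ⟨g', insert_union_erase_of_mem (P := P) htQ ▸ hg', fun s hs => ?_, fun s hs => ?_⟩
    · rw [hold s (mem_insert_of_mem hs), Function.update_of_ne (ne_of_mem_of_not_mem hs ht)]
    · by_cases hst : s = t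
      · rw [hst, hold t (mem_insert_self _ _), Function.update_self]
        exact hyR
      · exact mem_of_mem_erase (hnew s (mem_erase.2 ⟨hst, hs⟩))

end Rooting

lemma exists_copy_of_card_le_nbrsIn {V W : Type*} [Fintype W] {T : SimpleGraph W}
    {G : SimpleGraph V} (hT : T.IsTree) {R : Finset V} (hR : R.Nonempty)
    (hdeg : ∀ x ∈ R, Fintype.card W ≤ #(nbrsIn G R x) + 1) :
    ∃ f : T.Copy G, ∀ t, f t ∈ R := by
  obtain ⟨r⟩ := hT.connected.nonempty
  obtain ⟨ρ, rfl⟩ := exists_rooting hT r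
  obtain ⟨x, hx⟩ := hR
  have hcard : #(univ.erase ρ.root) + 1 = Fintype.card W := card_erase_add_one (mem_univ _)
  have hroom : ρ.HasRoom G {ρ.root} (univ.erase ρ.root) (R.erase x) fun _ => x := by
    refine ⟨by simp, by simp, by simp, fun t _ _ => ?_, fun _ y hy => ?_⟩
    · rw [nbrsIn_erase_self]
      have := hdeg x hx
      lia
    · have := hdeg y (mem_of_mem_erase hy)
      have := card_nbrsIn_le_erase (G := G) R y x
      lia
  obtain ⟨g, hg, hroot, hmem⟩ := (ρ.isPartialCopy_singleton x).exists_extension hroom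
  rw [← insert_eq, insert_erase (mem_univ _)] at hg
  obtain ⟨f, rfl⟩ := hg.exists_copy
  refine ⟨f, fun t => ?_⟩
  by_cases ht : t = ρ.root
  · rw [ht, hroot _ (mem_singleton_self _)]
    exact hx
  · exact mem_of_mem_erase (hmem t (mem_erase.2 ⟨ht, mem_univ t⟩))

namespace Rooting

variable {V W : Type*} [Fintype W] {T : SimpleGraph W} {G : SimpleGraph V} {ρ : Rooting T}
  {q s t : W}

/-- The nodes of the branch at `q`: those from which iterating the parent map reaches `q`. -/
def descendants (ρ : Rooting T) (q : W) : Finset W := {t | ∃ k, ρ.parent^[k] t = q}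

lemma mem_descendants : t ∈ ρ.descendants q ↔ ∃ k, ρ.parent^[k] t = q := by simp [descendants]

lemma self_mem_descendants : q ∈ ρ.descendants q := mem_descendants.2 ⟨0, rfl⟩

lemma mem_descendants_of_parent_mem (h : ρ.parent t ∈ ρ.descendants q) : t ∈ ρ.descendants q := by
  obtain ⟨k, hk⟩ := mem_descendants.1 h
  exact mem_descendants.2 ⟨k + 1, hk⟩

lemma parent_mem_descendants (h : t ∈ ρ.descendants q) (hne : t ≠ q) :
    ρ.parent t ∈ ρ.descendants q := by
  obtain ⟨_ | k, hk⟩ := mem_descendants.1 h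
  exacts [absurd hk hne, mem_descendants.2 ⟨k, hk⟩]

lemma descendants_trans (hts : t ∈ ρ.descendants s) (hsq : s ∈ ρ.descendants q) :
    t ∈ ρ.descendants q := by
  obtain ⟨k, rfl⟩ := mem_descendants.1 hts
  obtain ⟨l, hl⟩ := mem_descendants.1 hsq
  exact mem_descendants.2 ⟨l + k, by rw [Function.iterate_add_apply, hl]⟩

lemma descendants_total (hq : t ∈ ρ.descendants q) (hs : t ∈ ρ.descendants s) :
    q ∈ ρ.descendants s ∨ s ∈ ρ.descendants q := by
  obtain ⟨k, rfl⟩ := mem_descendants.1 hq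
  obtain ⟨l, rfl⟩ := mem_descendants.1 hs
  simp only [mem_descendants, ← Function.iterate_add_apply]
  rcases le_total k l with hkl | hlk
  · exact Or.inl ⟨l - k, by rw [Nat.sub_add_cancel hkl]⟩
  · exact Or.inr ⟨k - l, by rw [Nat.sub_add_cancel hlk]⟩

lemma mem_descendants_root (t : W) : t ∈ ρ.descendants ρ.root := by
  induction hn : ρ.depth t using Nat.strong_induction_on generalizing t with
  | _ n ih =>
    by_cases ht : t = ρ.root
    · exact ht ▸ self_mem_descendants
    · exact mem_descendants_of_parent_mem (ih _ (hn ▸ ρ.depth_parent_lt t ht) _ rfl)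

lemma root_notMem_descendants (hq : q ≠ ρ.root) : ρ.root ∉ ρ.descendants q := fun h => by
  obtain ⟨k, rfl⟩ := mem_descendants.1 h
  exact hq (Function.iterate_fixed ρ.parent_root k)

lemma depth_le_of_mem_descendants (h : t ∈ ρ.descendants q) : ρ.depth q ≤ ρ.depth t := by
  obtain ⟨k, rfl⟩ := mem_descendants.1 h
  clear h
  induction k generalizing t with
  | zero => exact le_rfl
  | succ k ih =>
    refine (ih (t := ρ.parent t)).trans ?_
    by_cases ht : t = ρ.root
    · rw [ht, ρ.parent_root]
    · exact (ρ.depth_parent_lt t ht).le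

lemma parent_notMem_descendants (hq : q ≠ ρ.root) : ρ.parent q ∉ ρ.descendants q := fun h =>
  (ρ.depth_parent_lt q hq).not_ge (depth_le_of_mem_descendants h)

lemma exists_child_of_mem_descendants (h : s ∈ ρ.descendants t) (hne : s ≠ t) :
    ∃ c, c ≠ ρ.root ∧ ρ.parent c = t ∧ s ∈ ρ.descendants c := by
  obtain ⟨k, hk⟩ := mem_descendants.1 h
  clear h
  induction k generalizing s with
  | zero => exact absurd hk hne
  | succ k ih =>
    by_cases hst : ρ.parent s = t
    · refine ⟨s, ?_, hst, self_mem_descendants⟩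
      rintro rfl
      exact hne (ρ.parent_root ▸ hst)
    · obtain ⟨c, hc, hct, hsc⟩ := ih hst hk
      exact ⟨c, hc, hct, mem_descendants_of_parent_mem hsc⟩

lemma descendants_ssubset_of_parent (ht : t ≠ ρ.root) :
    ρ.descendants t ⊂ ρ.descendants (ρ.parent t) := by
  have hmem : t ∈ ρ.descendants (ρ.parent t) :=
    mem_descendants_of_parent_mem self_mem_descendants
  refine (ssubset_iff_of_subset fun s hs => descendants_trans hs hmem).2
    ⟨_, self_mem_descendants, parent_notMem_descendants ht⟩

/-- The nodes of the branch at `q` that have a child. -/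
def internalNodes (ρ : Rooting T) (q : W) : Finset W :=
  {t ∈ ρ.descendants q | ∃ c, c ≠ ρ.root ∧ ρ.parent c = t}

lemma mem_internalNodes :
    t ∈ ρ.internalNodes q ↔ t ∈ ρ.descendants q ∧ ∃ c, c ≠ ρ.root ∧ ρ.parent c = t :=
  mem_filter

lemma parent_mem_internalNodes (ht : t ∈ ρ.descendants q) (hq : q ≠ ρ.root) (hne : t ≠ q) :
    ρ.parent t ∈ ρ.internalNodes q :=
  mem_internalNodes.2 ⟨parent_mem_descendants ht hne,
    t, fun h => root_notMem_descendants hq (h ▸ ht), rfl⟩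

lemma exists_leaf_mem_descendants (q : W) :
    ∃ l ∈ ρ.descendants q, ∀ c, c ≠ ρ.root → ρ.parent c ≠ l := by
  obtain ⟨l, hl, hmax⟩ := exists_max_image (ρ.descendants q) ρ.depth ⟨q, self_mem_descendants⟩
  refine ⟨l, hl, fun c hc hcl => ?_⟩
  have hle := hmax c (mem_descendants_of_parent_mem (hcl ▸ hl))
  exact (hcl ▸ ρ.depth_parent_lt c hc).not_ge hle

lemma card_antichain_add_card_internalNodes_le {A : Finset W} (hA : A ⊆ ρ.descendants q)
    (hanti : ∀ s ∈ A, ∀ t ∈ A, s ∈ ρ.descendants t → s = t) :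
    #A + #(ρ.internalNodes q) ≤ #(ρ.descendants q) := by
  choose leaf leaf_mem leaf_childless using exists_leaf_mem_descendants (ρ := ρ)
  have hinj : Set.InjOn leaf A := fun s hs t ht hst => by
    rcases descendants_total (leaf_mem s) (hst ▸ leaf_mem t) with h | h
    exacts [hanti s hs t ht h, (hanti t ht s hs h).symm]
  have hdisj : Disjoint (A.image leaf) (ρ.internalNodes q) := by
    rw [disjoint_left]
    intro l hl hint
    obtain ⟨s, -, rfl⟩ := mem_image.1 hl
    obtain ⟨c, hc, hcl⟩ := (mem_internalNodes.1 hint).2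
    exact leaf_childless s c hc hcl
  rw [← card_image_of_injOn hinj, ← card_union_of_disjoint hdisj]
  refine card_le_card (union_subset (image_subset_iff.2 fun s hs => ?_) (filter_subset _ _))
  exact descendants_trans (leaf_mem s) (hA hs)

lemma isPartialCopy_regraft (f : T.Copy G) (hq : q ≠ ρ.root) {x : V}
    (hadj : G.Adj (f (ρ.parent q)) x) (hx : ∀ s ∉ ρ.descendants q, f s ≠ x) :
    ρ.IsPartialCopy G (insert q (ρ.descendants q)ᶜ) (Function.update f q x) := by
  refine (isPartialCopy_of_copy f (by simpa using root_notMem_descendants hq)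
    fun t ht => ?_).insert_update (by simpa using self_mem_descendants)
    (by simpa using parent_notMem_descendants hq) hadj (by simpa using hx)
  rw [mem_compl] at ht ⊢
  exact mt mem_descendants_of_parent_mem ht

end Rooting

section Exchange

variable {V W : Type*} [Fintype W] {T : SimpleGraph W} {G : SimpleGraph V} {H L : Finset V}

lemma exists_free_nbr (f : T.Copy G) {t : W} (hdeg : Fintype.card W ≤ #(nbrsIn G H (f t))) :
    ∃ d ∈ H, d ∉ Set.range f ∧ G.Adj (f t) d := by
  have hlt : #((univ.erase t).image f) < #(nbrsIn G H (f t)) :=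
    (card_image_le.trans_lt (card_lt_card (erase_ssubset (mem_univ t)))).trans_le hdeg
  obtain ⟨d, hd, hdf⟩ := exists_mem_notMem_of_card_lt_card hlt
  obtain ⟨hdH, htd⟩ := mem_nbrsIn.1 hd
  refine ⟨d, hdH, ?_, htd⟩
  rintro ⟨s, rfl⟩
  exact hdf (mem_image_of_mem f (mem_erase.2 ⟨fun hst => htd.ne (by rw [hst]), mem_univ s⟩))

namespace Rooting

variable {ρ : Rooting T} {f f' : T.Copy G} {c q s t : W} {x : V}

lemma insert_compl_union_erase_descendants :
    insert q (ρ.descendants q)ᶜ ∪ (ρ.descendants q).erase q = univ := by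
  rw [insert_union, ← union_insert, insert_erase self_mem_descendants, union_comm,
    union_compl]

lemma parent_eq_of_parent_mem (ht : t ∈ (ρ.descendants q).erase q)
    (hpt : ρ.parent t ∈ insert q (ρ.descendants q)ᶜ) : ρ.parent t = q := by
  obtain ⟨hne, htq⟩ := mem_erase.1 ht
  exact (mem_insert.1 hpt).resolve_right (notMem_compl.2 (parent_mem_descendants htq hne))

lemma update_of_notMem_descendants (ht : t ∉ ρ.descendants q) :
    Function.update f q x t = f t :=
  Function.update_of_ne (by rintro rfl; exact ht self_mem_descendants) _ _

lemma card_image_compl_descendants_add :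
    #((ρ.descendants q)ᶜ.image f) + #((ρ.descendants q).erase q) + 1 = Fintype.card W := by
  have hinj : Function.Injective f := f.injective
  rw [card_image_of_injective _ hinj, add_assoc, card_erase_add_one self_mem_descendants,
    card_compl_add_card]

lemma card_erase_descendants_le_nbrsIn {v : V} (hdeg : Fintype.card W ≤ #(nbrsIn G H v)) :
    #((ρ.descendants q).erase q) ≤
      #(nbrsIn G ((H \ (ρ.descendants q)ᶜ.image f).erase (f q)) v) := by
  have := card_image_compl_descendants_add (ρ := ρ) (f := f) (q := q)
  have := card_nbrsIn_le_sdiff (G := G) H ((ρ.descendants q)ᶜ.image f) v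
  have := card_nbrsIn_le_erase (G := G) (H \ (ρ.descendants q)ᶜ.image f) v (f q)
  lia

lemma exists_copy_vacating (hf : ∀ t, f t ∈ H) (hc : c ≠ ρ.root) (hxH : x ∈ H)
    (hxf : x ∉ Set.range f) (hadj : G.Adj (f (ρ.parent c)) x)
    (hdeg : ∀ v ∈ H, (∀ s ∉ ρ.descendants c, f s ≠ v) → Fintype.card W ≤ #(nbrsIn G H v)) :
    ∃ f' : T.Copy G, (∀ t, f' t ∈ H) ∧ (∀ t ∉ ρ.descendants c, f' t = f t) ∧
      f c ∉ Set.range f' := by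
  have hinj : Function.Injective f := f.injective
  have hne (t : W) : f t ≠ x := fun ht => hxf ⟨t, ht⟩
  set R := (H \ (ρ.descendants c)ᶜ.image f).erase (f c) with hR
  have mem_R {v : V} (hv : v ∈ R) : v ≠ f c ∧ v ∈ H ∧ ∀ s ∉ ρ.descendants c, f s ≠ v := by
    simpa [hR] using hv
  have hroom : ρ.HasRoom G (insert c (ρ.descendants c)ᶜ) ((ρ.descendants c).erase c) (R.erase x)
      (Function.update f c x) := by
    refine ⟨by simp, fun t _ => insert_compl_union_erase_descendants (q := c) ▸ mem_univ _,
      fun t ht hmem => ?_, fun t ht hpt => ?_, fun _ v hv => ?_⟩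
    · rcases mem_insert.1 ht with rfl | ht
      · simp at hmem
      · rw [mem_compl] at ht
        rw [update_of_notMem_descendants ht] at hmem
        exact (mem_R (mem_of_mem_erase hmem)).2.2 t ht rfl
    · rw [parent_eq_of_parent_mem ht hpt, Function.update_self, nbrsIn_erase_self]
      exact card_erase_descendants_le_nbrsIn (hdeg x hxH fun s _ => hne s)
    · have hv := mem_R (mem_of_mem_erase hv)
      exact (card_erase_descendants_le_nbrsIn (hdeg v hv.2.1 hv.2.2)).trans
        (card_nbrsIn_le_erase _ _ _)
  obtain ⟨g, hg, hold, hnew⟩ :=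
    (isPartialCopy_regraft f hc hadj fun s _ => hne s).exists_extension hroom
  rw [insert_compl_union_erase_descendants] at hg
  obtain ⟨f', rfl⟩ := hg.exists_copy
  have hf'c : f' c = x := (hold c (mem_insert_self _ _)).trans (Function.update_self ..)
  have hf'old {t : W} (ht : t ∉ ρ.descendants c) : f' t = f t :=
    (hold t (mem_insert_of_mem (mem_compl.2 ht))).trans (update_of_notMem_descendants ht)
  have hf' (t : W) : f' t ∈ H ∧ f' t ≠ f c := by
    by_cases htc : t = c
    · exact ⟨by rwa [htc, hf'c], by rw [htc, hf'c]; exact (hne c).symm⟩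
    by_cases ht : t ∈ ρ.descendants c
    · have := mem_R (mem_of_mem_erase (hnew t (mem_erase.2 ⟨htc, ht⟩)))
      exact ⟨this.2.1, this.1⟩
    · rw [hf'old ht]
      exact ⟨hf t, fun h => htc (hinj h)⟩
  exact ⟨f', fun t => (hf' t).1, fun t ht => hf'old ht, fun ⟨t, ht⟩ => (hf' t).2 ht⟩

/-- In the copy `f` in `H`, which covers `L`, the branch at `q` occupies a vertex of `L` and can be
cut off and replanted at a free neighbour of the image of the parent of `q`. -/
structure IsMovable (ρ : Rooting T) (H L : Finset V) (f : T.Copy G) (q : W) : Prop where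
  mem : ∀ t, f t ∈ H
  cover : ∀ u ∈ L, u ∈ Set.range f
  ne_root : q ≠ ρ.root
  exists_free : ∃ d ∈ H, d ∉ Set.range f ∧ G.Adj (f (ρ.parent q)) d
  exists_mem : ∃ t ∈ ρ.descendants q, f t ∈ L

/-- A smallest movable branch, in a host `H` with large degrees off `L`. -/
structure IsMinimalMove (ρ : Rooting T) (H L : Finset V) (f : T.Copy G) (q : W) : Prop
    extends ρ.IsMovable H L f q where
  deg : ∀ v ∈ H, v ∉ L → Fintype.card W ≤ #(nbrsIn G H v)
  min : ∀ (f' : T.Copy G) (q' : W), ρ.IsMovable H L f' q' →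
    #(ρ.descendants q) ≤ #(ρ.descendants q')

/-- `f'` differs from `f` only in the branch at `q`, and there only at nodes placed off `L`. -/
structure IsVariant (ρ : Rooting T) (H L : Finset V) (f : T.Copy G) (q : W) (f' : T.Copy G) :
    Prop where
  mem : ∀ t, f' t ∈ H
  eq_of_notMem : ∀ t ∉ ρ.descendants q, f' t = f t
  eq_of_mem : ∀ t, f t ∈ L → f' t = f t

/-- The vertices of `H` left free by some variant of `f`. -/
def slack (ρ : Rooting T) (H L : Finset V) (f : T.Copy G) (q : W) : Finset V :=
  {x ∈ H | ∃ f', ρ.IsVariant H L f q f' ∧ x ∉ Set.range f'}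

lemma mem_slack : x ∈ ρ.slack H L f q ↔ x ∈ H ∧ ∃ f', ρ.IsVariant H L f q f' ∧ x ∉ Set.range f' :=
  mem_filter

namespace IsMinimalMove

lemma isVariant_self (hm : ρ.IsMinimalMove H L f q) : ρ.IsVariant H L f q f :=
  ⟨hm.mem, fun _ _ => rfl, fun _ _ => rfl⟩

lemma cover_variant (hm : ρ.IsMinimalMove H L f q) (hv : ρ.IsVariant H L f q f') :
    ∀ u ∈ L, u ∈ Set.range f' := fun u hu => by
  obtain ⟨t, rfl⟩ := hm.cover u hu
  exact ⟨t, hv.eq_of_mem t hu⟩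

lemma variant_mem_iff (hm : ρ.IsMinimalMove H L f q) (hv : ρ.IsVariant H L f q f') :
    f' t ∈ L ↔ f t ∈ L := by
  refine ⟨fun ht => ?_, fun ht => (hv.eq_of_mem t ht).symm ▸ ht⟩
  obtain ⟨s, hs⟩ := hm.cover _ ht
  have hst : f' s = f' t := (hv.eq_of_mem s (hs ▸ ht)).trans hs
  obtain rfl : s = t := f'.injective hst
  exact hs ▸ ht

lemma not_adj_free (hm : ρ.IsMinimalMove H L f q) (hv : ρ.IsVariant H L f q f')
    (htq : t ∈ ρ.descendants q) (hst : s ∈ ρ.descendants t) (hne : s ≠ t) (hs : f s ∈ L)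
    (hxH : x ∈ H) (hxf : x ∉ Set.range f') : ¬ G.Adj (f' t) x := fun hadj => by
  obtain ⟨c, hc, rfl, hsc⟩ := exists_child_of_mem_descendants hst hne
  have hmov : ρ.IsMovable H L f' c :=
    ⟨hv.mem, hm.cover_variant hv, hc, ⟨x, hxH, hxf, hadj⟩, s, hsc, (hm.variant_mem_iff hv).2 hs⟩
  have hlt := card_lt_card (descendants_ssubset_of_parent hc)
  have hle := card_le_card fun u (hu : u ∈ ρ.descendants (ρ.parent c)) => descendants_trans hu htq
  exact (hm.min f' c hmov).not_gt (hlt.trans_le hle)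

lemma mem_of_descendant_mem (hm : ρ.IsMinimalMove H L f q) (htq : t ∈ ρ.descendants q)
    (hst : s ∈ ρ.descendants t) (hs : f s ∈ L) : f t ∈ L := by
  by_contra ht
  obtain ⟨d, hdH, hdf, hadj⟩ := exists_free_nbr f (hm.deg _ (hm.mem t) ht)
  exact hm.not_adj_free hm.isVariant_self htq hst (by rintro rfl; exact ht hs) hs hdH hdf hadj

lemma branch_root_mem (hm : ρ.IsMinimalMove H L f q) : f q ∈ L := by
  obtain ⟨t, htq, ht⟩ := hm.exists_mem
  exact hm.mem_of_descendant_mem self_mem_descendants htq ht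

lemma exists_variant_vacating (hm : ρ.IsMinimalMove H L f q) (hv : ρ.IsVariant H L f q f')
    (hcq : c ∈ ρ.descendants q) (hcL : f c ∉ L) (hxH : x ∈ H) (hxf : x ∉ Set.range f')
    (hadj : G.Adj (f' (ρ.parent c)) x) : ∃ f'', ρ.IsVariant H L f q f'' ∧ f' c ∉ Set.range f'' := by
  have hbranch {s : W} (hs : s ∈ ρ.descendants c) : f s ∉ L :=
    fun hsL => hcL (hm.mem_of_descendant_mem hcq hs hsL)
  obtain ⟨f'', hf'', hold, hfree⟩ := exists_copy_vacating hv.mem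
    (fun hroot => root_notMem_descendants hm.ne_root (hroot ▸ hcq)) hxH hxf hadj fun v hvH hv' => by
      refine hm.deg v hvH fun hvL => ?_
      obtain ⟨s, rfl⟩ := hm.cover_variant hv v hvL
      by_cases hs : s ∈ ρ.descendants c
      exacts [hbranch hs ((hm.variant_mem_iff hv).1 hvL), hv' s hs rfl]
  refine ⟨f'', ⟨hf'', fun t ht => ?_, fun t ht => ?_⟩, hfree⟩
  · rw [hold t fun htc => ht (descendants_trans htc hcq), hv.eq_of_notMem t ht]
  · rw [hold t fun htc => hbranch htc ht, hv.eq_of_mem t ht]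

lemma notMem_of_mem_slack (hm : ρ.IsMinimalMove H L f q) (hx : x ∈ ρ.slack H L f q) : x ∉ L := by
  obtain ⟨-, f', hv, hxf⟩ := mem_slack.1 hx
  exact fun hxL => hxf (hm.cover_variant hv x hxL)

lemma map_notMem_slack (ht : t ∉ ρ.descendants q) : f t ∉ ρ.slack H L f q := fun hmem => by
  obtain ⟨-, f', hv, htf⟩ := mem_slack.1 hmem
  exact htf ⟨t, hv.eq_of_notMem t ht⟩

lemma antichain_blocked_nbrs (hm : ρ.IsMinimalMove H L f q) (hv : ρ.IsVariant H L f q f')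
    (hxH : x ∈ H) (hxf : x ∉ Set.range f') (htq : t ∈ ρ.descendants q) (hxt : G.Adj x (f' t))
    (hs : f' s ∉ ρ.slack H L f q) (hst : s ∈ ρ.descendants t) : s = t := by
  by_contra hne
  have no_lower {u : W} (hut : u ∈ ρ.descendants t) (hu : u ≠ t) : f u ∉ L := fun huL =>
    hm.not_adj_free hv htq hut hu huL hxH hxf hxt.symm
  obtain ⟨y, hyH, hyf, hadj⟩ : ∃ y ∈ H, y ∉ Set.range f' ∧ G.Adj (f' (ρ.parent s)) y := by
    by_cases hp : ρ.parent s = t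
    · exact ⟨x, hxH, hxf, hp ▸ hxt.symm⟩
    · refine exists_free_nbr f' (hm.deg _ (hv.mem _) ?_)
      rw [hm.variant_mem_iff hv]
      exact no_lower (parent_mem_descendants hst hne) hp
  obtain ⟨f'', hv'', hfree⟩ := hm.exists_variant_vacating hv (descendants_trans hst htq)
    (no_lower hst hne) hyH hyf hadj
  exact hs (mem_slack.2 ⟨hv.mem s, f'', hv'', hfree⟩)

lemma card_internalNodes_le_nbrsIn_slack (hm : ρ.IsMinimalMove H L f q)
    (hx : x ∈ ρ.slack H L f q) : #(ρ.internalNodes q) ≤ #(nbrsIn G (ρ.slack H L f q) x) := by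
  obtain ⟨hxH, f', hv, hxf⟩ := mem_slack.1 hx
  set A := {t ∈ ρ.descendants q | G.Adj x (f' t) ∧ f' t ∉ ρ.slack H L f q} with hA
  have hanti := card_antichain_add_card_internalNodes_le (ρ := ρ) (filter_subset _ _ : A ⊆ _)
    fun s hs t ht hst => by
      rw [mem_filter] at hs ht
      exact hm.antichain_blocked_nbrs hv hxH hxf ht.1 ht.2.1 hs.2.2 hst
  have hnbrs : #(nbrsIn G H x) ≤
      #(nbrsIn G (ρ.slack H L f q) x) + #(((ρ.descendants q)ᶜ ∪ A).image f') :=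
    card_nbrsIn_le_add fun w hwH hxw => by
      refine or_iff_not_imp_left.2 fun hw => ?_
      obtain ⟨t, rfl⟩ : w ∈ Set.range f' := by
        by_contra hwf
        exact hw (mem_slack.2 ⟨hwH, f', hv, hwf⟩)
      refine mem_image_of_mem _ (mem_union.2 ?_)
      simp only [mem_compl, hA, mem_filter]
      tauto
  have := hm.deg x hxH (hm.notMem_of_mem_slack hx)
  have := card_compl_add_card (ρ.descendants q)
  have := (card_image_le (s := (ρ.descendants q)ᶜ ∪ A) (f := f')).trans (card_union_le _ _)
  lia

end IsMinimalMove

/-- The nodes that are not childless nodes of the branch at `q` (except for `q` itself). -/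
def pruned (ρ : Rooting T) (q : W) : Finset W :=
  insert q (ρ.descendants q)ᶜ ∪ (ρ.internalNodes q).erase q

lemma parent_mem_pruned_of_notMem (hq : q ≠ ρ.root) (ht : t ∉ ρ.pruned q) :
    ρ.parent t ∈ ρ.internalNodes q ∧ ρ.parent t ∈ ρ.pruned q := by
  have htq : t ∈ ρ.descendants q ∧ t ≠ q := by
    simp only [pruned, mem_union, mem_insert, mem_compl] at ht
    tauto
  have hint := parent_mem_internalNodes htq.1 hq htq.2
  refine ⟨hint, ?_⟩
  simp only [pruned, mem_union, mem_insert, mem_erase]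
  tauto

namespace IsMinimalMove

lemma hasRoom_slack (hm : ρ.IsMinimalMove H L f q) {d : V} (hd : d ∈ ρ.slack H L f q) :
    ρ.HasRoom G (insert q (ρ.descendants q)ᶜ) ((ρ.internalNodes q).erase q)
      ((ρ.slack H L f q).erase d) (Function.update f q d) := by
  refine ⟨fun t ht hmem => ?_, fun t ht => ?_, fun t ht hmem => ?_, fun t ht hpt => ?_,
    fun _ x hx => ?_⟩
  · simp only [mem_erase, mem_internalNodes, mem_insert, mem_compl] at ht hmem
    tauto
  · have hint := parent_mem_internalNodes (mem_internalNodes.1 (mem_of_mem_erase ht)).1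
      hm.ne_root (ne_of_mem_erase ht)
    simp only [mem_union, mem_insert, mem_erase]
    tauto
  · rcases mem_insert.1 ht with rfl | ht
    · simp at hmem
    · rw [mem_compl] at ht
      rw [update_of_notMem_descendants ht] at hmem
      exact map_notMem_slack ht (mem_of_mem_erase hmem)
  · rw [parent_eq_of_parent_mem (erase_subset_erase q (filter_subset _ _) ht) hpt,
      Function.update_self, nbrsIn_erase_self]
    exact card_erase_le.trans (hm.card_internalNodes_le_nbrsIn_slack hd)
  · exact card_erase_le.trans ((hm.card_internalNodes_le_nbrsIn_slack
      (mem_of_mem_erase hx)).trans (card_nbrsIn_le_erase _ _ _))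

lemma exists_isPartialCopy_pruned (hm : ρ.IsMinimalMove H L f q) :
    ∃ g : W → V, ρ.IsPartialCopy G (ρ.pruned q) g ∧ (∀ t ∉ ρ.descendants q, g t = f t) ∧
      ∀ t ∈ ρ.descendants q, t ∈ ρ.pruned q → g t ∈ ρ.slack H L f q := by
  obtain ⟨d, hdH, hdf, hadj⟩ := hm.exists_free
  have hd : d ∈ ρ.slack H L f q := mem_slack.2 ⟨hdH, f, hm.isVariant_self, hdf⟩
  obtain ⟨g, hg, hold, hnew⟩ :=
    (isPartialCopy_regraft f hm.ne_root hadj fun s _ hs => hdf ⟨s, hs⟩).exists_extension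
      (hm.hasRoom_slack hd)
  refine ⟨g, hg, fun t ht => ?_, fun t htq ht => ?_⟩
  · rw [hold t (mem_insert_of_mem (mem_compl.2 ht)), update_of_notMem_descendants ht]
  · rcases mem_union.1 ht with ht | ht
    · obtain rfl := (mem_insert.1 ht).resolve_right (notMem_compl.2 htq)
      rwa [hold t (mem_insert_self _ _), Function.update_self]
    · exact mem_of_mem_erase (hnew t ht)

lemma hasRoom_leaves (hm : ρ.IsMinimalMove H L f q) {g : W → V}
    (hg : ∀ t ∈ ρ.descendants q, t ∈ ρ.pruned q → g t ∈ ρ.slack H L f q) :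
    ρ.HasRoom G (ρ.pruned q) (ρ.pruned q)ᶜ ((H \ (ρ.pruned q).image g).erase (f q)) g := by
  set P := ρ.pruned q
  refine ⟨by simp, by simp, fun t ht hmem =>
    (mem_sdiff.1 (mem_of_mem_erase hmem)).2 (mem_image_of_mem g ht), fun t ht _ => ?_, ?_⟩
  · obtain ⟨hint, hpP⟩ := parent_mem_pruned_of_notMem hm.ne_root (mem_compl.1 ht)
    have hslack := hg _ (mem_internalNodes.1 hint).1 hpP
    have := hm.deg _ (mem_slack.1 hslack).1 (hm.notMem_of_mem_slack hslack)
    have := card_nbrsIn_le_add (G := G) (B := H) (v := g (ρ.parent t))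
      (R := (H \ P.image g).erase (f q)) (E := insert (f q) ((P.image g).erase (g (ρ.parent t))))
      fun w hwH hadj => by
        have := hadj.ne'
        simp only [mem_erase, mem_sdiff, mem_insert]
        tauto
    have := card_insert_le (f q) ((P.image g).erase (g (ρ.parent t)))
    have := card_erase_add_one (mem_image_of_mem g hpP)
    have := card_image_le (s := P) (f := g)
    have := card_compl_add_card P
    lia
  · rintro ⟨t, ht, hpt⟩
    exact absurd (parent_mem_pruned_of_notMem hm.ne_root (mem_compl.1 ht)).2 (mem_compl.1 hpt)

/- The pruned tree is replanted inside the slack, off `L`; its leaves are then added back while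
avoiding `f q`, which lies in `L`. -/
lemma exists_copy_avoiding (hm : ρ.IsMinimalMove H L f q) :
    ∃ f' : T.Copy G, ∀ t, f' t ∈ H.erase (f q) := by
  obtain ⟨g, hg, hold, hslack⟩ := hm.exists_isPartialCopy_pruned
  have hgP {t : W} (ht : t ∈ ρ.pruned q) : g t ∈ H.erase (f q) := by
    by_cases htq : t ∈ ρ.descendants q
    · have hgt := hslack t htq ht
      exact mem_erase.2 ⟨fun h => hm.notMem_of_mem_slack hgt (h ▸ hm.branch_root_mem),
        (mem_slack.1 hgt).1⟩
    · rw [hold t htq]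
      exact mem_erase.2 ⟨fun h => htq (f.injective h ▸ self_mem_descendants), hm.mem t⟩
  obtain ⟨g', hg', hold', hnew'⟩ := hg.exists_extension (hm.hasRoom_leaves hslack)
  rw [union_compl] at hg'
  obtain ⟨f', rfl⟩ := hg'.exists_copy
  refine ⟨f', fun t => ?_⟩
  by_cases ht : t ∈ ρ.pruned q
  · exact hold' t ht ▸ hgP ht
  · exact erase_subset_erase _ sdiff_subset (hnew' t (mem_compl.2 ht))

end IsMinimalMove

lemma IsMovable.exists_copy_avoiding (hmov : ρ.IsMovable H L f q)
    (hdeg : ∀ v ∈ H, v ∉ L → Fintype.card W ≤ #(nbrsIn G H v)) :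
    ∃ u ∈ L, ∃ f' : T.Copy G, ∀ t, f' t ∈ H.erase u := by
  induction hn : #(ρ.descendants q) using Nat.strong_induction_on generalizing f q with
  | _ n ih =>
    by_cases hmin : ∀ (f' : T.Copy G) (q' : W), ρ.IsMovable H L f' q' → n ≤ #(ρ.descendants q')
    · have hm : ρ.IsMinimalMove H L f q := ⟨hmov, hdeg, hn ▸ hmin⟩
      exact ⟨f q, hm.branch_root_mem, hm.exists_copy_avoiding⟩
    · push Not at hmin
      obtain ⟨f', q', hmov', hlt⟩ := hmin
      exact ih _ hlt hmov' rfl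

end Rooting

lemma exists_adj_free_or_exists_copy_sdiff (hT : T.IsTree) (f : T.Copy G)
    (hcard : Fintype.card W < #H)
    (hdeg : ∀ v ∈ H, v ∉ Set.range f → Fintype.card W ≤ #(nbrsIn G H v)) :
    (∃ p, ∃ d ∈ H, d ∉ Set.range f ∧ G.Adj (f p) d) ∨
      ∃ f' : T.Copy G, ∀ t, f' t ∈ H \ univ.image f := by
  refine or_iff_not_imp_left.2 fun hno => ?_
  push Not at hno
  have himage : #(univ.image f) = Fintype.card W := card_image_of_injective _ f.injective
  refine exists_copy_of_card_le_nbrsIn hT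
    (card_pos.1 (by have := le_card_sdiff (univ.image f) H; lia)) fun x hx => ?_
  simp only [mem_sdiff, mem_image, mem_univ, true_and] at hx
  refine (hdeg x hx.1 hx.2).trans ((card_le_card fun w hw => ?_).trans (Nat.le_succ _))
  obtain ⟨hwH, hxw⟩ := mem_nbrsIn.1 hw
  refine mem_nbrsIn.2 ⟨mem_sdiff.2 ⟨hwH, fun hwf => ?_⟩, hxw⟩
  obtain ⟨p, -, rfl⟩ := mem_image.1 hwf
  exact hno p x hx.1 hx.2 hxw.symm

lemma exists_copy_avoiding_of_subset_singleton (hT : T.IsTree) {u : V} (hL : ∀ v ∈ L, v = u)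
    (hH : (H.erase u).Nonempty) (hdeg : ∀ v ∈ H, v ∉ L → Fintype.card W ≤ #(nbrsIn G H v)) :
    ∃ f : T.Copy G, ∀ t, f t ∈ H.erase u :=
  exists_copy_of_card_le_nbrsIn hT hH fun x hx =>
    (hdeg x (mem_of_mem_erase hx) fun hxL => ne_of_mem_erase hx (hL x hxL)).trans
      (card_nbrsIn_le_erase H x u)

theorem exists_copy_avoiding (hT : T.IsTree) (hLne : L.Nonempty)
    (hcard : Fintype.card W < #H)
    (hdeg : ∀ v ∈ H, v ∉ L → Fintype.card W ≤ #(nbrsIn G H v))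
    {f : T.Copy G} (hf : ∀ t, f t ∈ H) :
    ∃ u ∈ L, ∃ f' : T.Copy G, ∀ t, f' t ∈ H.erase u := by
  obtain ⟨u, hu⟩ := hLne
  by_cases hcover : ∀ v ∈ L, v ∈ Set.range f
  swap
  · push Not at hcover
    obtain ⟨v, hvL, hvf⟩ := hcover
    exact ⟨v, hvL, f, fun t => mem_erase.2 ⟨fun h => hvf ⟨t, h⟩, hf t⟩⟩
  obtain ⟨p, d, hdH, hdf, hadj⟩ | ⟨f', hf'⟩ := exists_adj_free_or_exists_copy_sdiff hT f hcard
    fun v hvH hvf => hdeg v hvH (mt (hcover v) hvf)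
  swap
  · obtain ⟨s, rfl⟩ := hcover u hu
    exact ⟨_, hu, f', fun t => mem_erase.2 ⟨fun h => (mem_sdiff.1 (hf' t)).2
      (h ▸ mem_image_of_mem f (mem_univ s)), (mem_sdiff.1 (hf' t)).1⟩⟩
  by_cases hL : ∀ v ∈ L, v = u
  · exact ⟨u, hu, exists_copy_avoiding_of_subset_singleton hT hL
      ⟨d, mem_erase.2 ⟨fun h => hdf (h ▸ hcover u hu), hdH⟩⟩ hdeg⟩
  obtain ⟨t, htp, htL⟩ : ∃ t ≠ p, f t ∈ L := by
    by_contra! honly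
    have hfp : ∀ v ∈ L, v = f p := fun v hv => by
      obtain ⟨t, rfl⟩ := hcover v hv
      by_contra hne
      exact honly t (fun h => hne (h ▸ rfl)) hv
    exact hL fun v hv => (hfp v hv).trans (hfp u hu).symm
  obtain ⟨ρ, rfl⟩ := exists_rooting hT p
  obtain ⟨q, hq, hqp, htq⟩ :=
    Rooting.exists_child_of_mem_descendants (ρ.mem_descendants_root t) htp
  have hmov : ρ.IsMovable H L f q := ⟨hf, hcover, hq, ⟨d, hdH, hdf, hqp ▸ hadj⟩, t, htq, htL⟩
  exact hmov.exists_copy_avoiding hdeg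

end Exchange

/-! ### Linkage inside a vertex set -/

section Linkage

variable {V : Type*} {G : SimpleGraph V} {B B' Y : Finset V} {a b c u v : V}

/-- `a` and `b` are joined by a walk of `G` inside `B`. -/
def Linked (G : SimpleGraph V) (B : Finset V) (a b : V) : Prop :=
  ∃ p : G.Walk a b, ∀ v ∈ p.support, v ∈ B

namespace Linked

lemma refl (ha : a ∈ B) : Linked G B a a := ⟨.nil, by simpa using ha⟩

lemma symm (h : Linked G B a b) : Linked G B b a := by
  obtain ⟨p, hp⟩ := h
  exact ⟨p.reverse, by simpa using hp⟩

lemma trans (hab : Linked G B a b) (hbc : Linked G B b c) : Linked G B a c := by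
  obtain ⟨p, hp⟩ := hab
  obtain ⟨q, hq⟩ := hbc
  exact ⟨p.append q, fun v hv => (SimpleGraph.Walk.mem_support_append_iff ..).1 hv |>.elim
    (hp v) (hq v)⟩

lemma mono (h : Linked G B a b) (hB : B ⊆ B') : Linked G B' a b := by
  obtain ⟨p, hp⟩ := h
  exact ⟨p, fun v hv => hB (hp v hv)⟩

lemma left_mem (h : Linked G B a b) : a ∈ B := by
  obtain ⟨p, hp⟩ := h
  exact hp a p.start_mem_support

lemma right_mem (h : Linked G B a b) : b ∈ B := h.symm.left_mem

lemma of_adj (h : G.Adj a b) (ha : a ∈ B) (hb : b ∈ B) : Linked G B a b :=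
  ⟨h.toWalk, by simp [SimpleGraph.Adj.toWalk, ha, hb]⟩

lemma trans_adj (h : Linked G B a b) (hbc : G.Adj b c) (hc : c ∈ B) : Linked G B a c :=
  h.trans (of_adj hbc h.right_mem hc)

lemma propagate {P : V → Prop} (h : Linked G B a b) (ha : P a)
    (hstep : ∀ u v, Linked G B a u → v ∈ B → G.Adj u v → P u → P v) : P b := by
  obtain ⟨p, hp⟩ := h
  suffices hall : ∀ {u b} (p : G.Walk u b), (∀ v ∈ p.support, v ∈ B) → Linked G B a u → P u → P b
    from hall p hp (refl (hp a p.start_mem_support)) ha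
  intro u b p hp hau hu
  induction p with
  | nil => exact hu
  | cons hadj p ih =>
    simp only [SimpleGraph.Walk.support_cons, List.forall_mem_cons] at hp
    have hv := hp.2 _ p.start_mem_support
    exact ih hp.2 (hau.trans_adj hadj hv) (hstep _ _ hau hv hadj hu)

end Linked

/-- The component of `a` in the subgraph induced on `B`. -/
def component (G : SimpleGraph V) (B : Finset V) (a : V) : Finset V := {v ∈ B | Linked G B a v}

lemma mem_component : v ∈ component G B a ↔ Linked G B a v := by
  rw [component, mem_filter, and_iff_right_iff_imp]
  exact Linked.right_mem

/-- The vertices of `B` outside `Y` with a neighbour in `Y`. -/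
def boundary (G : SimpleGraph V) (B Y : Finset V) : Finset V := {v ∈ B \ Y | ∃ y ∈ Y, G.Adj y v}

lemma mem_boundary : v ∈ boundary G B Y ↔ (v ∈ B ∧ v ∉ Y) ∧ ∃ y ∈ Y, G.Adj y v := by
  rw [boundary, mem_filter, mem_sdiff]

end Linkage

/-! ### Inseparable cores -/

section Core

variable {V : Type*} {G : SimpleGraph V} {B C X Y Y' : Finset V} {a c c' m v : V}

/-- No two vertices of `C` can be separated in the subgraph induced on `B` by deleting at most two
other vertices. -/
def InseparableIn (G : SimpleGraph V) (B C : Finset V) : Prop :=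
  ∀ X : Finset V, #X ≤ 2 → ∀ c ∈ C, c ∉ X → ∀ c' ∈ C, c' ∉ X → Linked G (B \ X) c c'

/-- A nonempty part of `B` attached to the rest of `B` in at most two vertices, which are linked to
each other outside the part. -/
structure IsFragment (G : SimpleGraph V) (B Y : Finset V) : Prop where
  nonempty : Y.Nonempty
  subset : Y ⊆ B
  card_boundary_le : #(boundary G B Y) ≤ 2
  linked : ∀ a ∈ boundary G B Y, ∀ b ∈ boundary G B Y, Linked G (B \ Y) a b

lemma isFragment_of_card_boundary_le_one (hne : Y.Nonempty) (hYB : Y ⊆ B)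
    (hcard : #(boundary G B Y) ≤ 1) : IsFragment G B Y where
  nonempty := hne
  subset := hYB
  card_boundary_le := hcard.trans one_le_two
  linked a ha b hb := by
    obtain rfl := card_le_one.1 hcard a ha b hb
    exact .refl (mem_sdiff.2 (mem_boundary.1 ha).1)

lemma IsFragment.four_le_card (hY : IsFragment G B Y) (hdeg : ∀ v ∈ B, 3 ≤ #(nbrsIn G B v)) :
    4 ≤ #(Y ∪ boundary G B Y) := by
  obtain ⟨v, hv⟩ := hY.nonempty
  have hlt := card_nbrsIn_lt (G := G) (mem_union_left (boundary G B Y) hv)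
  have hle : #(nbrsIn G B v) ≤ #(nbrsIn G (Y ∪ boundary G B Y) v) := card_le_card fun w hw => by
    obtain ⟨hwB, hvw⟩ := mem_nbrsIn.1 hw
    simp only [mem_nbrsIn, mem_union, mem_boundary]
    exact ⟨or_iff_not_imp_left.2 fun hwY => ⟨⟨hwB, hwY⟩, v, hv, hvw⟩, hvw⟩
  have := hdeg v (hY.subset hv)
  lia

lemma boundary_erase_subset : boundary G B (Y.erase v) ⊆ insert v (boundary G B Y) := fun w hw => by
  obtain ⟨⟨hwB, hwY⟩, y, hy, hyw⟩ := mem_boundary.1 hw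
  rw [mem_insert, mem_boundary]
  rw [mem_erase] at hwY
  have := mem_of_mem_erase hy
  tauto

lemma IsFragment.exists_card_lt (hY : IsFragment G B Y) (hdeg : ∀ v ∈ B, 3 ≤ #(nbrsIn G B v))
    (hcard : #(boundary G B Y) ≤ 1) : ∃ Y', IsFragment G B Y' ∧ #Y' < #Y := by
  obtain ⟨v, hvY, hv⟩ : ∃ v ∈ Y, ∀ a ∈ boundary G B Y, G.Adj v a := by
    rcases (boundary G B Y).eq_empty_or_nonempty with hempty | ⟨a, ha⟩
    · obtain ⟨v, hv⟩ := hY.nonempty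
      exact ⟨v, hv, by simp [hempty]⟩
    · obtain ⟨-, v, hv, hva⟩ := mem_boundary.1 ha
      exact ⟨v, hv, fun b hb => card_le_one.1 hcard a ha b hb ▸ hva⟩
  have herase := card_erase_add_one hvY
  have hunion := card_union_le Y (boundary G B Y)
  have hfour := hY.four_le_card hdeg
  have hv_mem : v ∈ B \ Y.erase v := by simp [hY.subset hvY]
  have linked_v : ∀ a ∈ boundary G B (Y.erase v), Linked G (B \ Y.erase v) v a := fun a ha => by
    rcases mem_insert.1 (boundary_erase_subset ha) with rfl | ha'
    exacts [.refl hv_mem, .of_adj (hv a ha') hv_mem (mem_sdiff.2 (mem_boundary.1 ha).1)]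
  refine ⟨Y.erase v, ⟨card_pos.1 (by lia), (erase_subset _ _).trans hY.subset, ?_, ?_⟩, by lia⟩
  · have := (card_le_card boundary_erase_subset).trans (card_insert_le v (boundary G B Y))
    lia
  · exact fun a ha b hb => (linked_v a ha).symm.trans (linked_v b hb)

/-- A fragment of least size. -/
structure IsMinFragment (G : SimpleGraph V) (B Y : Finset V) : Prop extends IsFragment G B Y where
  min : ∀ Y', IsFragment G B Y' → #Y ≤ #Y'

lemma exists_isMinFragment (hB : B.Nonempty) : ∃ Y, IsMinFragment G B Y := by
  have hBfrag : IsFragment G B B := isFragment_of_card_boundary_le_one hB Subset.rfl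
    (by simp [boundary])
  obtain ⟨Y, hY, hmin⟩ := exists_min_image {Y ∈ B.powerset | IsFragment G B Y} card
    ⟨B, by simp [hBfrag]⟩
  exact ⟨Y, (mem_filter.1 hY).2, fun Y' hY' => hmin Y' (by simp [hY'.subset, hY'])⟩

namespace IsMinFragment

lemma card_boundary (hY : IsMinFragment G B Y) (hdeg : ∀ v ∈ B, 3 ≤ #(nbrsIn G B v)) :
    #(boundary G B Y) = 2 := by
  refine hY.card_boundary_le.antisymm ?_
  by_contra! hlt
  obtain ⟨Y', hY', hcard⟩ := hY.exists_card_lt hdeg (by lia)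
  exact (hY.min Y' hY').not_gt hcard

/- Otherwise the component lies inside `Y`, and adding it to `Y'` gives a fragment in `Y` with at
most one attachment. -/
lemma exists_linked_boundary (hY : IsMinFragment G B Y) (hdeg : ∀ v ∈ B, 3 ≤ #(nbrsIn G B v))
    (hne : Y'.Nonempty) (hY' : Y' ⊆ Y) (hcard : #(boundary G B Y') ≤ 2)
    (hm : m ∈ boundary G B Y') : ∃ n ∈ boundary G B Y, Linked G (B \ Y') m n := by
  by_contra! hno
  set M := component G (B \ Y') m
  have step_mem : ∀ u ∈ Y, ∀ v, G.Adj u v → Linked G (B \ Y') m v → v ∈ Y := by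
    intro u hu v huv hv
    by_contra hvY
    exact hno v (mem_boundary.2 ⟨⟨(mem_sdiff.1 hv.right_mem).1, hvY⟩, u, hu, huv⟩) hv
  obtain ⟨hmB, y, hy, hym⟩ := mem_boundary.1 hm
  have hm_self : Linked G (B \ Y') m m := .refl (mem_sdiff.2 hmB)
  have hMY : Y' ∪ M ⊆ Y := union_subset hY' fun v hv => (mem_component.1 hv).propagate
    (step_mem y (hY' hy) m hym hm_self)
    fun u v hu hv huv huY => step_mem u huY v huv (hu.trans_adj huv hv)
  have hboundary : boundary G B (Y' ∪ M) ⊆ (boundary G B Y').erase m := fun v hv => by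
    obtain ⟨⟨hvB, hvYM⟩, u, hu, huv⟩ := mem_boundary.1 hv
    rw [mem_union, not_or] at hvYM
    refine mem_erase.2 ⟨fun h => hvYM.2 (h ▸ mem_component.2 hm_self),
      mem_boundary.2 ⟨⟨hvB, hvYM.1⟩, u, ?_, huv⟩⟩
    refine (mem_union.1 hu).resolve_right fun huM => hvYM.2 (mem_component.2 ?_)
    exact (mem_component.1 huM).trans_adj huv (mem_sdiff.2 ⟨hvB, hvYM.1⟩)
  have hone : #(boundary G B (Y' ∪ M)) ≤ 1 := by
    have := card_le_card hboundary
    have := card_erase_add_one hm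
    lia
  obtain ⟨Z, hZ, hlt⟩ := (isFragment_of_card_boundary_le_one (hne.mono subset_union_left)
    (hMY.trans hY.subset) hone).exists_card_lt hdeg hone
  exact (hY.min Z hZ).not_gt (hlt.trans_le (card_le_card hMY))

lemma three_le_card_boundary (hY : IsMinFragment G B Y) (hdeg : ∀ v ∈ B, 3 ≤ #(nbrsIn G B v))
    (hne : Y'.Nonempty) (hY' : Y' ⊂ Y) : 3 ≤ #(boundary G B Y') := by
  by_contra! hlt
  have hcard : #(boundary G B Y') ≤ 2 := by lia
  refine (hY.min Y' ⟨hne, hY'.subset.trans hY.subset, hcard, fun a ha b hb => ?_⟩).not_gt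
    (card_lt_card hY')
  obtain ⟨n, hn, han⟩ := hY.exists_linked_boundary hdeg hne hY'.subset hcard ha
  obtain ⟨n', hn', hbn'⟩ := hY.exists_linked_boundary hdeg hne hY'.subset hcard hb
  exact han.trans (((hY.linked n hn n' hn').mono (sdiff_subset_sdiff Subset.rfl hY'.subset)).trans
    hbn'.symm)

lemma linked_boundary_of_subset (hY : IsMinFragment G B Y) (hX : X ⊆ Y) (ha : a ∈ boundary G B Y)
    (hc : c ∈ boundary G B Y) : Linked G (B \ X) a c :=
  (hY.linked a ha c hc).mono (sdiff_subset_sdiff Subset.rfl hX)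

lemma three_le_card_of_not_linked (hY : IsMinFragment G B Y)
    (hdeg : ∀ v ∈ B, 3 ≤ #(nbrsIn G B v)) (hc : c ∈ Y \ X) (hc' : c' ∈ Y)
    (hno : ¬ Linked G (B \ X) c c') :
    3 ≤ #(boundary G B Y ∩ component G (B \ X) c) + (#(boundary G B Y ∩ X) + #(X ∩ Y)) := by
  have hcc : c ∈ component G (B \ X) c :=
    mem_component.2 (.refl (sdiff_subset_sdiff hY.subset Subset.rfl hc))
  refine (hY.three_le_card_boundary hdeg (Y' := Y ∩ component G (B \ X) c)
    ⟨c, mem_inter.2 ⟨(mem_sdiff.1 hc).1, hcc⟩⟩ ((ssubset_iff_of_subset inter_subset_left).2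
      ⟨c', hc', fun h => hno (mem_component.1 (mem_inter.1 h).2)⟩)).trans ?_
  refine (card_le_card fun v hv => ?_).trans ((card_union_le _ _).trans
    (Nat.add_le_add_left (card_union_le _ _) _))
  obtain ⟨⟨hvB, hvY⟩, u, hu, huv⟩ := mem_boundary.1 hv
  obtain ⟨huY, hua⟩ := mem_inter.1 hu
  have hcomp : v ∉ X → v ∈ component G (B \ X) c := fun hvX =>
    mem_component.2 ((mem_component.1 hua).trans_adj huv (mem_sdiff.2 ⟨hvB, hvX⟩))
  have hbdry : v ∉ Y → v ∈ boundary G B Y := fun hvY => mem_boundary.2 ⟨⟨hvB, hvY⟩, u, huY, huv⟩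
  simp only [mem_union, mem_inter] at hvY ⊢
  tauto

lemma linked_of_mem (hY : IsMinFragment G B Y) (hdeg : ∀ v ∈ B, 3 ≤ #(nbrsIn G B v))
    (hX : #X ≤ 2) (hc : c ∈ Y \ X) (hc' : c' ∈ Y \ X) : Linked G (B \ X) c c' := by
  by_contra hno
  have h3 := hY.three_le_card_of_not_linked hdeg hc (mem_sdiff.1 hc').1 hno
  have h3' := hY.three_le_card_of_not_linked hdeg hc' (mem_sdiff.1 hc).1 fun h => hno h.symm
  set N := boundary G B Y
  have hdisj : Disjoint (component G (B \ X) c) (component G (B \ X) c') :=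
    disjoint_left.2 fun v hv hv' => hno ((mem_component.1 hv).trans (mem_component.1 hv').symm)
  have hNX : #(N ∩ X) + #(X ∩ Y) ≤ #X := by
    rw [← card_union_of_disjoint]
    · exact card_le_card (union_subset inter_subset_right inter_subset_left)
    · exact disjoint_left.2 fun v hv hv' =>
        (mem_boundary.1 (mem_inter.1 hv).1).1.2 (mem_inter.1 hv').2
  have hNK : #(N ∩ component G (B \ X) c) + #(N ∩ component G (B \ X) c') + #(N ∩ X) ≤ #N := by
    rw [← card_union_of_disjoint (hdisj.mono inter_subset_right inter_subset_right),
      ← card_union_of_disjoint]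
    · exact card_le_card (by simp [union_subset_iff])
    · refine disjoint_right.2 fun v hv hv' => ?_
      simp only [mem_inter, mem_union, mem_component] at hv hv'
      rcases hv' with h | h <;> exact (mem_sdiff.1 h.2.right_mem).2 hv.2
  have hN2 := hY.card_boundary hdeg
  have hXY : X ⊆ Y := inter_eq_left.1 (eq_of_subset_of_card_le inter_subset_left (by lia))
  obtain ⟨n, hn⟩ : (N ∩ component G (B \ X) c).Nonempty := card_pos.1 (by lia)
  obtain ⟨n', hn'⟩ : (N ∩ component G (B \ X) c').Nonempty := card_pos.1 (by lia)
  simp only [mem_inter, mem_component] at hn hn'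
  exact hno (hn.2.trans ((hY.linked_boundary_of_subset hXY hn.1 hn'.1).trans hn'.2.symm))

lemma subset_of_not_linked (hY : IsMinFragment G B Y) (hdeg : ∀ v ∈ B, 3 ≤ #(nbrsIn G B v))
    (hX : #X ≤ 2) (hc : c ∈ boundary G B Y) (hcX : c ∉ X)
    (hno : ∀ y ∈ Y \ X, ¬ Linked G (B \ X) c y) : Y ⊆ X := by
  by_contra hsub
  obtain ⟨⟨hcB, -⟩, y, hy, hyc⟩ := mem_boundary.1 hc
  have not_adj {u a : V} (hu : u ∈ Y \ X) (ha : Linked G (B \ X) c a) : ¬ G.Adj u a := fun hadj =>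
    hno u hu (ha.trans_adj hadj.symm (sdiff_subset_sdiff hY.subset Subset.rfl hu))
  have hcc : Linked G (B \ X) c c := .refl (mem_sdiff.2 ⟨hcB, hcX⟩)
  have hyX : y ∈ X := by
    by_contra hyX
    exact not_adj (mem_sdiff.2 ⟨hy, hyX⟩) hcc hyc
  have three_le := hY.three_le_card_boundary hdeg (sdiff_nonempty.2 hsub)
    ((ssubset_iff_of_subset sdiff_subset).2 ⟨y, hy, fun h => (mem_sdiff.1 h).2 hyX⟩)
  have hbdry : boundary G B (Y \ X) ⊆ (X ∩ Y) ∪ {a ∈ boundary G B Y | ¬ Linked G (B \ X) c a} := by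
    intro v hv
    obtain ⟨⟨hvB, hvY⟩, u, hu, huv⟩ := mem_boundary.1 hv
    have hlink : ¬ Linked G (B \ X) c v := fun h => not_adj hu h huv
    have hmem : v ∉ Y → v ∈ boundary G B Y := fun hvY =>
      mem_boundary.2 ⟨⟨hvB, hvY⟩, u, (mem_sdiff.1 hu).1, huv⟩
    simp only [mem_sdiff, mem_union, mem_inter, mem_filter] at hvY ⊢
    tauto
  have hle := (card_le_card hbdry).trans (card_union_le _ _)
  have hlt : #{a ∈ boundary G B Y | ¬ Linked G (B \ X) c a} < #(boundary G B Y) :=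
    card_lt_card (filter_ssubset.2 ⟨c, hc, not_not.2 hcc⟩)
  have hN2 := hY.card_boundary hdeg
  have hXY : X ⊆ Y := inter_eq_left.1 (eq_of_subset_of_card_le inter_subset_left (by lia))
  have hempty : {a ∈ boundary G B Y | ¬ Linked G (B \ X) c a} = ∅ :=
    filter_eq_empty_iff.2 fun a ha => not_not.2 (hY.linked_boundary_of_subset hXY hc ha)
  have := card_le_card (inter_subset_left : X ∩ Y ⊆ X)
  rw [hempty, card_empty] at hle
  lia

lemma inseparable (hY : IsMinFragment G B Y) (hdeg : ∀ v ∈ B, 3 ≤ #(nbrsIn G B v)) :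
    InseparableIn G B (Y ∪ boundary G B Y) := by
  intro X hX
  by_cases hYX : Y ⊆ X
  · have hfour := (hY.four_le_card hdeg).trans (card_union_le _ _)
    have hN2 := hY.card_boundary hdeg
    obtain rfl : Y = X := eq_of_subset_of_card_le hYX (by lia)
    intro c hc hcX c' hc' hcX'
    exact hY.linked c ((mem_union.1 hc).resolve_left hcX) c' ((mem_union.1 hc').resolve_left hcX')
  · have to_Y {c : V} (hc : c ∈ Y ∪ boundary G B Y) (hcX : c ∉ X) :
        ∃ y ∈ Y \ X, Linked G (B \ X) c y := by
      rcases mem_union.1 hc with hc | hc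
      · exact ⟨c, mem_sdiff.2 ⟨hc, hcX⟩, .refl (mem_sdiff.2 ⟨hY.subset hc, hcX⟩)⟩
      · by_contra! hno
        exact hYX (hY.subset_of_not_linked hdeg hX hc hcX hno)
    intro c hc hcX c' hc' hcX'
    obtain ⟨y, hy, hcy⟩ := to_Y hc hcX
    obtain ⟨y', hy', hcy'⟩ := to_Y hc' hcX'
    exact hcy.trans ((hY.linked_of_mem hdeg hX hy hy').trans hcy'.symm)

end IsMinFragment

theorem exists_inseparable (hB : B.Nonempty) (hdeg : ∀ v ∈ B, 3 ≤ #(nbrsIn G B v)) :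
    ∃ C ⊆ B, 4 ≤ #C ∧ InseparableIn G B C := by
  obtain ⟨Y, hY⟩ := exists_isMinFragment (G := G) hB
  refine ⟨Y ∪ boundary G B Y, union_subset hY.subset fun v hv => (mem_boundary.1 hv).1.1,
    hY.four_le_card hdeg, hY.inseparable hdeg⟩

end Core

/-! ### Fans and rerouting -/

section Rerouting

variable {V : Type*} {G : SimpleGraph V} {B B' C D X Y Z Z' : Finset V} {a c c' s v x y : V}

lemma Linked.exists_adj_of_insert (h : Linked G (insert c Y) s c) (hs : s ∈ Y) (hc : c ∉ Y) :
    ∃ y, Linked G Y s y ∧ G.Adj y c := by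
  by_contra! hno
  refine hc (h.propagate (P := Linked G Y s) (.refl hs) fun u v _ hv huv hu => ?_).right_mem
  refine hu.trans_adj huv ((mem_insert.1 hv).resolve_left ?_)
  rintro rfl
  exact hno u hu huv

lemma eq_of_mem_support_of_minimal {z y₁ y₂ y₃ : V} {p₁ : G.Walk z y₁} {p₂ : G.Walk z y₂}
    {p₃ : G.Walk z y₃} (h₁ : ∀ v ∈ p₁.support, v ∈ Y) (h₂ : ∀ v ∈ p₂.support, v ∈ Y)
    (h₃ : ∀ v ∈ p₃.support, v ∈ Y)
    (hmin : ∀ (z' : V) (q₁ : G.Walk z' y₁) (q₂ : G.Walk z' y₂) (q₃ : G.Walk z' y₃),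
      (∀ v ∈ q₁.support, v ∈ Y) → (∀ v ∈ q₂.support, v ∈ Y) → (∀ v ∈ q₃.support, v ∈ Y) →
      p₁.length + p₂.length + p₃.length ≤ q₁.length + q₂.length + q₃.length)
    (hv₁ : v ∈ p₁.support) (hv₂ : v ∈ p₂.support) : v = z := by
  have hle := hmin v (p₁.dropUntil v hv₁) (p₂.dropUntil v hv₂)
    ((p₁.takeUntil v hv₁).reverse.append p₃)
    (fun w hw => h₁ w (p₁.support_dropUntil_subset_support hv₁ hw))
    (fun w hw => h₂ w (p₂.support_dropUntil_subset_support hv₂ hw))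
    (fun w hw => by
      rcases (SimpleGraph.Walk.mem_support_append_iff ..).1 hw with hw | hw
      · rw [SimpleGraph.Walk.support_reverse, List.mem_reverse] at hw
        exact h₁ w (p₁.support_takeUntil_subset_support hv₁ hw)
      · exact h₃ w hw)
  have hlen₁ := congrArg SimpleGraph.Walk.length (p₁.take_spec hv₁)
  have hlen₂ := congrArg SimpleGraph.Walk.length (p₂.take_spec hv₂)
  rw [SimpleGraph.Walk.length_append] at hlen₁ hlen₂
  rw [SimpleGraph.Walk.length_append, SimpleGraph.Walk.length_reverse] at hle
  exact (SimpleGraph.Walk.eq_of_length_eq_zero (p := p₂.takeUntil v hv₂) (by lia)).symm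

lemma exists_tripod {y₁ y₂ y₃ : V} (h₁ : Linked G Y s y₁) (h₂ : Linked G Y s y₂)
    (h₃ : Linked G Y s y₃) :
    ∃ z ∈ Y, ∃ (p₁ : G.Walk z y₁) (p₂ : G.Walk z y₂) (p₃ : G.Walk z y₃),
      ((∀ v ∈ p₁.support, v ∈ Y) ∧ (∀ v ∈ p₂.support, v ∈ Y) ∧ ∀ v ∈ p₃.support, v ∈ Y) ∧
      (∀ v ∈ p₁.support, v ∈ p₂.support → v = z) ∧ (∀ v ∈ p₁.support, v ∈ p₃.support → v = z) ∧
      ∀ v ∈ p₂.support, v ∈ p₃.support → v = z := by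
  have hex : ∃ n, ∃ (z : V) (p₁ : G.Walk z y₁) (p₂ : G.Walk z y₂) (p₃ : G.Walk z y₃),
      ((∀ v ∈ p₁.support, v ∈ Y) ∧ (∀ v ∈ p₂.support, v ∈ Y) ∧ ∀ v ∈ p₃.support, v ∈ Y) ∧
      p₁.length + p₂.length + p₃.length = n := by
    obtain ⟨p₁, h₁⟩ := h₁
    obtain ⟨p₂, h₂⟩ := h₂
    obtain ⟨p₃, h₃⟩ := h₃
    exact ⟨_, s, p₁, p₂, p₃, ⟨h₁, h₂, h₃⟩, rfl⟩
  obtain ⟨z, p₁, p₂, p₃, ⟨h₁, h₂, h₃⟩, hlen⟩ := Nat.find_spec hex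
  have hmin (z' : V) (q₁ : G.Walk z' y₁) (q₂ : G.Walk z' y₂) (q₃ : G.Walk z' y₃)
      (hq₁ : ∀ v ∈ q₁.support, v ∈ Y) (hq₂ : ∀ v ∈ q₂.support, v ∈ Y)
      (hq₃ : ∀ v ∈ q₃.support, v ∈ Y) :
      p₁.length + p₂.length + p₃.length ≤ q₁.length + q₂.length + q₃.length :=
    hlen ▸ Nat.find_min' hex ⟨z', q₁, q₂, q₃, ⟨hq₁, hq₂, hq₃⟩, rfl⟩
  refine ⟨z, h₁ z p₁.start_mem_support, p₁, p₂, p₃, ⟨h₁, h₂, h₃⟩, fun v => ?_, fun v => ?_,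
    fun v => ?_⟩
  · exact eq_of_mem_support_of_minimal h₁ h₂ h₃ hmin
  · refine eq_of_mem_support_of_minimal h₁ h₃ h₂ fun z' q₁ q₃ q₂ hq₁ hq₃ hq₂ => ?_
    have := hmin z' q₁ q₂ q₃ hq₁ hq₂ hq₃
    lia
  · refine eq_of_mem_support_of_minimal h₂ h₃ h₁ fun z' q₂ q₃ q₁ hq₂ hq₃ hq₁ => ?_
    have := hmin z' q₁ q₂ q₃ hq₁ hq₂ hq₃
    lia

lemma exists_fan_center (hs : s ∈ Y) (hD : 3 ≤ #D) (hDY : Disjoint D Y)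
    (hlink : ∀ c ∈ D, Linked G (insert c Y) s c) :
    ∃ z ∈ Y, ∀ X : Finset V, #X ≤ 2 → z ∉ X → ∃ c ∈ D, Linked G (insert c Y \ X) z c := by
  obtain ⟨D', hD'D, hD'⟩ := exists_subset_card_eq hD
  obtain ⟨c₁, c₂, c₃, h₁₂, h₁₃, h₂₃, rfl⟩ := card_eq_three.1 hD'
  simp only [insert_subset_iff, singleton_subset_iff] at hD'D
  obtain ⟨hc₁, hc₂, hc₃⟩ := hD'D
  have notMem_Y {c : V} (hc : c ∈ D) : c ∉ Y := disjoint_left.1 hDY hc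
  obtain ⟨y₁, hy₁, ha₁⟩ := (hlink c₁ hc₁).exists_adj_of_insert hs (notMem_Y hc₁)
  obtain ⟨y₂, hy₂, ha₂⟩ := (hlink c₂ hc₂).exists_adj_of_insert hs (notMem_Y hc₂)
  obtain ⟨y₃, hy₃, ha₃⟩ := (hlink c₃ hc₃).exists_adj_of_insert hs (notMem_Y hc₃)
  obtain ⟨z, hzY, p₁, p₂, p₃, ⟨hp₁, hp₂, hp₃⟩, hd₁₂, hd₁₃, hd₂₃⟩ := exists_tripod hy₁ hy₂ hy₃
  refine ⟨z, hzY, fun X hX hzX => ?_⟩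
  by_contra! hno
  have blocked {c y : V} (hc : c ∈ D) (p : G.Walk z y) (hp : ∀ v ∈ p.support, v ∈ Y)
      (hadj : G.Adj y c) : ∃ x ∈ X, x = c ∨ x ∈ p.support := by
    by_contra! hfree
    refine hno c hc (Linked.trans_adj ⟨p, fun v hv => mem_sdiff.2 ⟨mem_insert_of_mem (hp v hv),
      fun hvX => (hfree v hvX).2 hv⟩⟩ hadj (mem_sdiff.2 ⟨mem_insert_self _ _, fun hcX =>
      (hfree c hcX).1 rfl⟩))
  obtain ⟨x₁, hx₁, hm₁⟩ := blocked hc₁ p₁ hp₁ ha₁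
  obtain ⟨x₂, hx₂, hm₂⟩ := blocked hc₂ p₂ hp₂ ha₂
  obtain ⟨x₃, hx₃, hm₃⟩ := blocked hc₃ p₃ hp₃ ha₃
  have distinct {c c' x x' : V} {P P' : List V} (hcc' : c ≠ c') (hcD : c ∈ D) (hcD' : c' ∈ D)
      (hP : ∀ v ∈ P, v ∈ Y) (hP' : ∀ v ∈ P', v ∈ Y) (hd : ∀ v ∈ P, v ∈ P' → v = z)
      (hxX : x ∈ X) (hx : x = c ∨ x ∈ P) (hx' : x' = c' ∨ x' ∈ P') : x ≠ x' := by
    rintro rfl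
    rcases hx with rfl | hx <;> rcases hx' with rfl | hx'
    exacts [hcc' rfl, notMem_Y hcD (hP' _ hx'), notMem_Y hcD' (hP _ hx), hzX (hd x hx hx' ▸ hxX)]
  have hthree : #{x₁, x₂, x₃} = 3 := card_eq_three.2 ⟨x₁, x₂, x₃,
    distinct h₁₂ hc₁ hc₂ hp₁ hp₂ hd₁₂ hx₁ hm₁ hm₂, distinct h₁₃ hc₁ hc₃ hp₁ hp₃ hd₁₃ hx₁ hm₁ hm₃,
    distinct h₂₃ hc₂ hc₃ hp₂ hp₃ hd₂₃ hx₂ hm₂ hm₃, rfl⟩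
  have := card_le_card (show {x₁, x₂, x₃} ⊆ X by simp [insert_subset_iff, hx₁, hx₂, hx₃])
  lia

/- A walk through `Z` enters and leaves it through the boundary, whose vertices are linked
elsewhere. -/
lemma Linked.bypass (h : Linked G B a c) (ha : a ∉ Z) (hc : c ∉ Z) (hsub : B \ Z ⊆ B')
    (hlink : ∀ e ∈ boundary G B Z, ∀ e' ∈ boundary G B Z, Linked G B' e e') :
    Linked G B' a c := by
  suffices hP : (c ∉ Z → Linked G B' a c) ∧
      (c ∈ Z → ∀ e ∈ boundary G B Z, Linked G B' a e) from hP.1 hc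
  refine h.propagate (P := fun v => (v ∉ Z → Linked G B' a v) ∧
    (v ∈ Z → ∀ e ∈ boundary G B Z, Linked G B' a e)) ?_ fun u v hu hv huv hP => ?_
  · exact ⟨fun _ => .refl (hsub (mem_sdiff.2 ⟨h.left_mem, ha⟩)), fun haZ => absurd haZ ha⟩
  · by_cases huZ : u ∈ Z
    · exact ⟨fun hvZ => hP.2 huZ v (mem_boundary.2 ⟨⟨hv, hvZ⟩, u, huZ, huv⟩), fun _ => hP.2 huZ⟩
    · refine ⟨fun hvZ => (hP.1 huZ).trans_adj huv (hsub (mem_sdiff.2 ⟨hv, hvZ⟩)),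
        fun hvZ e he => (hP.1 huZ).trans (hlink u ?_ e he)⟩
      exact mem_boundary.2 ⟨⟨hu.right_mem, huZ⟩, v, hvZ, huv.symm⟩

lemma boundary_sdiff_subset : boundary G (B \ X) Z ⊆ boundary G B Z \ X := fun v hv => by
  simp only [mem_boundary, mem_sdiff] at hv ⊢
  tauto

namespace InseparableIn

lemma subset (h : InseparableIn G B C) : C ⊆ B := fun c hc =>
  (mem_sdiff.1 (h ∅ (by simp) c hc (by simp) c hc (by simp)).left_mem).1

lemma mono (h : InseparableIn G B C) (hB : B ⊆ B') : InseparableIn G B' C :=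
  fun X hX c hc hcX c' hc' hcX' =>
    (h X hX c hc hcX c' hc' hcX').mono (sdiff_subset_sdiff hB Subset.rfl)

lemma insert_of_fan (h : InseparableIn G B C)
    (hfan : ∀ X : Finset V, #X ≤ 2 → x ∉ X → ∃ c ∈ C, Linked G (B \ X) x c) :
    InseparableIn G B (insert x C) := by
  intro X hX c hc hcX c' hc' hcX'
  have to_C : ∀ d ∈ insert x C, d ∉ X → ∃ e ∈ C, Linked G (B \ X) d e := by
    intro d hd hdX
    rcases mem_insert.1 hd with rfl | hd
    exacts [hfan X hX hdX, ⟨d, hd, h X hX d hd hdX d hd hdX⟩]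
  obtain ⟨e, he, hce⟩ := to_C c hc hcX
  obtain ⟨e', he', hce'⟩ := to_C c' hc' hcX'
  have hee' := h X hX e he (mem_sdiff.1 hce.right_mem).2 e' he' (mem_sdiff.1 hce'.right_mem).2
  exact (hce.trans hee').trans hce'.symm

lemma sdiff_of_card_boundary_le_one (h : InseparableIn G B C) (hZC : Disjoint Z C)
    (hZ : #(boundary G B Z) ≤ 1) : InseparableIn G (B \ Z) C := by
  intro X hX c hc hcX c' hc' hcX'
  refine (h X hX c hc hcX c' hc' hcX').bypass (disjoint_right.1 hZC hc) (disjoint_right.1 hZC hc')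
    (sdiff_right_comm B X Z).subset fun e he e' he' => ?_
  obtain rfl := card_le_one.1 hZ e (mem_sdiff.1 (boundary_sdiff_subset he)).1 e'
    (mem_sdiff.1 (boundary_sdiff_subset he')).1
  exact .refl ((sdiff_right_comm B X Z).subset (mem_sdiff.2 (mem_boundary.1 he).1))

lemma linked_of_boundary_subset_pair (h : InseparableIn G B C) (hZC : Disjoint Z C)
    (hZ : boundary G B Z ⊆ {x, y}) (hX : #X ≤ 2) (hsub : (B \ X) \ Z ⊆ B')
    (hor : x ∈ X ∨ y ∈ X ∨ Linked G B' x y) (hc : c ∈ C) (hcX : c ∉ X) (hc' : c' ∈ C)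
    (hcX' : c' ∉ X) : Linked G B' c c' := by
  refine (h X hX c hc hcX c' hc' hcX').bypass (disjoint_right.1 hZC hc) (disjoint_right.1 hZC hc')
    hsub fun e he e' he' => ?_
  have hself : Linked G B' e e := .refl (hsub (mem_sdiff.2 (mem_boundary.1 he).1))
  obtain ⟨heZ, heX⟩ := mem_sdiff.1 (boundary_sdiff_subset he)
  obtain ⟨heZ', heX'⟩ := mem_sdiff.1 (boundary_sdiff_subset he')
  have hexy := hZ heZ
  have hexy' := hZ heZ'
  simp only [mem_insert, mem_singleton] at hexy hexy'
  rcases hexy with rfl | rfl <;> rcases hexy' with rfl | rfl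
  · exact hself
  · tauto
  · exact (by tauto : Linked G B' e' e).symm
  · exact hself

lemma replace_strand (h : InseparableIn G B C) (hC : 4 ≤ #C) (hZC : Disjoint Z C) (hxy : x ≠ y)
    (hZ : boundary G B Z ⊆ {x, y}) (hZ' : Z' ∩ B ⊆ insert x (insert y Z))
    (hlink : Linked G Z' x y) : InseparableIn G ((B \ Z) ∪ Z') C := by
  intro X hX
  by_cases hor : x ∈ X ∨ y ∈ X ∨ Linked G (((B \ Z) ∪ Z') \ X) x y
  · refine fun c hc hcX c' hc' hcX' => h.linked_of_boundary_subset_pair hZC hZ hX (fun w hw => ?_)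
      hor hc hcX hc' hcX'
    simp only [mem_sdiff, mem_union] at hw ⊢
    tauto
  simp only [not_or] at hor
  obtain ⟨e, heX, heZ'⟩ : ∃ e ∈ X, e ∈ Z' := not_disjoint_iff.1 fun hdisj => hor.2.2 <|
    hlink.mono <| subset_sdiff.2 ⟨subset_union_right, hdisj.symm⟩
  have herase := card_erase_add_one heX
  -- Since `e` lies off `B \ Z`, it can be traded for one of the ends `x`, `y`.
  have trade {w c c' : V} (hw : w = x ∨ w = y) (hc : c ∈ C) (hcX : c ∉ insert w (X.erase e))
      (hc' : c' ∈ C) (hcX' : c' ∉ insert w (X.erase e)) :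
      Linked G (((B \ Z) ∪ Z') \ X) c c' := by
    refine h.linked_of_boundary_subset_pair hZC hZ ?_ (fun v hv => ?_) ?_ hc hcX hc' hcX'
    · exact (card_insert_le w (X.erase e)).trans (by lia)
    · have hvZ : v ∈ Z' → v ∈ B → v = x ∨ v = y ∨ v ∈ Z := fun h h' => by
        simpa using hZ' (mem_inter.2 ⟨h, h'⟩)
      simp only [mem_sdiff, mem_insert, mem_erase, mem_union] at hv ⊢
      refine ⟨by tauto, fun hvX => ?_⟩
      obtain rfl : v = e := by tauto
      rcases hvZ heZ' hv.1.1 with rfl | rfl | hvZ <;> tauto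
    · rcases hw with rfl | rfl <;> simp
  obtain ⟨d, hdC, hd⟩ : ∃ d ∈ C, d ∉ insert x (insert y (X.erase e)) :=
    exists_mem_notMem_of_card_lt_card (by
      have := card_insert_le x (insert y (X.erase e))
      have := card_insert_le y (X.erase e)
      lia)
  simp only [mem_insert, not_or] at hd
  have to_d {c : V} (hc : c ∈ C) (hcX : c ∉ X) : Linked G (((B \ Z) ∪ Z') \ X) c d := by
    by_cases hcx : c = x
    · exact trade (Or.inr rfl) hc (by simp [hcx, hxy, hor.1]) hdC (by simp [hd])
    · exact trade (Or.inl rfl) hc (by simp [hcX, hcx]) hdC (by simp [hd])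
  exact fun c hc hcX c' hc' hcX' => (to_d hc hcX).trans (to_d hc' hcX').symm

end InseparableIn

end Rerouting

/-! ### Connected vertex sets -/

section ConnectedSets

variable {V : Type*} {G : SimpleGraph V} {R S K : Finset V} {r t u v : V}

/-- `S` induces a connected subgraph, or is empty. -/
def ConnectedOn (G : SimpleGraph V) (S : Finset V) : Prop := ∀ s ∈ S, ∀ s' ∈ S, Linked G S s s'

lemma connectedOn_of_root (h : ∀ s ∈ S, Linked G S s r) : ConnectedOn G S :=
  fun s hs s' hs' => (h s hs).trans (h s' hs').symm

lemma connectedOn_singleton (v : V) : ConnectedOn G {v} :=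
  connectedOn_of_root (r := v) fun s hs => by
    rw [mem_singleton.1 hs]
    exact .refl (mem_singleton_self v)

lemma connectedOn_component (S : Finset V) (r : V) : ConnectedOn G (component G S r) :=
  connectedOn_of_root fun s hs => by
    rw [mem_component] at hs
    exact (hs.propagate (P := Linked G (component G S r) r)
      (.refl (mem_component.2 (.refl hs.left_mem)))
      fun u v hu hv huv h => h.trans_adj huv (mem_component.2 (hu.trans_adj huv hv))).symm

namespace ConnectedOn

lemma union_of_mem (hS : ConnectedOn G S) (hK : ConnectedOn G K) (hrS : r ∈ S) (hrK : r ∈ K) :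
    ConnectedOn G (S ∪ K) :=
  connectedOn_of_root fun s hs => (mem_union.1 hs).elim
    (fun hs => (hS s hs r hrS).mono subset_union_left)
    (fun hs => (hK s hs r hrK).mono subset_union_right)

lemma insert_of_adj (hS : ConnectedOn G S) (hu : u ∈ S) (hvu : G.Adj v u) :
    ConnectedOn G (insert v S) :=
  connectedOn_of_root (r := u) fun s hs => by
    obtain rfl | hs := mem_insert.1 hs
    · exact .of_adj hvu (mem_insert_self _ _) (mem_insert_of_mem hu)
    · exact (hS s hs u hu).mono (subset_insert _ _)

lemma exists_adj_of_ssubset (hS : ConnectedOn G S) (hK : K.Nonempty) (hKS : K ⊂ S) :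
    ∃ u ∈ K, ∃ w ∈ S, w ∉ K ∧ G.Adj u w := by
  obtain ⟨a, ha⟩ := hK
  obtain ⟨b, hb, hbK⟩ := exists_of_ssubset hKS
  by_contra! hno
  refine hbK ((hS a (hKS.subset ha) b hb).propagate (P := (· ∈ K)) ha fun u v _ hv huv hu => ?_)
  by_contra hvK
  exact hno u hu v hv hvK huv

lemma exists_connectedOn_erase (hS : ConnectedOn G S) (hcard : 2 ≤ #S) :
    ∃ v ∈ S, ConnectedOn G (S.erase v) ∧ (nbrsIn G (S.erase v) v).Nonempty := by
  obtain ⟨s, hs⟩ : S.Nonempty := card_pos.1 (by lia)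
  let F : Finset (Finset V) := {K ∈ S.ssubsets | ConnectedOn G K ∧ K.Nonempty}
  have hF {K : Finset V} : K ∈ F ↔ K ⊂ S ∧ ConnectedOn G K ∧ K.Nonempty := by
    rw [mem_filter, mem_ssubsets]
  have hsingle : {s} ∈ F := hF.2 ⟨(singleton_subset_iff.2 hs).ssubset_of_ne
    fun h => by rw [← h, card_singleton] at hcard; lia, connectedOn_singleton s, ⟨s, by simp⟩⟩
  obtain ⟨K, hK, hmax⟩ := F.exists_max_image card ⟨_, hsingle⟩
  obtain ⟨hKS, hKconn, hKne⟩ := hF.1 hK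
  obtain ⟨u, hu, w, hw, hwK, huw⟩ := hS.exists_adj_of_ssubset hKne hKS
  have heq : insert w K = S := by
    by_contra hne
    have := hmax _ (hF.2 ⟨(insert_subset hw hKS.subset).ssubset_of_ne hne,
      hKconn.insert_of_adj hu huw.symm, insert_nonempty _ _⟩)
    rw [card_insert_of_notMem hwK] at this
    lia
  refine ⟨w, hw, ?_⟩
  rw [← heq, erase_insert hwK]
  exact ⟨hKconn, u, mem_nbrsIn.2 ⟨hu, huw.symm⟩⟩

lemma exists_arm (hS : ConnectedOn G S) (hv : (nbrsIn G S v).Nonempty) (ht : t ∈ S) :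
    ∃ z ∈ nbrsIn G S v, ∃ K ⊆ insert z (S \ nbrsIn G S v), ConnectedOn G K ∧ t ∈ K ∧ z ∈ K := by
  suffices ∃ z ∈ nbrsIn G S v, Linked G (insert z (S \ nbrsIn G S v)) t z by
    obtain ⟨z, hz, htz⟩ := this
    exact ⟨z, hz, _, fun w hw => (mem_component.1 hw).right_mem, connectedOn_component _ t,
      mem_component.2 (.refl htz.left_mem), mem_component.2 htz⟩
  obtain ⟨w, hw⟩ := hv
  by_cases ht' : t ∈ nbrsIn G S v
  · exact ⟨t, ht', .refl (mem_insert_self _ _)⟩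
  by_contra! hno
  refine (mem_sdiff.1 ((hS t ht w (mem_nbrsIn.1 hw).1).propagate
    (P := Linked G (S \ nbrsIn G S v) t) (.refl (mem_sdiff.2 ⟨ht, ht'⟩))
    fun x y _ hy hxy hx => hx.trans_adj hxy (mem_sdiff.2 ⟨hy, fun hyv => ?_⟩)).right_mem).2 hw
  exact hno y hyv ((hx.mono (subset_insert _ _)).trans_adj hxy (mem_insert_self _ _))

lemma exists_connectedOn_cover (hS : ConnectedOn G S) (hv : (nbrsIn G S v).Nonempty)
    (hR : R ⊆ S) : ∃ K ⊆ insert v S, insert v R ⊆ K ∧ ConnectedOn G K ∧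
      #(K ∩ nbrsIn G S v) ≤ #R := by
  induction R using Finset.induction_on with
  | empty =>
    refine ⟨{v}, by simp, by simp, connectedOn_singleton v, ?_⟩
    rw [card_empty, Nat.le_zero, card_eq_zero, ← disjoint_iff_inter_eq_empty,
      disjoint_singleton_left]
    exact fun h => G.loopless.irrefl v (mem_nbrsIn.1 h).2
  | insert t R htR ih =>
    obtain ⟨htS, hRS⟩ := insert_subset_iff.1 hR
    obtain ⟨K, hKS, hRK, hK, hcard⟩ := ih hRS
    obtain ⟨z, hz, A, hAS, hA, htA, hzA⟩ := hS.exists_arm hv htS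
    have hvK := hRK (mem_insert_self _ _)
    have hAS' : A ⊆ S := hAS.trans (insert_subset (nbrsIn_subset hz) sdiff_subset)
    refine ⟨K ∪ insert v A, union_subset hKS (insert_subset_insert _ hAS'), ?_,
      hK.union_of_mem (hA.insert_of_adj hzA (mem_nbrsIn.1 hz).2) hvK (mem_insert_self _ _), ?_⟩
    · rw [insert_comm]
      exact insert_subset (by simp [htA]) (hRK.trans subset_union_left)
    · rw [card_insert_of_notMem htR]
      have hsub : (K ∪ insert v A) ∩ nbrsIn G S v ⊆ insert z (K ∩ nbrsIn G S v) := fun w hw => by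
        have := @hAS w
        simp only [mem_inter, mem_union, mem_insert, mem_sdiff] at hw this ⊢
        grind
      exact (card_le_card hsub).trans ((card_insert_le _ _).trans (Nat.succ_le_succ hcard))

end ConnectedOn

end ConnectedSets

/-! ### Optimal hosts and their attachments -/

section Attachments

variable {V : Type*} {G : SimpleGraph V} {E : Finset V → Prop} {B B' C S S' : Finset V}
  {b c s v w z : V}

/-- `C` is an inseparable core of the admissible vertex set `B`; admissibility is an abstract
property `E`, eventually that `G - B` contains the tree. -/
structure IsFeasible (G : SimpleGraph V) (E : Finset V → Prop) (B C : Finset V) : Prop where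
  four_le_card : 4 ≤ #C
  inseparable : InseparableIn G B C
  admissible : E B

/-- A feasible pair whose core `C` is as large as possible and, subject to that, whose host `B` is
as small as possible. -/
structure IsOptimal (G : SimpleGraph V) (E : Finset V → Prop) (B C : Finset V) : Prop
    extends IsFeasible G E B C where
  card_core_le : ∀ B' C', IsFeasible G E B' C' → #C' ≤ #C
  card_host_le : ∀ B' C', IsFeasible G E B' C' → #C' = #C → #B ≤ #B'

/-- The vertices of the core `C` that `b` reaches through `B` without meeting `C` earlier. -/
def attachments (G : SimpleGraph V) (B C : Finset V) (b : V) : Finset V :=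
  {c ∈ C | Linked G (insert c (B \ C)) b c}

lemma mem_attachments :
    c ∈ attachments G B C b ↔ c ∈ C ∧ Linked G (insert c (B \ C)) b c := by
  rw [attachments, mem_filter]

lemma attachments_of_mem (hb : b ∈ C) : attachments G B C b = {b} := by
  ext c
  rw [mem_attachments, mem_singleton]
  refine ⟨fun ⟨_, hbc⟩ => ?_, ?_⟩
  · have := hbc.left_mem
    simp only [mem_insert, mem_sdiff] at this
    tauto
  · rintro rfl
    exact ⟨hb, .refl (mem_insert_self _ _)⟩

lemma self_mem_attachments (hb : b ∈ C) : b ∈ attachments G B C b := by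
  rw [attachments_of_mem hb, mem_singleton]

lemma attachments_subset_of_adj (hb : b ∈ B \ C) (hbw : G.Adj b w) :
    attachments G B C w ⊆ attachments G B C b := fun c hc => by
  obtain ⟨hcC, hwc⟩ := mem_attachments.1 hc
  exact mem_attachments.2 ⟨hcC, (Linked.of_adj hbw (mem_insert_of_mem hb) hwc.left_mem).trans hwc⟩

lemma attachments_eq_of_linked (h : Linked G (B \ C) b w) :
    attachments G B C w = attachments G B C b :=
  h.propagate (P := fun w => attachments G B C w = attachments G B C b) rfl
    fun _ _ hu hv huv heq => heq ▸ Subset.antisymm (attachments_subset_of_adj hv huv.symm)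
      (attachments_subset_of_adj hu.right_mem huv) |>.symm

lemma boundary_component_subset_attachments :
    boundary G B (component G (B \ C) z) ⊆ attachments G B C z := fun w hw => by
  obtain ⟨⟨hwB, hw⟩, y, hy, hyw⟩ := mem_boundary.1 hw
  rw [mem_component] at hw hy
  have hwC : w ∈ C := by
    by_contra hwC
    exact hw (hy.trans_adj hyw (mem_sdiff.2 ⟨hwB, hwC⟩))
  rw [← attachments_eq_of_linked hy]
  exact attachments_subset_of_adj hy.right_mem hyw (self_mem_attachments hwC)

/-- The vertices of the core `C` to which `S` attaches through its neighbours in `B`. -/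
def contacts (G : SimpleGraph V) (B C S : Finset V) : Finset V :=
  S.biUnion fun s => (nbrsIn G B s).biUnion (attachments G B C)

lemma mem_contacts :
    c ∈ contacts G B C S ↔ ∃ s ∈ S, ∃ b ∈ nbrsIn G B s, c ∈ attachments G B C b := by
  simp only [contacts, mem_biUnion]

lemma mem_contacts_singleton :
    c ∈ contacts G B C {v} ↔ ∃ b ∈ nbrsIn G B v, c ∈ attachments G B C b := by
  simp only [mem_contacts, mem_singleton, exists_eq_left]

lemma contacts_mono (h : S ⊆ S') : contacts G B C S ⊆ contacts G B C S' :=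
  biUnion_subset_biUnion_of_subset_left _ h

lemma contacts_subset_core : contacts G B C S ⊆ C := fun c hc => by
  obtain ⟨_, _, _, _, hc⟩ := mem_contacts.1 hc
  exact (mem_attachments.1 hc).1

lemma attachments_subset_contacts (hb : b ∈ nbrsIn G B v) :
    attachments G B C b ⊆ contacts G B C {v} := fun _ hc => mem_contacts_singleton.2 ⟨b, hb, hc⟩

namespace IsOptimal

lemma card_attachments_le_two (hO : IsOptimal G E B C) (hBB' : B ⊆ B') (hB' : E B')
    (hs : s ∈ B' \ C) : #(attachments G B' C s) ≤ 2 := by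
  by_contra! hthree
  have hdisj : Disjoint (attachments G B' C s) (B' \ C) :=
    disjoint_sdiff.mono_left fun _ hc => (mem_attachments.1 hc).1
  obtain ⟨z, hz, hfan⟩ := exists_fan_center hs hthree hdisj fun c hc => (mem_attachments.1 hc).2
  have hcard := card_insert_of_notMem (mem_sdiff.1 hz).2
  have hinsep := hO.inseparable.mono hBB'
  have hgrow : InseparableIn G B' (insert z C) := hinsep.insert_of_fan fun X hX hzX => by
    obtain ⟨c, hc, hzc⟩ := hfan X hX hzX
    have hcC := (mem_attachments.1 hc).1
    exact ⟨c, hcC, hzc.mono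
      (sdiff_subset_sdiff (insert_subset (hinsep.subset hcC) sdiff_subset) Subset.rfl)⟩
  have := hO.card_core_le B' (insert z C) ⟨by have := hO.four_le_card; lia, hgrow, hB'⟩
  lia

lemma card_attachments (hO : IsOptimal G E B C) (hE : Antitone E) (hz : z ∈ B \ C) :
    #(attachments G B C z) = 2 := by
  refine (hO.card_attachments_le_two Subset.rfl hO.admissible hz).antisymm ?_
  by_contra! hlt
  have hdisj : Disjoint (component G (B \ C) z) C :=
    disjoint_left.2 fun w hw => (mem_sdiff.1 (mem_component.1 hw).right_mem).2
  have hinsep := hO.inseparable.sdiff_of_card_boundary_le_one hdisj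
    ((card_le_card boundary_component_subset_attachments).trans (Nat.le_of_lt_succ hlt))
  have hle := hO.card_host_le _ C ⟨hO.four_le_card, hinsep, hE sdiff_subset hO.admissible⟩ rfl
  have hssub : B \ component G (B \ C) z ⊂ B := sdiff_ssubset
    (fun w hw => (mem_sdiff.1 (mem_component.1 hw).right_mem).1) ⟨z, mem_component.2 (.refl hz)⟩
  exact (card_lt_card hssub).not_ge hle

lemma card_contacts_le_two (hO : IsOptimal G E B C) (hdisj : Disjoint S B) (hS : ConnectedOn G S)
    (hE : E (B ∪ S)) : #(contacts G B C S) ≤ 2 := by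
  obtain rfl | ⟨s, hs⟩ := S.eq_empty_or_nonempty
  · simp [contacts]
  have hSC {w : V} (hw : w ∈ S) : w ∈ (B ∪ S) \ C := mem_sdiff.2 ⟨mem_union_right _ hw,
    fun hwC => disjoint_left.1 hdisj hw (hO.inseparable.subset hwC)⟩
  refine (card_le_card fun c hc => ?_).trans
    (hO.card_attachments_le_two subset_union_left hE (hSC hs))
  obtain ⟨t, ht, b, hb, hcb⟩ := mem_contacts.1 hc
  obtain ⟨hcC, hbc⟩ := mem_attachments.1 hcb
  have hst : Linked G (insert c ((B ∪ S) \ C)) s t :=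
    (hS s hs t ht).mono fun w hw => mem_insert_of_mem (hSC hw)
  have hbc : Linked G (insert c ((B ∪ S) \ C)) b c :=
    hbc.mono (insert_subset_insert _ (sdiff_subset_sdiff subset_union_left Subset.rfl))
  exact mem_attachments.2
    ⟨hcC, (hst.trans_adj (mem_nbrsIn.1 hb).2 hbc.left_mem).trans hbc⟩

lemma card_contacts_singleton_le_two (hO : IsOptimal G E B C) (hv : v ∉ B) (hE : E (insert v B)) :
    #(contacts G B C {v}) ≤ 2 :=
  hO.card_contacts_le_two (disjoint_singleton_left.2 hv) (connectedOn_singleton v)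
    (by rwa [union_comm, ← insert_eq])

lemma card_nbrsIn_le_contacts (hO : IsOptimal G E B C) (hE : Antitone E)
    (h : #(nbrsIn G B v) ≤ 2) : #(nbrsIn G B v) ≤ #(contacts G B C {v}) := by
  by_cases hb : ∃ b ∈ nbrsIn G B v, b ∉ C
  · obtain ⟨b, hb, hbC⟩ := hb
    calc #(nbrsIn G B v) ≤ 2 := h
      _ = #(attachments G B C b) :=
        (hO.card_attachments hE (mem_sdiff.2 ⟨(mem_nbrsIn.1 hb).1, hbC⟩)).symm
      _ ≤ _ := card_le_card (attachments_subset_contacts hb)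
  · push Not at hb
    exact card_le_card fun b hbv =>
      attachments_subset_contacts hbv (self_mem_attachments (hb b hbv))

end IsOptimal

end Attachments

/-! ### Strands -/

section Strands

variable {V : Type*} {G : SimpleGraph V} {E : Finset V → Prop} {B C : Finset V} {u v w x y z : V}

/-- The vertices of `B` outside the core `C` that attach exactly to `x` and `y`. -/
def strand (G : SimpleGraph V) (B C : Finset V) (x y : V) : Finset V :=
  {z ∈ B \ C | attachments G B C z = {x, y}}

lemma mem_strand : z ∈ strand G B C x y ↔ z ∈ B \ C ∧ attachments G B C z = {x, y} := by
  rw [strand, mem_filter]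

lemma strand_subset : strand G B C x y ⊆ B := fun _ hz => (mem_sdiff.1 (mem_strand.1 hz).1).1

lemma disjoint_strand : Disjoint (strand G B C x y) C :=
  disjoint_left.2 fun _ hz => (mem_sdiff.1 (mem_strand.1 hz).1).2

lemma boundary_strand_subset : boundary G B (strand G B C x y) ⊆ {x, y} := fun w hw => by
  obtain ⟨⟨hwB, hwZ⟩, z, hz, hzw⟩ := mem_boundary.1 hw
  obtain ⟨hz, hatt⟩ := mem_strand.1 hz
  by_cases hwC : w ∈ C
  · exact hatt ▸ attachments_subset_of_adj hz hzw (self_mem_attachments hwC)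
  · have hw : w ∈ B \ C := mem_sdiff.2 ⟨hwB, hwC⟩
    exact absurd (mem_strand.2 ⟨hw, attachments_eq_of_linked (.of_adj hzw hz hw) ▸ hatt⟩) hwZ

/-- A walk between core vertices running once through all of their strand. -/
structure IsStrandPath (G : SimpleGraph V) (B C : Finset V) {x y : V} (p : G.Walk x y) :
    Prop where
  left_mem : x ∈ C
  right_mem : y ∈ C
  ne : x ≠ y
  mem_support : ∀ v, v ∈ p.support ↔ v = x ∨ v = y ∨ v ∈ strand G B C x y
  length_eq : p.length = #(strand G B C x y) + 1

lemma exists_walk_detour (p : G.Walk x y) {i k : ℕ} (hi : i ≤ p.length)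
    (r : G.Walk (p.getVert i) (p.getVert k)) :
    ∃ q : G.Walk x y, q.length = i + r.length + (p.length - k) ∧
      (∀ v ∈ q.support, v ∈ p.support ∨ v ∈ r.support) ∧ ∀ v ∈ r.support, v ∈ q.support := by
  refine ⟨(p.take i).append (r.append (p.drop k)), ?_, fun v hv => ?_, fun v hv => ?_⟩
  · simp only [SimpleGraph.Walk.length_append, SimpleGraph.Walk.take_length,
      SimpleGraph.Walk.drop_length, min_eq_left hi]
    lia
  · simp only [SimpleGraph.Walk.mem_support_append_iff] at hv
    rcases hv with hv | hv | hv
    · rw [SimpleGraph.Walk.support_take] at hv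
      exact .inl (List.mem_of_mem_take hv)
    · exact .inr hv
    · rw [SimpleGraph.Walk.drop_support_eq_support_drop_min] at hv
      exact .inl (List.mem_of_mem_drop hv)
  · simp only [SimpleGraph.Walk.mem_support_append_iff]
    tauto

lemma linked_strand_of_mem_attachments {c : V} (hz : z ∈ strand G B C x y) (hx : x ∈ C)
    (hy : y ∈ C) (hc : c ∈ attachments G B C z) :
    Linked G (insert x (insert y (strand G B C x y))) z c := by
  obtain ⟨hcC, hzc⟩ := mem_attachments.1 hc
  have hsub : strand G B C x y ⊆ insert x (insert y (strand G B C x y)) :=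
    (subset_insert _ _).trans (subset_insert _ _)
  have hmem (u v : V) (hu : u ∈ strand G B C x y) (hv : v ∈ B) (huv : G.Adj u v) :
      v = x ∨ v = y ∨ v ∈ strand G B C x y := by
    by_contra! hno
    have := boundary_strand_subset (mem_boundary.2 ⟨⟨hv, hno.2.2⟩, u, hu, huv⟩)
    simp only [mem_insert, mem_singleton] at this
    tauto
  have hcx : c = x ∨ c = y := by simpa [(mem_strand.1 hz).2] using hc
  obtain ⟨w, hzw, hwc⟩ :=
    hzc.exists_adj_of_insert (mem_strand.1 hz).1 fun h => (mem_sdiff.1 h).2 hcC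
  have hw := hzw.propagate (P := Linked G (strand G B C x y) z) (.refl hz)
    fun u v _ hv huv hu => hu.trans_adj huv <| by
      obtain ⟨hvB, hvC⟩ := mem_sdiff.1 hv
      rcases hmem u v hu.right_mem hvB huv with rfl | rfl | h
      exacts [absurd hx hvC, absurd hy hvC, h]
  exact (hw.mono hsub).trans_adj hwc (by rcases hcx with rfl | rfl <;> simp)

namespace IsOptimal

lemma reroute (hO : IsOptimal G E B C) (hE : Antitone E) (hxy : x ≠ y) (q : G.Walk x y)
    (hq : ∀ v ∈ q.support, v ∈ B → v = x ∨ v = y ∨ v ∈ strand G B C x y)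
    (hEq : E (B ∪ q.support.toFinset)) :
    IsFeasible G E ((B \ strand G B C x y) ∪ q.support.toFinset) C where
  four_le_card := hO.four_le_card
  inseparable := hO.inseparable.replace_strand hO.four_le_card disjoint_strand hxy
    boundary_strand_subset (fun v hv => by simpa using hq v (by simp_all) (by simp_all))
    ⟨q, fun v hv => List.mem_toFinset.2 hv⟩
  admissible := hE (union_subset_union_left sdiff_subset) hEq

lemma card_reroute_add_le (hO : IsOptimal G E B C) (hx : x ∈ C) (hy : y ∈ C) (hxy : x ≠ y)
    (q : G.Walk x y) :
    #((B \ strand G B C x y) ∪ q.support.toFinset) + #(strand G B C x y) + 1 ≤ #B + q.length := by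
  have hpair : {x, y} ⊆ (B \ strand G B C x y) ∩ q.support.toFinset := by
    have hmem {c : V} (hc : c ∈ C) : c ∈ B \ strand G B C x y :=
      mem_sdiff.2 ⟨hO.inseparable.subset hc, disjoint_right.1 disjoint_strand hc⟩
    simp [insert_subset_iff, -mem_sdiff, hmem hx, hmem hy]
  have hinter := card_le_card hpair
  have hunion := card_union_add_card_inter (B \ strand G B C x y) q.support.toFinset
  have hsdiff := card_sdiff_add_card_eq_card (strand_subset (G := G) (B := B) (C := C)
    (x := x) (y := y))
  have hsupp := q.support.toFinset_card_le
  rw [SimpleGraph.Walk.length_support] at hsupp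
  rw [card_pair hxy] at hinter
  lia

lemma card_strand_lt_length (hO : IsOptimal G E B C) (hE : Antitone E) (hx : x ∈ C) (hy : y ∈ C)
    (hxy : x ≠ y) (q : G.Walk x y)
    (hq : ∀ v ∈ q.support, v ∈ B → v = x ∨ v = y ∨ v ∈ strand G B C x y)
    (hEq : E (B ∪ q.support.toFinset)) : #(strand G B C x y) + 1 ≤ q.length := by
  have := hO.card_host_le _ C (hO.reroute hE hxy q hq hEq) rfl
  have := hO.card_reroute_add_le hx hy hxy q
  lia

lemma isOptimal_reroute (hO : IsOptimal G E B C) (hE : Antitone E) (hx : x ∈ C) (hy : y ∈ C)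
    (hxy : x ≠ y) (q : G.Walk x y)
    (hq : ∀ v ∈ q.support, v ∈ B → v = x ∨ v = y ∨ v ∈ strand G B C x y)
    (hEq : E (B ∪ q.support.toFinset)) (hlen : q.length ≤ #(strand G B C x y) + 1) :
    IsOptimal G E ((B \ strand G B C x y) ∪ q.support.toFinset) C where
  toIsFeasible := hO.reroute hE hxy q hq hEq
  card_core_le := hO.card_core_le
  card_host_le B' C' hF hC' := by
    have := hO.card_host_le B' C' hF hC'
    have := hO.card_reroute_add_le hx hy hxy q
    lia

lemma exists_isStrandPath (hO : IsOptimal G E B C) (hE : Antitone E) (hz : z ∈ B \ C) :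
    ∃ (x y : V) (p : G.Walk x y), IsStrandPath G B C p ∧ attachments G B C z = {x, y} := by
  obtain ⟨x, y, hxy, hatt⟩ := card_eq_two.1 (hO.card_attachments hE hz)
  have hxz : x ∈ attachments G B C z := by simp [hatt]
  have hyz : y ∈ attachments G B C z := by simp [hatt]
  have hx := (mem_attachments.1 hxz).1
  have hy := (mem_attachments.1 hyz).1
  have hzZ := mem_strand.2 ⟨hz, hatt⟩
  obtain ⟨r, hr⟩ := (linked_strand_of_mem_attachments hzZ hx hy hxz).symm.trans
    (linked_strand_of_mem_attachments hzZ hx hy hyz)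
  have hsub : r.bypass.support.toFinset ⊆ insert x (insert y (strand G B C x y)) := fun v hv =>
    hr v (r.support_bypass_subset_support (List.mem_toFinset.1 hv))
  have hsubB : insert x (insert y (strand G B C x y)) ⊆ B :=
    insert_subset (hO.inseparable.subset hx)
      (insert_subset (hO.inseparable.subset hy) strand_subset)
  have hlen := hO.card_strand_lt_length hE hx hy hxy r.bypass
    (fun v hv _ => by simpa using hsub (List.mem_toFinset.2 hv))
    (by rw [union_eq_left.2 (hsub.trans hsubB)]; exact hO.admissible)
  have hcard : #r.bypass.support.toFinset = r.bypass.length + 1 := by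
    rw [List.toFinset_card_of_nodup r.bypass_isPath.support_nodup,
      SimpleGraph.Walk.length_support]
  have hle₁ := card_insert_le x (insert y (strand G B C x y))
  have hle₂ := card_insert_le y (strand G B C x y)
  have heq := eq_of_subset_of_card_le hsub (by lia)
  refine ⟨x, y, r.bypass, ⟨hx, hy, hxy, fun v => ?_, ?_⟩, hatt⟩
  · rw [← List.mem_toFinset, heq, mem_insert, mem_insert]
  · have := card_le_card hsub
    lia

end IsOptimal

namespace IsStrandPath

variable {p : G.Walk x y} {i k : ℕ}

lemma mem_host (hp : IsStrandPath G B C p) (hCB : C ⊆ B) (hv : v ∈ p.support) : v ∈ B := by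
  rcases (hp.mem_support v).1 hv with rfl | rfl | hv
  exacts [hCB hp.left_mem, hCB hp.right_mem, strand_subset hv]

lemma le_add_length (hp : IsStrandPath G B C p) (hO : IsOptimal G E B C) (hE : Antitone E)
    (hi : i ≤ p.length) (hk : k ≤ p.length) (r : G.Walk (p.getVert i) (p.getVert k))
    (hr : ∀ v ∈ r.support, v ∈ B → v ∈ p.support) (hEr : E (B ∪ r.support.toFinset)) :
    k ≤ i + r.length := by
  obtain ⟨q, hlen, hq, -⟩ := exists_walk_detour p hi r
  have := hO.card_strand_lt_length hE hp.left_mem hp.right_mem hp.ne q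
    (fun v hv hvB => (hp.mem_support v).1 ((hq v hv).elim id fun h => hr v h hvB))
    (hE (union_subset subset_union_left fun v hv => ?_) hEr)
  · have := hp.length_eq
    lia
  · rw [mem_union, List.mem_toFinset]
    exact (hq v (List.mem_toFinset.1 hv)).imp_left (hp.mem_host hO.inseparable.subset)

lemma le_succ_of_adj (hp : IsStrandPath G B C p) (hO : IsOptimal G E B C) (hE : Antitone E)
    (hi : i ≤ p.length) (hk : k ≤ p.length) (hadj : G.Adj (p.getVert i) (p.getVert k)) :
    k ≤ i + 1 := by
  have hsupp : ∀ v ∈ hadj.toWalk.support, v ∈ p.support := by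
    simp [SimpleGraph.Adj.toWalk, p.getVert_mem_support]
  refine hp.le_add_length hO hE hi hk hadj.toWalk (fun v hv _ => hsupp v hv) ?_
  rw [union_eq_left.2 fun v hv =>
    hp.mem_host hO.inseparable.subset (hsupp v (List.mem_toFinset.1 hv))]
  exact hO.admissible

lemma le_add_two_of_adj (hp : IsStrandPath G B C p) (hO : IsOptimal G E B C) (hE : Antitone E)
    (hu : u ∉ B) (hEu : E (insert u B)) (hi : i ≤ p.length) (hk : k ≤ p.length)
    (hui : G.Adj u (p.getVert i)) (huk : G.Adj u (p.getVert k)) : k ≤ i + 2 := by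
  refine hp.le_add_length hO hE hi hk (.cons hui.symm huk.toWalk) (fun v hv hvB => ?_)
    (hE (fun v hv => ?_) hEu) <;>
  simp only [SimpleGraph.Adj.toWalk, SimpleGraph.Walk.support_cons, SimpleGraph.Walk.support_nil,
    List.toFinset_cons, List.toFinset_nil, List.mem_cons, List.not_mem_nil, or_false, mem_union,
    mem_insert, notMem_empty] at hv ⊢
  · rcases hv with rfl | rfl | rfl
    exacts [p.getVert_mem_support i, absurd hvB hu, p.getVert_mem_support k]
  · rcases hv with hv | rfl | rfl | rfl
    exacts [.inr hv, .inr (hp.mem_host hO.inseparable.subset (p.getVert_mem_support i)), .inl rfl,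
      .inr (hp.mem_host hO.inseparable.subset (p.getVert_mem_support k))]

end IsStrandPath

lemma IsOptimal.card_nbrsIn_le_two (hO : IsOptimal G E B C) (hE : Antitone E) (hz : z ∈ B \ C) :
    #(nbrsIn G B z) ≤ 2 := by
  obtain ⟨x, y, p, hp, hatt⟩ := hO.exists_isStrandPath hE hz
  have hzZ := mem_strand.2 ⟨hz, hatt⟩
  obtain ⟨j, rfl, hj⟩ := SimpleGraph.Walk.mem_support_iff_exists_getVert.1
    ((hp.mem_support z).2 (.inr (.inr hzZ)))
  suffices hsub : nbrsIn G B (p.getVert j) ⊆ {p.getVert (j - 1), p.getVert (j + 1)} from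
    (card_le_card hsub).trans card_le_two
  intro w hw
  obtain ⟨hwB, hzw⟩ := mem_nbrsIn.1 hw
  have hwp : w ∈ p.support := by
    rw [hp.mem_support]
    by_contra! hno
    have := boundary_strand_subset (mem_boundary.2 ⟨⟨hwB, hno.2.2⟩, _, hzZ, hzw⟩)
    simp only [mem_insert, mem_singleton] at this
    tauto
  obtain ⟨k, rfl, hk⟩ := SimpleGraph.Walk.mem_support_iff_exists_getVert.1 hwp
  have hkj := hp.le_succ_of_adj hO hE hj hk hzw
  have hjk := hp.le_succ_of_adj hO hE hk hj hzw.symm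
  have hne : k ≠ j := fun h => hzw.ne (h ▸ rfl)
  obtain rfl | rfl : k = j - 1 ∨ k = j + 1 := by lia
  all_goals simp

lemma IsOptimal.exists_isStrandPath_of_three_le_card_nbrsIn (hO : IsOptimal G E B C)
    (hE : Antitone E) (hu : u ∉ B) (hEu : E (insert u B)) (hthree : 3 ≤ #(nbrsIn G B u)) :
    ∃ (x y : V) (p : G.Walk x y), IsStrandPath G B C p ∧ contacts G B C {u} = {x, y} ∧
      ∀ b ∈ nbrsIn G B u, b ∈ p.support := by
  have htwo := hO.card_contacts_singleton_le_two hu hEu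
  obtain ⟨b, hb, hbC⟩ : ∃ b ∈ nbrsIn G B u, b ∉ C := by
    by_contra! hsub
    have := card_le_card fun b hb =>
      attachments_subset_contacts hb (self_mem_attachments (hsub b hb))
    lia
  obtain ⟨x, y, p, hp, hatt⟩ := hO.exists_isStrandPath hE (mem_sdiff.2 ⟨(mem_nbrsIn.1 hb).1, hbC⟩)
  have hcontacts : {x, y} = contacts G B C {u} :=
    eq_of_subset_of_card_le (hatt ▸ attachments_subset_contacts hb) (by rwa [card_pair hp.ne])
  refine ⟨x, y, p, hp, hcontacts.symm, fun b hb => (hp.mem_support b).2 ?_⟩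
  have hsub : attachments G B C b ⊆ {x, y} := hcontacts ▸ attachments_subset_contacts hb
  by_cases hbC : b ∈ C
  · have := hsub (self_mem_attachments hbC)
    simp only [mem_insert, mem_singleton] at this
    tauto
  · have hb : b ∈ B \ C := mem_sdiff.2 ⟨(mem_nbrsIn.1 hb).1, hbC⟩
    exact .inr (.inr (mem_strand.2 ⟨hb, eq_of_subset_of_card_le hsub
      (by rw [card_pair hp.ne, hO.card_attachments hE hb])⟩))

lemma IsStrandPath.exists_adj_getVert {p : G.Walk x y} (hp : IsStrandPath G B C p)
    (hO : IsOptimal G E B C) (hE : Antitone E) (hu : u ∉ B) (hEu : E (insert u B))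
    (hsupp : ∀ b ∈ nbrsIn G B u, b ∈ p.support) (hthree : 3 ≤ #(nbrsIn G B u)) :
    #(nbrsIn G B u) = 3 ∧
      ∃ i, i + 2 ≤ p.length ∧ G.Adj u (p.getVert i) ∧ G.Adj u (p.getVert (i + 2)) := by
  have hindex (b : V) (hb : b ∈ nbrsIn G B u) : ∃ k ≤ p.length, p.getVert k = b :=
    (SimpleGraph.Walk.mem_support_iff_exists_getVert.1 (hsupp b hb)).imp fun _ h => h.symm
  have hex : ∃ i, i ≤ p.length ∧ G.Adj u (p.getVert i) := by
    obtain ⟨b, hb⟩ := card_pos.1 (by lia : 0 < #(nbrsIn G B u))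
    obtain ⟨k, hk, rfl⟩ := hindex b hb
    exact ⟨k, hk, (mem_nbrsIn.1 hb).2⟩
  obtain ⟨hi, hui⟩ := Nat.find_spec hex
  set i := Nat.find hex
  have hsub : nbrsIn G B u ⊆ (Icc i (min (i + 2) p.length)).image p.getVert := fun b hb => by
    obtain ⟨k, hk, rfl⟩ := hindex b hb
    have huk := (mem_nbrsIn.1 hb).2
    exact mem_image_of_mem _ (mem_Icc.2 ⟨Nat.find_min' hex ⟨hk, huk⟩,
      le_min (hp.le_add_two_of_adj hO hE hu hEu hi hk hui huk) hk⟩)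
  have himage : #((Icc i (min (i + 2) p.length)).image p.getVert) ≤ _ := card_image_le
  rw [Nat.card_Icc] at himage
  have hle := card_le_card hsub
  have hmem : p.getVert (i + 2) ∈ nbrsIn G B u := by
    rw [eq_of_subset_of_card_le hsub (by lia)]
    exact mem_image_of_mem _ (mem_Icc.2 (by lia))
  exact ⟨by lia, i, by lia, hui, (mem_nbrsIn.1 hmem).2⟩

end Strands

/-! ### Swapping a vertex into the host -/

section Swap

variable {V : Type*} {G : SimpleGraph V} {E : Finset V → Prop} {B B' C : Finset V} {b c u : V}

/-- `B'` is another optimal host for the core `C`, obtained by moving `u` into `B` in place of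
vertices with the same attachments. -/
structure IsSwap (G : SimpleGraph V) (E : Finset V → Prop) (B C B' : Finset V) (u : V) : Prop where
  isOptimal : IsOptimal G E B' C
  mem : u ∈ B'
  subset : B' ⊆ insert u B
  attachments_eq : ∀ b ∈ B, b ∉ B' → attachments G B C b = contacts G B C {u}

lemma IsOptimal.exists_isSwap (hO : IsOptimal G E B C) (hE : Antitone E) (hu : u ∉ B)
    (hEu : E (insert u B)) (hthree : 3 ≤ #(nbrsIn G B u)) :
    #(nbrsIn G B u) = 3 ∧ #(contacts G B C {u}) = 2 ∧ ∃ B', IsSwap G E B C B' u := by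
  obtain ⟨x, y, p, hp, hcontacts, hsupp⟩ :=
    hO.exists_isStrandPath_of_three_le_card_nbrsIn hE hu hEu hthree
  obtain ⟨hcard, i, hi, hui, huk⟩ := hp.exists_adj_getVert hO hE hu hEu hsupp hthree
  obtain ⟨q, hlen, hqp, hrq⟩ := exists_walk_detour p (by lia) (.cons hui.symm huk.toWalk)
  have hqu (v : V) (hv : v ∈ q.support) : v = u ∨ v ∈ p.support := by
    rcases hqp v hv with h | h
    · exact .inr h
    · simp only [SimpleGraph.Adj.toWalk, SimpleGraph.Walk.support_cons,
        SimpleGraph.Walk.support_nil, List.mem_cons, List.not_mem_nil, or_false] at h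
      rcases h with rfl | rfl | rfl
      exacts [.inr (p.getVert_mem_support _), .inl rfl, .inr (p.getVert_mem_support _)]
  have hqB : B ∪ q.support.toFinset ⊆ insert u B := union_subset (subset_insert _ _) fun v hv =>
    mem_insert.2 ((hqu v (List.mem_toFinset.1 hv)).imp_right (hp.mem_host hO.inseparable.subset))
  refine ⟨hcard, hcontacts ▸ card_pair hp.ne, _,
    hO.isOptimal_reroute hE hp.left_mem hp.right_mem hp.ne q (fun v hv hvB => ?_) (hE hqB hEu) ?_,
    mem_union_right _ (List.mem_toFinset.2 (hrq u ?_)),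
    (union_subset_union_left sdiff_subset).trans hqB, fun b hb hb' => ?_⟩
  · exact (hp.mem_support v).1 ((hqu v hv).resolve_left fun h => hu (h ▸ hvB))
  · have := hp.length_eq
    simp only [SimpleGraph.Adj.toWalk, SimpleGraph.Walk.length_cons,
      SimpleGraph.Walk.length_nil] at hlen
    lia
  · simp
  · have hbZ : b ∈ strand G B C x y := by
      by_contra hbZ
      exact hb' (mem_union_left _ (mem_sdiff.2 ⟨hb, hbZ⟩))
    rw [hcontacts, (mem_strand.1 hbZ).2]

lemma attachments_subset_contacts_of_subset_insert (hCB : C ⊆ B) (hu : u ∉ B)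
    (hB' : B' ⊆ insert u B) : attachments G B' C u ⊆ contacts G B C {u} := fun c hc => by
  obtain ⟨hcC, huc⟩ := mem_attachments.1 hc
  have hcore : insert c (B \ C) ⊆ B := insert_subset (hCB hcC) sdiff_subset
  by_contra hno
  refine hu (hcore (huc.symm.propagate (P := Linked G (insert c (B \ C)) c)
    (.refl (mem_insert_self _ _)) fun w v _ hv hwv hw => hw.trans_adj hwv ?_).right_mem)
  rw [mem_insert, mem_sdiff] at hv ⊢
  refine hv.imp_right fun ⟨hvB', hvC⟩ => ⟨(mem_insert.1 (hB' hvB')).resolve_left ?_, hvC⟩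
  rintro rfl
  exact hno (attachments_subset_contacts (mem_nbrsIn.2 ⟨hcore hw.right_mem, hwv.symm⟩)
    (mem_attachments.2 ⟨hcC, hw.symm⟩))

lemma IsSwap.contacts_subset_attachments (hS : IsSwap G E B C B' u) (hE : Antitone E)
    (hCB : C ⊆ B) (hu : u ∉ B) (htwo : #(contacts G B C {u}) = 2) :
    contacts G B C {u} ⊆ attachments G B' C u := by
  have hcard := hS.isOptimal.card_attachments hE (mem_sdiff.2 ⟨hS.mem, fun h => hu (hCB h)⟩)
  exact (eq_of_subset_of_card_le (attachments_subset_contacts_of_subset_insert hCB hu hS.subset)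
    (by rw [hcard, htwo])).ge

lemma IsSwap.mem_of_notMem_contacts (hS : IsSwap G E B C B' u) (hb : b ∈ B)
    (hc : c ∈ attachments G B C b) (hcu : c ∉ contacts G B C {u}) : b ∈ B' := by
  by_contra hb'
  exact hcu (hS.attachments_eq b hb hb' ▸ hc)

lemma IsSwap.mem_attachments_of_notMem_contacts (hS : IsSwap G E B C B' u)
    (hc : c ∈ attachments G B C b) (hcu : c ∉ contacts G B C {u}) :
    c ∈ attachments G B' C b := by
  obtain ⟨hcC, hbc⟩ := mem_attachments.1 hc
  refine mem_attachments.2 ⟨hcC, .symm ?_⟩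
  refine hbc.symm.propagate (.refl (mem_insert_self _ _)) fun w v hw hv hwv hw' =>
    hw'.trans_adj hwv ?_
  rw [mem_insert, mem_sdiff] at hv ⊢
  exact hv.imp_right fun ⟨hvB, hvC⟩ => ⟨hS.mem_of_notMem_contacts hvB (mem_attachments.2
    ⟨hcC, (hw.trans_adj hwv (mem_insert_of_mem (mem_sdiff.2 ⟨hvB, hvC⟩))).symm⟩) hcu, hvC⟩

end Swap

/-! ### Claws -/

section Claws

variable {V : Type*} {G : SimpleGraph V} {E : Finset V → Prop} {B C S : Finset V} {v : V}

/-- A connected set outside an optimal host that attaches to at least three vertices of the core.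
Adding it to the host would allow a larger core, so it must meet every copy of the tree. -/
structure IsClaw (G : SimpleGraph V) (E : Finset V → Prop) (B C S : Finset V) : Prop where
  isOptimal : IsOptimal G E B C
  disjoint : Disjoint S B
  connectedOn : ConnectedOn G S
  three_le_card_contacts : 3 ≤ #(contacts G B C S)

lemma exists_subset_three_le_card_contacts (h : 3 ≤ #(contacts G B C (insert v S))) :
    ∃ R ⊆ S, #R ≤ 3 - #(contacts G B C {v}) ∧ 3 ≤ #(contacts G B C (insert v R)) := by
  have hsub : contacts G B C {v} ⊆ contacts G B C (insert v S) := contacts_mono (by simp)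
  obtain ⟨D, hD, hDcard⟩ : ∃ D ⊆ contacts G B C (insert v S) \ contacts G B C {v},
      #D = 3 - #(contacts G B C {v}) :=
    exists_subset_card_eq (by rw [card_sdiff_of_subset hsub]; lia)
  have hsource (c : V) (hc : c ∈ D) : ∃ t ∈ S, c ∈ contacts G B C {t} := by
    obtain ⟨hcS, hcv⟩ := mem_sdiff.1 (hD hc)
    obtain ⟨t, ht, htc⟩ := mem_contacts.1 hcS
    rw [← mem_contacts_singleton] at htc
    exact ⟨t, (mem_insert.1 ht).resolve_left fun h => hcv (h ▸ htc), htc⟩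
  choose! t htS hct using hsource
  refine ⟨D.image t, image_subset_iff.2 htS, hDcard ▸ card_image_le, ?_⟩
  have hcover : contacts G B C {v} ∪ D ⊆ contacts G B C (insert v (D.image t)) :=
    union_subset (contacts_mono (by simp)) fun c hc => contacts_mono
      (singleton_subset_iff.2 (mem_insert_of_mem (mem_image_of_mem t hc))) (hct c hc)
  have hdisj : Disjoint (contacts G B C {v}) D :=
    disjoint_sdiff.mono_right hD
  have := card_le_card hcover
  rw [card_union_of_disjoint hdisj] at this
  lia

namespace IsOptimal

lemma exists_isClaw_of_card_nbrsIn_le_two (hO : IsOptimal G E B C) (hE : Antitone E) (hv : v ∉ B)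
    (hEv : E (insert v B)) (htwo : #(nbrsIn G B v) ≤ 2) (hSB : Disjoint S B)
    (hS : ConnectedOn G S) (hvS : (nbrsIn G S v).Nonempty)
    (hcontacts : 3 ≤ #(contacts G B C (insert v S))) :
    ∃ K, IsClaw G E B C K ∧ #K + #(nbrsIn G S v) + #(nbrsIn G B v) ≤ #S + 4 := by
  obtain ⟨R, hRS, hRcard, hR⟩ := exists_subset_three_le_card_contacts hcontacts
  obtain ⟨K, hKS, hRK, hK, hKcard⟩ := hS.exists_connectedOn_cover hvS hRS
  refine ⟨K, ⟨hO, ?_, hK, hR.trans (card_le_card (contacts_mono hRK))⟩, ?_⟩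
  · exact (disjoint_insert_left.2 ⟨hv, hSB⟩).mono_left hKS
  · have := hO.card_contacts_singleton_le_two hv hEv
    have hle := hO.card_nbrsIn_le_contacts hE htwo
    have hsplit := card_inter_add_card_sdiff K (nbrsIn G S v)
    have hsub : K \ nbrsIn G S v ⊆ insert v (S \ nbrsIn G S v) := fun w hw => by
      have := @hKS w
      simp only [mem_insert, mem_sdiff] at hw this ⊢
      tauto
    have hrest := (card_le_card hsub).trans (card_insert_le _ _)
    have hSsplit := card_sdiff_add_card_eq_card (nbrsIn_subset (G := G) (B := S) (v := v))
    lia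

lemma exists_isClaw_of_three_le_card_nbrsIn (hO : IsOptimal G E B C) (hE : Antitone E)
    (hv : v ∉ B) (hEv : E (insert v B)) (hthree : 3 ≤ #(nbrsIn G B v)) (hSB : Disjoint S B)
    (hvS : v ∉ S) (hS : ConnectedOn G S) (hne : (nbrsIn G S v).Nonempty)
    (hcontacts : 3 ≤ #(contacts G B C (insert v S))) :
    ∃ B' K, IsClaw G E B' C K ∧ #K + #(nbrsIn G S v) + #(nbrsIn G B v) ≤ #S + 4 := by
  obtain ⟨heq, htwo, B', hswap⟩ := hO.exists_isSwap hE hv hEv hthree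
  obtain ⟨c, hc, hcv⟩ := exists_mem_notMem_of_card_lt_card
    (by lia : #(contacts G B C {v}) < #(contacts G B C (insert v S)))
  obtain ⟨t, ht, b, hb, hcb⟩ := mem_contacts.1 hc
  obtain rfl | htS := mem_insert.1 ht
  · exact absurd (attachments_subset_contacts hb hcb) hcv
  obtain ⟨z, hz, K, hKsub, hK, htK, hzK⟩ := hS.exists_arm hne htS
  have hKS : K ⊆ S := hKsub.trans (insert_subset (nbrsIn_subset hz) sdiff_subset)
  have hbB' := hswap.mem_of_notMem_contacts (mem_nbrsIn.1 hb).1 hcb hcv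
  have hsub : insert c (contacts G B C {v}) ⊆ contacts G B' C K := insert_subset
    (mem_contacts.2 ⟨t, htK, b, mem_nbrsIn.2 ⟨hbB', (mem_nbrsIn.1 hb).2⟩,
      hswap.mem_attachments_of_notMem_contacts hcb hcv⟩)
    fun d hd => mem_contacts.2 ⟨z, hzK, v, mem_nbrsIn.2 ⟨hswap.mem, (mem_nbrsIn.1 hz).2.symm⟩,
      hswap.contacts_subset_attachments hE hO.inseparable.subset hv htwo hd⟩
  have hcard := card_le_card hsub
  rw [card_insert_of_notMem hcv] at hcard
  refine ⟨B', K, ⟨hswap.isOptimal, ?_, hK, by lia⟩, ?_⟩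
  · exact (disjoint_insert_right.2 ⟨hvS, hSB⟩).mono hKS hswap.subset
  · have hrest := (card_le_card hKsub).trans (card_insert_le _ _)
    have hSsplit := card_sdiff_add_card_eq_card (nbrsIn_subset (G := G) (B := S) (v := v))
    lia

lemma exists_isClaw_card_add_le (hO : IsOptimal G E B C) (hE : Antitone E) (hv : v ∉ B)
    (hEv : E (insert v B)) (hSB : Disjoint S B) (hvS : v ∉ S) (hS : ConnectedOn G S)
    (hne : (nbrsIn G S v).Nonempty) (hcontacts : 3 ≤ #(contacts G B C (insert v S))) :
    ∃ B' K, IsClaw G E B' C K ∧ #K + #(nbrsIn G S v) + #(nbrsIn G B v) ≤ #S + 4 := by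
  rcases le_or_gt #(nbrsIn G B v) 2 with htwo | hthree
  · exact ⟨B, hO.exists_isClaw_of_card_nbrsIn_le_two hE hv hEv htwo hSB hS hne hcontacts⟩
  · exact hO.exists_isClaw_of_three_le_card_nbrsIn hE hv hEv hthree hSB hvS hS hne hcontacts

lemma card_nbrsIn_le_three (hO : IsOptimal G E B C) (hE : Antitone E) (hv : v ∉ B)
    (hEv : E (insert v B)) : #(nbrsIn G B v) ≤ 3 := by
  by_contra! hfour
  exact hfour.ne' (hO.exists_isSwap hE hv hEv hfour.le).1

end IsOptimal

namespace IsClaw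

lemma card_nbrsIn_add_card_nbrsIn_le_four (hS : IsClaw G E B C S) (hE : Antitone E)
    (hmin : ∀ B' C' S', IsClaw G E B' C' S' → #S ≤ #S') (hv : v ∉ B) (hvS : v ∉ S)
    (hEv : E (insert v B)) : #(nbrsIn G S v) + #(nbrsIn G B v) ≤ 4 := by
  obtain hempty | hne := (nbrsIn G S v).eq_empty_or_nonempty
  · have := hS.isOptimal.card_nbrsIn_le_three hE hv hEv
    rw [hempty, card_empty]
    lia
  obtain ⟨B', K, hK, hcard⟩ := hS.isOptimal.exists_isClaw_card_add_le hE hv hEv hS.disjoint hvS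
    hS.connectedOn hne (hS.three_le_card_contacts.trans
      (card_le_card (contacts_mono (subset_insert _ _))))
  have := hmin _ _ _ hK
  lia

lemma exists_card_nbrsIn_add_card_nbrsIn_le_three (hS : IsClaw G E B C S) (hE : Antitone E)
    (hmin : ∀ B' C' S', IsClaw G E B' C' S' → #S ≤ #S') (hEv : ∀ v ∉ B, E (insert v B))
    (hcard : 2 ≤ #S) : ∃ v ∈ S, #(nbrsIn G S v) + #(nbrsIn G B v) ≤ 3 := by
  obtain ⟨v, hv, hconn, hne⟩ := hS.connectedOn.exists_connectedOn_erase hcard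
  have hvB := disjoint_left.1 hS.disjoint hv
  obtain ⟨B', K, hK, hle⟩ := hS.isOptimal.exists_isClaw_card_add_le hE hvB (hEv v hvB)
    (hS.disjoint.mono_left (erase_subset _ _)) (notMem_erase _ _) hconn hne
    (by rw [insert_erase hv]; exact hS.three_le_card_contacts)
  rw [nbrsIn_erase_self] at hle
  have := hmin _ _ _ hK
  have := card_erase_add_one hv
  exact ⟨v, hv, by lia⟩

end IsClaw

end Claws

/-! ### Three-connected graphs -/

section ThreeConnected

variable {V : Type*} {G : SimpleGraph V} {E : Finset V → Prop} {B C X : Finset V} {a b u v w : V}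

lemma KConnected.linked [Fintype V] {k : ℕ} (hG : KConnected G k) (hX : #X < k) (ha : a ∉ X)
    (hb : b ∉ X) : Linked G Xᶜ a b := by
  obtain ⟨p⟩ := (hG.2 X hX).preconnected ⟨a, by simpa using ha⟩ ⟨b, by simpa using hb⟩
  refine ⟨p.map (SimpleGraph.Embedding.induce _).toHom, fun v hv => ?_⟩
  obtain ⟨⟨w, hw⟩, -, rfl⟩ := List.mem_map.1 (SimpleGraph.Walk.support_map _ p ▸ hv)
  simpa using hw

lemma InseparableIn.kConnected (h : InseparableIn G B B) (hfour : 4 ≤ #B) :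
    KConnected (G.induce (B : Set V)) 3 := by
  refine ⟨by simpa using hfour, fun X hX => ?_⟩
  have hcard : #(X.map (.subtype _)) ≤ 2 := by rw [card_map]; lia
  have hmem {v : V} (hv : v ∈ B) : v ∈ X.map (.subtype _) ↔ (⟨v, hv⟩ : (B : Set V)) ∈ X := by
    simp [hv]
  obtain ⟨c, hcB, hcX⟩ := exists_mem_notMem_of_card_lt_card (by lia : #(X.map (.subtype _)) < #B)
  have : Nonempty ((X : Set (B : Set V))ᶜ : Set _) :=
    ⟨⟨⟨c, hcB⟩, fun hc => hcX ((hmem hcB).2 hc)⟩⟩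
  refine SimpleGraph.Connected.mk ?_
  rintro ⟨⟨a, ha⟩, haX⟩ ⟨⟨b, hb⟩, hbX⟩
  obtain ⟨p, hp⟩ := h _ hcard a ha (fun h => haX ((hmem ha).1 h)) b hb
    (fun h => hbX ((hmem hb).1 h))
  have hpB (v : V) (hv : v ∈ p.support) : v ∈ (B : Set V) := (mem_sdiff.1 (hp v hv)).1
  have hpX (v : (B : Set V)) (hv : v ∈ (p.induce _ hpB).support) :
      v ∈ ((X : Set (B : Set V))ᶜ) := by
    rw [SimpleGraph.Walk.support_induce, List.mem_attachWith] at hv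
    exact fun hvX => (mem_sdiff.1 (hp v hv)).2 ((hmem v.2).2 hvX)
  exact ⟨(p.induce _ hpB).induce _ hpX⟩

/-- The core vertices that `v` reaches inside the host if it lies there, and otherwise the contacts
of the component of `v` outside the host. -/
def footprint [Fintype V] (G : SimpleGraph V) (B C : Finset V) (v : V) : Finset V :=
  if v ∈ B then attachments G B C v else contacts G B C (component G Bᶜ v)

lemma IsOptimal.footprint_subset_of_adj [Fintype V] (hO : IsOptimal G E B C) (hE : Antitone E)
    (htwo : ∀ v ∉ B, #(contacts G B C (component G Bᶜ v)) ≤ 2) (hu : u ∉ C) (huw : G.Adj u w) :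
    footprint G B C w ⊆ footprint G B C u := by
  have hcontacts {x y : V} (hx : x ∉ B) (hy : y ∈ B) (hxy : G.Adj x y) :
      attachments G B C y ⊆ contacts G B C (component G Bᶜ x) := fun c hc =>
    mem_contacts.2 ⟨x, mem_component.2 (.refl (mem_compl.2 hx)), y, mem_nbrsIn.2 ⟨hy, hxy⟩, hc⟩
  rw [footprint, footprint]
  split_ifs with hw hu' hu'
  · exact attachments_subset_of_adj (mem_sdiff.2 ⟨hu', hu⟩) huw
  · exact hcontacts hu' hw huw
  · have hcard := hO.card_attachments hE (mem_sdiff.2 ⟨hu', hu⟩)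
    exact (eq_of_subset_of_card_le (hcontacts hw hu' huw.symm) (hcard ▸ htwo w hw)).ge
  · exact contacts_mono fun s hs => mem_component.2
      ((Linked.of_adj huw (mem_compl.2 hu') (mem_compl.2 hw)).trans (mem_component.1 hs))

lemma IsOptimal.exists_isClaw [Fintype V] (hO : IsOptimal G E B C) (hE : Antitone E)
    (hG : KConnected G 3) (hB : Bᶜ.Nonempty) : ∃ S, IsClaw G E B C S := by
  by_contra! hno
  have htwo (v : V) (_ : v ∉ B) : #(contacts G B C (component G Bᶜ v)) ≤ 2 := by
    by_contra! hthree
    refine hno _ ⟨hO, ?_, connectedOn_component _ v, hthree⟩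
    exact disjoint_left.2 fun s hs => mem_compl.1 (mem_component.1 hs).right_mem
  have hCB := hO.inseparable.subset
  obtain ⟨h, hh⟩ := hB
  rw [mem_compl] at hh
  set X := footprint G B C h with hX
  rw [footprint, if_neg hh] at hX
  have hXcard : #X < 3 := hX ▸ Nat.lt_succ_of_le (htwo h hh)
  obtain ⟨c, hc, hcX⟩ := exists_mem_notMem_of_card_lt_card
    (hXcard.trans_le (by have := hO.four_le_card; lia) : #X < #C)
  have hhX : h ∉ X := fun hhX => hh (hCB (contacts_subset_core (hX ▸ hhX)))
  refine ((hG.linked hXcard hhX hcX).propagate (P := fun v => v ∉ C ∧ footprint G B C v ⊆ X)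
    ⟨fun hhC => hh (hCB hhC), Subset.rfl⟩ fun u w _ hw huw hu => ?_).1 hc
  have hsub := (hO.footprint_subset_of_adj hE htwo hu.1 huw).trans hu.2
  refine ⟨fun hwC => mem_compl.1 hw (hsub ?_), hsub⟩
  rw [footprint, if_pos (hCB hwC)]
  exact self_mem_attachments hwC

end ThreeConnected

/-! ### Removing a tree -/

section RemovingTree

variable {V W : Type*} {G : SimpleGraph V} {T : SimpleGraph W} {E : Finset V → Prop}
  {B C S : Finset V} {v : V}

/-- `G - B` contains a copy of `T`. -/
def HasCopyAvoiding (T : SimpleGraph W) (G : SimpleGraph V) (B : Finset V) : Prop :=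
  ∃ f : T.Copy G, ∀ t, f t ∉ B

lemma hasCopyAvoiding_antitone : Antitone (HasCopyAvoiding T G) :=
  fun _ _ hB ⟨f, hf⟩ => ⟨f, fun t ht => hf t (hB ht)⟩

lemma IsFeasible.exists_isOptimal [Finite V] (h : IsFeasible G E B C) :
    ∃ B C, IsOptimal G E B C := by
  have := Fintype.ofFinite V
  let F : Finset (Finset V × Finset V) := {p | IsFeasible G E p.1 p.2}
  have hF {B C : Finset V} : (B, C) ∈ F ↔ IsFeasible G E B C := by simp [F]
  obtain ⟨⟨B, C⟩, hBC, hmin⟩ := F.exists_min_image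
    (fun p => toLex (OrderDual.toDual #p.2, #p.1)) ⟨(B, C), hF.2 h⟩
  have hlex {B' C' : Finset V} (h' : IsFeasible G E B' C') :
      #C' < #C ∨ #C' = #C ∧ #B ≤ #B' := by
    have := Prod.Lex.toLex_le_toLex.1 (hmin (B', C') (hF.2 h'))
    simpa [eq_comm] using this
  exact ⟨B, C, hF.1 hBC, fun B' C' h' => by have := hlex h'; lia,
    fun B' C' h' hC' => by have := hlex h'; lia⟩

variable [Fintype V] [Fintype W]

lemma card_nbrsIn_univ (G : SimpleGraph V) (v : V) [Fintype (G.neighborSet v)] :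
    #(nbrsIn G univ v) = G.degree v := by
  rw [← SimpleGraph.card_neighborFinset_eq_degree]
  congr 1
  ext w
  simp [mem_nbrsIn]

lemma card_nbrsIn_univ_le (B : Finset V) (v : V) :
    #(nbrsIn G univ v) ≤ #(nbrsIn G B v) + #(nbrsIn G Bᶜ v) := by
  rw [← union_compl B]
  exact card_nbrsIn_union_le B Bᶜ v

lemma exists_isFeasible_hasCopyAvoiding [Nonempty V] (hT : T.IsTree)
    (hdeg : ∀ v, Fintype.card W + 3 ≤ #(nbrsIn G univ v)) :
    ∃ B C, IsFeasible G (HasCopyAvoiding T G) B C := by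
  obtain ⟨f, -⟩ := exists_copy_of_card_le_nbrsIn (G := G) hT univ_nonempty
    fun x _ => by have := hdeg x; lia
  have himage : #(univ.image f) = Fintype.card W := card_image_of_injective _ f.injective
  obtain ⟨v⟩ := ‹Nonempty V›
  have hne : (univ \ univ.image f).Nonempty := by
    refine sdiff_nonempty.2 fun h => ?_
    have := card_le_card h
    have := card_nbrsIn_lt (G := G) (mem_univ v)
    have := hdeg v
    lia
  obtain ⟨C, -, hC, hinsep⟩ := exists_inseparable (G := G) hne fun v _ => by
    have := hdeg v
    have := card_nbrsIn_le_sdiff (G := G) univ (univ.image f) v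
    lia
  exact ⟨_, C, hC, hinsep, f, fun t => by simp⟩

namespace IsOptimal

lemma card_nbrsIn_le_three_of_card_lt (hO : IsOptimal G (HasCopyAvoiding T G) B C) (hT : T.IsTree)
    (hdeg : ∀ v, Fintype.card W + 3 ≤ #(nbrsIn G univ v)) (hB : Fintype.card W < #Bᶜ)
    (hv : v ∉ B) : #(nbrsIn G B v) ≤ 3 := by
  by_contra! hfour
  obtain ⟨f, hf⟩ := hO.admissible
  let L : Finset V := {v ∈ Bᶜ | 4 ≤ #(nbrsIn G B v)}
  have hdegL (w : V) (hw : w ∈ Bᶜ) (hwL : w ∉ L) : Fintype.card W ≤ #(nbrsIn G Bᶜ w) := by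
    have hlow : ¬4 ≤ #(nbrsIn G B w) := fun h => hwL (mem_filter.2 ⟨hw, h⟩)
    have := hdeg w
    have := card_nbrsIn_univ_le (G := G) B w
    lia
  obtain ⟨u, hu, f', hf'⟩ := exists_copy_avoiding (G := G) (H := Bᶜ) (L := L) hT
    ⟨v, mem_filter.2 ⟨mem_compl.2 hv, hfour⟩⟩ hB hdegL fun t => mem_compl.2 (hf t)
  obtain ⟨huB, hu⟩ := mem_filter.1 hu
  refine hu.not_gt (Nat.lt_succ_of_le (hO.card_nbrsIn_le_three hasCopyAvoiding_antitone
    (mem_compl.1 huB) ⟨f', fun t => ?_⟩))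
  simpa [not_or] using hf' t

lemma hasCopyAvoiding_insert (hO : IsOptimal G (HasCopyAvoiding T G) B C) (hT : T.IsTree)
    (hdeg : ∀ v, Fintype.card W + 3 ≤ #(nbrsIn G univ v)) (hB : Fintype.card W < #Bᶜ)
    (hv : v ∉ B) : HasCopyAvoiding T G (insert v B) := by
  have := hT.connected.nonempty
  have hne : (Bᶜ.erase v).Nonempty := card_pos.1 <| by
    rw [card_erase_of_mem (mem_compl.2 hv)]
    have := Fintype.card_pos (α := W)
    lia
  obtain ⟨f, hf⟩ := exists_copy_of_card_le_nbrsIn (G := G) hT hne fun x hx => by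
    have := hO.card_nbrsIn_le_three_of_card_lt hT hdeg hB (mem_compl.1 (mem_of_mem_erase hx))
    have := hdeg x
    have := card_nbrsIn_univ_le (G := G) B x
    have := card_nbrsIn_le_erase (G := G) Bᶜ x v
    lia
  exact ⟨f, fun t => by simpa [not_or] using hf t⟩

end IsOptimal

lemma IsClaw.eq_compl (hS : IsClaw G (HasCopyAvoiding T G) B C S) (hT : T.IsTree)
    (hdeg : ∀ v, Fintype.card W + 3 ≤ #(nbrsIn G univ v))
    (hsmall : ∀ v ∉ B, v ∉ S → #(nbrsIn G S v) + #(nbrsIn G B v) ≤ 4) : S = Bᶜ := by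
  have hSB : S ⊆ Bᶜ := fun s hs => mem_compl.2 (disjoint_left.1 hS.disjoint hs)
  by_contra hne
  obtain ⟨f, hf⟩ := exists_copy_of_card_le_nbrsIn (G := G) (R := Bᶜ \ S) hT
    (sdiff_nonempty.2 fun h => hne (hSB.antisymm h)) fun x hx => by
      obtain ⟨hxB, hxS⟩ := mem_sdiff.1 hx
      have := hsmall x (mem_compl.1 hxB) hxS
      have := hdeg x
      have := card_nbrsIn_univ_le (G := G) B x
      have hsplit := card_nbrsIn_union_le (G := G) (Bᶜ \ S) S x
      rw [sdiff_union_of_subset hSB] at hsplit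
      lia
  have htwo := hS.isOptimal.card_contacts_le_two hS.disjoint hS.connectedOn
    ⟨f, fun t => by simpa [not_or] using hf t⟩
  exact htwo.not_gt hS.three_le_card_contacts

theorem exists_isOptimal_card_compl_le (hT : T.IsTree) (hG : KConnected G 3)
    (hdeg : ∀ v, Fintype.card W + 3 ≤ #(nbrsIn G univ v)) :
    ∃ B C, IsOptimal G (HasCopyAvoiding T G) B C ∧ #Bᶜ ≤ Fintype.card W := by
  by_contra! hlt
  have := hT.connected.nonempty
  have hW := Fintype.card_pos (α := W)
  have : Nonempty V := (Nat.card_pos_iff.1 (by have := hG.1; lia)).1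
  obtain ⟨_, _, hfeas⟩ := exists_isFeasible_hasCopyAvoiding hT hdeg
  obtain ⟨B₀, C₀, hO₀⟩ := hfeas.exists_isOptimal
  obtain ⟨S₀, hS₀⟩ := hO₀.exists_isClaw hasCopyAvoiding_antitone hG
    (card_pos.1 (hW.trans (hlt _ _ hO₀)))
  let F : Finset (Finset V) := {S | ∃ B C, IsClaw G (HasCopyAvoiding T G) B C S}
  have hF {S : Finset V} : S ∈ F ↔ ∃ B C, IsClaw G (HasCopyAvoiding T G) B C S := by simp [F]
  obtain ⟨S, hSF, hmin⟩ := F.exists_min_image card ⟨S₀, hF.2 ⟨_, _, hS₀⟩⟩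
  obtain ⟨B, C, hS⟩ := hF.1 hSF
  replace hmin (B' C' S' : Finset V) (h : IsClaw G (HasCopyAvoiding T G) B' C' S') : #S ≤ #S' :=
    hmin S' (hF.2 ⟨_, _, h⟩)
  have hB := hlt _ _ hS.isOptimal
  have hEv (v : V) (hv : v ∉ B) := hS.isOptimal.hasCopyAvoiding_insert hT hdeg hB hv
  obtain rfl : S = Bᶜ := hS.eq_compl hT hdeg fun v hv hvS =>
    hS.card_nbrsIn_add_card_nbrsIn_le_four hasCopyAvoiding_antitone hmin hv hvS (hEv v hv)
  obtain ⟨v, -, hv⟩ := hS.exists_card_nbrsIn_add_card_nbrsIn_le_three hasCopyAvoiding_antitone hmin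
    hEv (by lia)
  have := hdeg v
  have := card_nbrsIn_univ_le (G := G) B v
  lia

lemma IsOptimal.exists_copy_kConnected_compl_range (hO : IsOptimal G (HasCopyAvoiding T G) B C)
    (hdeg : ∀ v, Fintype.card W + 3 ≤ #(nbrsIn G univ v)) (hB : #Bᶜ ≤ Fintype.card W) :
    ∃ f : T.Copy G, KConnected (G.induce (Set.range f)ᶜ) 3 := by
  obtain ⟨f, hf⟩ := hO.admissible
  have hcore : B = C := by
    refine Subset.antisymm (fun z hz => ?_) hO.inseparable.subset
    by_contra hzC
    have := hO.card_nbrsIn_le_two hasCopyAvoiding_antitone (mem_sdiff.2 ⟨hz, hzC⟩)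
    have := hdeg z
    have := card_nbrsIn_univ_le (G := G) B z
    have := card_le_card (nbrsIn_subset (G := G) (B := Bᶜ) (v := z))
    lia
  have himage : univ.image f = Bᶜ := eq_of_subset_of_card_le
    (image_subset_iff.2 fun t _ => mem_compl.2 (hf t))
    (hB.trans_eq (card_image_of_injective _ f.injective).symm)
  have hrange : (Set.range f)ᶜ = (B : Set V) := by
    rw [← Set.image_univ, ← coe_univ, ← coe_image, himage, coe_compl, compl_compl]
  subst hcore
  exact ⟨f, hrange ▸ hO.inseparable.kConnected hO.four_le_card⟩

end RemovingTree

end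

/-- For every positive integer `m` and every tree `T` of order `m`, every
`3`-connected graph `G` with `δ(G) ≥ m + 3` contains a subgraph `T' ≅ T`
such that `G - V(T')` is still `3`-connected. -/
theorem stmt_13 {V W : Type*} [Fintype V] [DecidableEq V] [Fintype W]
    (G : SimpleGraph V) [DecidableRel G.Adj] (m : ℕ) (hm : 0 < m)
    (T : SimpleGraph W) (hT : T.IsTree) (hTcard : Fintype.card W = m)
    (hG : KConnected G 3)
    (hδ : ∀ v : V, m + 3 ≤ G.degree v) :
    ∃ f : W → V, Function.Injective f ∧
      (∀ a b : W, T.Adj a b → G.Adj (f a) (f b)) ∧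
      KConnected (G.induce ((Set.range f)ᶜ)) 3 := by
  subst hTcard
  have hdeg (v : V) : Fintype.card W + 3 ≤ #(nbrsIn G univ v) := card_nbrsIn_univ G v ▸ hδ v
  obtain ⟨B, C, hO, hB⟩ := exists_isOptimal_card_compl_le hT hG hdeg
  obtain ⟨f, hf⟩ := hO.exists_copy_kConnected_compl_range hdeg hB
  exact ⟨f, f.injective, fun _ _ => f.toHom.map_adj, hf⟩
end
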